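/- arXiv:2104.12960 — 3 statements merged into one kernel-verified Lean document; each statement's English description precedes it below -/
import Mathlib

section
/- Assume conditions (A), (C) and (D), and let Φ₁ be the pointwise limit of Φ_{k,1} and Φ₂ the pointwise limit of e^{λ₂}Φ_{k,2}. Define V_{k,1}(t,λ) = −k·log g_{k,1}^{∘⌊γ_k t⌋}(e^{−λ₁/k}, e^{−λ₂}) and V_{k,2}(t,λ) = −log g_{k,2}^{∘⌊γ_k t⌋}(e^{−λ₁/k}, e^{−λ₂}). Then for any a ≥ 0, V_k(t,λ) = (V_{k,1}(t,λ),V_{k,2}(t,λ)) converges as k → ∞, uniformly for (t,λ₁,λ₂) ∈ [0,a]³, to a limit V(t,λ) = (V₁(t,λ),V₂(t,λ)), and the limit satisfies the integral equations V₁(t,λ) = λ₁ + ∫₀ᵗ Φ₁(V(s,λ)) ds and V₂(t,λ) = λ₂ + ∫₀ᵗ Φ₂(V(s,λ)) ds. -/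
open Filter Set

noncomputable section

/-- Generating function of a two-type offspring distribution on `ℕ²`. -/
def pgf2 (p : ℕ × ℕ → ℝ) (s : ℝ × ℝ) : ℝ :=
  ∑' i : ℕ × ℕ, p i * s.1 ^ i.1 * s.2 ^ i.2

/-- The pair of iterates `(g₁^{∘n}, g₂^{∘n})` of a two-type offspring law. -/
def pairIter (g1 g2 : ℝ × ℝ → ℝ) : ℕ → ℝ × ℝ → ℝ × ℝ
  | 0, s => s
  | n + 1, s => (g1 (pairIter g1 g2 n s), g2 (pairIter g1 g2 n s))

/-- `Φ_{k,1}(λ) = kγ_k (e^{-λ₁/k} - g_{k,1}(e^{-λ₁/k}, e^{-λ₂}))`; the index `k ≥ 1`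
of the paper corresponds to `k + 1` here. -/
def Phik1 (γ : ℕ → ℝ) (g1 : ℕ → ℝ × ℝ → ℝ) (k : ℕ) (l : ℝ × ℝ) : ℝ :=
  (k + 1 : ℝ) * γ k *
    (Real.exp (-l.1 / (k + 1 : ℝ)) - g1 k (Real.exp (-l.1 / (k + 1 : ℝ)), Real.exp (-l.2)))

/-- `Φ_{k,2}(λ) = γ_k (e^{-λ₂} - g_{k,2}(e^{-λ₁/k}, e^{-λ₂}))`. -/
def Phik2 (γ : ℕ → ℝ) (g2 : ℕ → ℝ × ℝ → ℝ) (k : ℕ) (l : ℝ × ℝ) : ℝ :=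
  γ k * (Real.exp (-l.2) - g2 k (Real.exp (-l.1 / (k + 1 : ℝ)), Real.exp (-l.2)))

/-- `V_k(t,λ) = (-k log g_{k,1}^{∘⌊γ_k t⌋}(e^{-λ₁/k}, e^{-λ₂}),
                 -log g_{k,2}^{∘⌊γ_k t⌋}(e^{-λ₁/k}, e^{-λ₂}))`. -/
def Vk (γ : ℕ → ℝ) (g1 g2 : ℕ → ℝ × ℝ → ℝ) (k : ℕ) (t : ℝ) (l : ℝ × ℝ) : ℝ × ℝ :=
  (-(k + 1 : ℝ) *
      Real.log ((pairIter (g1 k) (g2 k) ⌊γ k * t⌋₊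
        (Real.exp (-l.1 / (k + 1 : ℝ)), Real.exp (-l.2))).1),
   -Real.log ((pairIter (g1 k) (g2 k) ⌊γ k * t⌋₊
        (Real.exp (-l.1 / (k + 1 : ℝ)), Real.exp (-l.2))).2))


lemma aux_hasSum {p : ℕ × ℕ → ℝ} (hp : ∀ i, 0 ≤ p i) (h1 : HasSum p 1) {a b : ℝ}
    (ha : 0 ≤ a) (ha1 : a ≤ 1) (hb : 0 ≤ b) (hb1 : b ≤ 1) :
    HasSum (fun i : ℕ × ℕ => p i * a ^ i.1 * b ^ i.2) (pgf2 p (a, b)) := by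
  apply Summable.hasSum
  refine Summable.of_nonneg_of_le (fun i => ?_) (fun i => ?_) h1.summable
  · have := hp i; positivity
  · have h2 := pow_le_one₀ (n := i.1) ha ha1
    have h3 := pow_le_one₀ (n := i.2) hb hb1
    have h4 : 0 ≤ a ^ i.1 := by positivity
    have h5 : 0 ≤ b ^ i.2 := by positivity
    show p i * a ^ i.1 * b ^ i.2 ≤ p i
    rw [mul_assoc]
    exact mul_le_of_le_one_right (hp i) (mul_le_one₀ h2 h5 h3)

lemma aux_le_one {p : ℕ × ℕ → ℝ} (hp : ∀ i, 0 ≤ p i) (h1 : HasSum p 1) {a b : ℝ}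
    (ha : 0 ≤ a) (ha1 : a ≤ 1) (hb : 0 ≤ b) (hb1 : b ≤ 1) : pgf2 p (a, b) ≤ 1 := by
  refine hasSum_le (fun i => ?_) (aux_hasSum hp h1 ha ha1 hb hb1) h1
  have h2 := pow_le_one₀ (n := i.1) ha ha1
  have h3 := pow_le_one₀ (n := i.2) hb hb1
  have h5 : 0 ≤ b ^ i.2 := by positivity
  rw [mul_assoc]
  exact mul_le_of_le_one_right (hp i) (mul_le_one₀ h2 h5 h3)

lemma aux_pos {p : ℕ × ℕ → ℝ} (hp : ∀ i, 0 ≤ p i) (h1 : HasSum p 1) {a b : ℝ}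
    (ha : 0 < a) (ha1 : a ≤ 1) (hb : 0 < b) (hb1 : b ≤ 1) : 0 < pgf2 p (a, b) := by
  have hs := aux_hasSum hp h1 ha.le ha1 hb.le hb1
  have hne : ∃ i, p i ≠ 0 := by
    by_contra! h
    have : p = fun _ => 0 := funext h
    rw [this] at h1
    exact zero_ne_one (hasSum_zero.unique h1)
  obtain ⟨i, hi⟩ := hne
  have hi' : 0 < p i := lt_of_le_of_ne (hp i) (Ne.symm hi)
  have h0 : ∀ j, 0 ≤ p j * a ^ j.1 * b ^ j.2 := fun j => by have := hp j; positivity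
  have := hs.summable.tsum_pos h0 i (by positivity)
  rwa [hs.tsum_eq] at this

lemma aux_one {p : ℕ × ℕ → ℝ} (h1 : HasSum p 1) : pgf2 p (1, 1) = 1 := by
  simp [pgf2, h1.tsum_eq]

lemma aux_G1 {p : ℕ × ℕ → ℝ} (hp : ∀ i, 0 ≤ p i) (h1 : HasSum p 1) {s e : ℝ}
    (hs : 0 ≤ s) (hs1 : s ≤ 1) (he : 0 ≤ e) (he1 : e ≤ 1) :
    pgf2 p (1 - e * (1 - s), 1) ≤ 1 - e + e * pgf2 p (s, 1) := by
  have hA := aux_hasSum hp h1 (a := 1 - e * (1 - s)) (b := 1) (by nlinarith) (by nlinarith)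
    zero_le_one le_rfl
  have hB := aux_hasSum hp h1 (a := s) (b := 1) hs hs1 zero_le_one le_rfl
  have hC := (h1.mul_left (1 - e)).add (hB.mul_left e)
  rw [mul_one] at hC
  refine hasSum_le (fun i => ?_) hA hC
  have hcv := (convexOn_pow (𝕜 := ℝ) i.1).2
  have := hcv (mem_Ici.2 (zero_le_one (α := ℝ))) (mem_Ici.2 hs)
    (show 0 ≤ 1 - e by linarith) he (by ring)
  simp only [smul_eq_mul, one_pow, mul_one] at this ⊢
  have h2 : 1 - e + e * s = 1 - e * (1 - s) := by ring
  rw [h2] at this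
  nlinarith [hp i]

lemma aux_G2 {p : ℕ × ℕ → ℝ} (hp : ∀ i, 0 ≤ p i) (h1 : HasSum p 1) {s t : ℝ}
    (hs : 0 ≤ s) (hs1 : s ≤ 1) (ht : 0 ≤ t) (ht1 : t ≤ 1) :
    pgf2 p (s, 1) + pgf2 p (1, t) ≤ 1 + pgf2 p (s, t) := by
  refine hasSum_le (fun i => ?_) ((aux_hasSum hp h1 hs hs1 zero_le_one le_rfl).add
    (aux_hasSum hp h1 zero_le_one le_rfl ht ht1)) (h1.add (aux_hasSum hp h1 hs hs1 ht ht1))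
  have h2 := pow_le_one₀ (n := i.1) hs hs1
  have h3 := pow_le_one₀ (n := i.2) ht ht1
  simp only [one_pow, mul_one]
  have := mul_nonneg (hp i) (mul_nonneg (sub_nonneg.2 h2) (sub_nonneg.2 h3))
  nlinarith

lemma aux_G3 {p : ℕ × ℕ → ℝ} (hp : ∀ i, 0 ≤ p i) (h1 : HasSum p 1) {t : ℝ}
    (ht : 0 ≤ t) (ht1 : t ≤ 1) :
    1 - pgf2 p (1, t) ≤ 2 * (1 - pgf2 p (1, 1/2)) := by
  refine hasSum_le (fun i => ?_) (h1.sub (aux_hasSum hp h1 zero_le_one le_rfl ht ht1))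
    ((h1.sub (aux_hasSum hp h1 zero_le_one le_rfl (b := 1/2) (by norm_num) 
      (by norm_num))).mul_left 2)
  simp only [one_pow, mul_one]
  have key : 1 - t ^ i.2 ≤ 2 * (1 - (1/2) ^ i.2) := by
    rcases Nat.eq_zero_or_pos i.2 with h | h
    · simp [h]
    · have h3 : ((1:ℝ)/2) ^ i.2 ≤ (1/2) ^ 1 :=
        pow_le_pow_of_le_one (by norm_num) (by norm_num) h
      have : 0 ≤ t ^ i.2 := by positivity
      linarith
  have := mul_le_mul_of_nonneg_left key (hp i)
  linarith

lemma aux_G4 {p : ℕ × ℕ → ℝ} (hp : ∀ i, 0 ≤ p i) (h1 : HasSum p 1) {s t : ℝ}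
    (hs : 0 ≤ s) (hs1 : s ≤ 1) (ht : 0 ≤ t) (ht1 : t ≤ 1) :
    t * (pgf2 p (s, 1) - 4 * (4 * pgf2 p (1, 1/4) - 4 * pgf2 p (1, 1/2) + 1))
      ≤ pgf2 p (s, t) := by
  refine hasSum_le (fun i => ?_) (((aux_hasSum hp h1 hs hs1 zero_le_one le_rfl).sub
    ((((((aux_hasSum hp h1 zero_le_one le_rfl (b := 1/4) (by norm_num) 
      (by norm_num))).mul_left 4).sub
      ((aux_hasSum hp h1 zero_le_one le_rfl (b := 1/2) (by norm_num) 
      (by norm_num)).mul_left 4)).add h1).mul_left 4)).mul_left t)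
     (aux_hasSum hp h1 hs hs1 ht ht1)
  simp only [one_pow, mul_one]
  have h2 := pow_le_one₀ (n := i.1) hs hs1
  have h20 : 0 ≤ s ^ i.1 := by positivity
  have h30 : 0 ≤ t ^ i.2 := by positivity
  have key : t * (s ^ i.1 - 4 * (4 * (1/4) ^ i.2 - 4 * (1/2) ^ i.2 + 1)) ≤ s ^ i.1 * t ^ i.2 := by
    have h4 : ((1:ℝ)/4) ^ i.2 = ((1/2) ^ i.2) ^ 2 := by
      rw [← pow_mul, mul_comm, pow_mul]; norm_num
    rw [h4]
    rcases Nat.lt_trichotomy i.2 1 with h | h | h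
    · have : i.2 = 0 := by omega
      rw [this]; norm_num; nlinarith
    · rw [h]; norm_num; linarith
    · have h3 : ((1:ℝ)/2) ^ i.2 ≤ (1/2) ^ 2 :=
        pow_le_pow_of_le_one (by norm_num) (by norm_num) h
      have h31 : 0 ≤ ((1:ℝ)/2) ^ i.2 := by positivity
      set y := ((1:ℝ)/2) ^ i.2
      have : s ^ i.1 - 4 * (4 * y ^ 2 - 4 * y + 1) ≤ 0 := by nlinarith
      nlinarith [mul_nonneg h20 h30]
  have := mul_le_mul_of_nonneg_left key (hp i)
  linarith

lemma aux_scale {c x : ℝ} (hc : 0 < c) (hx : 0 ≤ x) :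
    ∃ e x' : ℝ, 0 < e ∧ e ≤ 1 ∧ 0 ≤ x' ∧ x' ≤ 2 ∧ x' ≤ 2 * e * x ∧
      Real.exp (-x' / c) = 1 - e * (1 - Real.exp (-x / c)) := by
  have hu0 : Real.exp (-x / c) ≤ 1 := by
    rw [Real.exp_le_one_iff]; exact div_nonpos_of_nonpos_of_nonneg (by linarith) hc.le
  have hu1 : 1 - Real.exp (-x / c) ≤ x / c := by
    have := Real.add_one_le_exp (-x / c)
    rw [neg_div] at *; linarith
  have hup := Real.exp_pos (-x / c)
  set u := 1 - Real.exp (-x / c)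
  have he : 0 < 1 / (2 + x) := by positivity
  have he2 : 1 / (2 + x) ≤ 1 / 2 := by gcongr; linarith
  set e := 1 / (2 + x) with hedef
  have hex : e * x ≤ 1 := by
    rw [hedef, div_mul_eq_mul_div, div_le_one (by linarith)]; linarith
  have hu0' : 0 ≤ u := by simp only [u]; linarith
  have hult : u ≤ 1 := by simp only [u]; linarith
  have hpos : 1/2 ≤ 1 - e * u := by nlinarith
  have hlog : -Real.log (1 - e * u) ≤ 2 * e * u := by
    have := Real.one_sub_inv_le_log_of_pos (show 0 < 1 - e * u by linarith)
    have h3 : (1 - e * u)⁻¹ ≤ 1 + 2 * e * u := by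
      rw [inv_le_iff_one_le_mul₀ (by linarith)]
      nlinarith [mul_nonneg he.le hu0']
    linarith
  have hb : c * (-Real.log (1 - e * u)) ≤ 2 * e * x := by
    calc c * (-Real.log (1 - e * u)) ≤ c * (2 * e * u) := by gcongr
      _ ≤ c * (2 * e * (x / c)) := by gcongr
      _ = _ := by field_simp
  refine ⟨e, c * (-Real.log (1 - e * u)), he, by linarith, ?_, by linarith, hb, ?_⟩
  · apply mul_nonneg hc.le
    have := Real.log_nonpos (x := 1 - e * u) (by linarith) (by nlinarith)
    linarith
  · have : -(c * (-Real.log (1 - e * u))) / c = Real.log (1 - e * u) := by field_simp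
    rw [this, Real.exp_log (by linarith)]

lemma aux_lip {L : NNReal} {f : ℝ × ℝ → ℝ} {R : ℝ}
    (h : LipschitzOnWith L f (Icc ((0:ℝ),(0:ℝ)) (R,R))) (h0 : f (0, 0) = 0) {x y B : ℝ}
    (hx : 0 ≤ x) (hy : 0 ≤ y) (hxR : x ≤ R) (hyR : y ≤ R) (hxB : x ≤ B) (hyB : y ≤ B) :
    |f (x, y)| ≤ L * B := by
  have := h.dist_le_mul (x, y) ⟨⟨hx, hy⟩, ⟨hxR, hyR⟩⟩ (0, 0)
    ⟨le_rfl, ⟨hx.trans hxR, hx.trans hxR⟩⟩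
  rw [h0, Real.dist_eq, sub_zero, Prod.dist_eq, Real.dist_eq, Real.dist_eq, sub_zero, sub_zero,
    abs_of_nonneg hx, abs_of_nonneg hy] at this
  exact this.trans (mul_le_mul_of_nonneg_left (max_le hxB hyB) L.2)

lemma aux_exp_log2 : Real.exp (-Real.log 2) = 1/2 := by
  rw [Real.exp_neg, Real.exp_log (by norm_num)]; norm_num

lemma aux_exp_log4 : Real.exp (-Real.log 4) = 1/4 := by
  rw [Real.exp_neg, Real.exp_log (by norm_num)]; norm_num

lemma aux_log2 : 0 ≤ Real.log 2 ∧ Real.log 2 ≤ 1 :=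
  ⟨Real.log_nonneg (by norm_num), by linarith [Real.log_le_sub_one_of_pos (show (0:ℝ) < 2 by norm_num)]⟩

lemma aux_log4 : 0 ≤ Real.log 4 ∧ Real.log 4 ≤ 2 := by
  have : Real.log 4 = 2 * Real.log 2 := by
    rw [show (4:ℝ) = 2 ^ 2 by norm_num, Real.log_pow]; norm_num
  have h := aux_log2
  constructor <;> linarith [h.1, h.2]

lemma aux_exp_le {x c : ℝ} (hx : 0 ≤ x) (hc : 0 ≤ c) : Real.exp (-x / c) ≤ 1 := by
  rw [Real.exp_le_one_iff]; exact div_nonpos_of_nonpos_of_nonneg (by linarith) hc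

lemma aux_growth1 {γ : ℕ → ℝ} {p : ℕ → ℕ × ℕ → ℝ} (hp : ∀ k i, 0 ≤ p k i)
    (h1 : ∀ k, HasSum (p k) 1) (hγ : ∀ k, 0 < γ k) {L : NNReal} {k : ℕ}
    (hL : LipschitzOnWith L (Phik1 γ (fun k => pgf2 (p k)) k) (Icc ((0:ℝ),(0:ℝ)) (2,2)))
    {x y : ℝ} (hx : 0 ≤ x) (hy : 0 ≤ y) :
    Phik1 γ (fun k => pgf2 (p k)) k (x, y) ≤ L * (2 + 2 * x) := by
  have h0 : Phik1 γ (fun k => pgf2 (p k)) k (0, 0) = 0 := by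
    simp [Phik1, aux_one (h1 k)]
  have hc : (0:ℝ) < k + 1 := by positivity
  obtain ⟨e, x', he, he1, hx'0, hx'2, hx', hexp⟩ := aux_scale hc hx
  have b1 := le_of_abs_le (aux_lip hL h0 hx'0 le_rfl hx'2 (by norm_num) hx' (by positivity))
  have b2 := le_of_abs_le (aux_lip hL h0 le_rfl aux_log2.1 (by norm_num)
    (aux_log2.2.trans (by norm_num)) zero_le_one aux_log2.2)
  simp only [Phik1, hexp, neg_zero, zero_div, Real.exp_zero, aux_exp_log2] at b1 b2 ⊢
  have hs0 := Real.exp_pos (-x / (k + 1 : ℝ))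
  have hs1 := aux_exp_le hx hc.le
  have ht0 := Real.exp_pos (-y)
  have ht1 : Real.exp (-y) ≤ 1 := by rw [Real.exp_le_one_iff]; linarith
  set s := Real.exp (-x / (k + 1 : ℝ))
  set t := Real.exp (-y)
  have g1 := aux_G1 (hp k) (h1 k) hs0.le hs1 he.le he1
  have g2 := aux_G2 (hp k) (h1 k) hs0.le hs1 ht0.le ht1
  have g3 := aux_G3 (hp k) (h1 k) ht0.le ht1
  have hcg : 0 < (k + 1 : ℝ) * γ k := mul_pos hc (hγ k)
  set C := (k + 1 : ℝ) * γ k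
  have c1 : C * (s - pgf2 (p k) (s, 1)) ≤ L * (2 * x) := by
    have : e * (C * (s - pgf2 (p k) (s, 1))) ≤ e * (L * (2 * x)) := by
      have := mul_le_mul_of_nonneg_left g1 hcg.le
      linarith
    exact le_of_mul_le_mul_left this he
  have c2 := mul_le_mul_of_nonneg_left g2 hcg.le
  have c3 := mul_le_mul_of_nonneg_left g3 hcg.le
  linarith

lemma aux_growth2 {γ : ℕ → ℝ} {p : ℕ → ℕ × ℕ → ℝ} (hp : ∀ k i, 0 ≤ p k i)
    (h1 : ∀ k, HasSum (p k) 1) (hγ : ∀ k, 0 < γ k) {L : NNReal} {k : ℕ}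
    (hL : LipschitzOnWith L (fun l : ℝ × ℝ => Real.exp l.2 * Phik2 γ (fun k => pgf2 (p k)) k l)
      (Icc ((0:ℝ),(0:ℝ)) (2,2)))
    {x y : ℝ} (hx : 0 ≤ x) (hy : 0 ≤ y) :
    Real.exp y * Phik2 γ (fun k => pgf2 (p k)) k (x, y) ≤ L * (16 + 2 * x) := by
  have h0 : (fun l : ℝ × ℝ => Real.exp l.2 * Phik2 γ (fun k => pgf2 (p k)) k l) (0, 0) = 0 := by
    simp [Phik2, aux_one (h1 k)]
  have hc : (0:ℝ) < k + 1 := by positivity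
  obtain ⟨e, x', he, he1, hx'0, hx'2, hx', hexp⟩ := aux_scale hc hx
  have b1 := le_of_abs_le (aux_lip hL h0 hx'0 le_rfl hx'2 (by norm_num) hx' (by positivity))
  have b2 := le_of_abs_le (aux_lip hL h0 le_rfl aux_log2.1 (by norm_num)
    (aux_log2.2.trans (by norm_num)) zero_le_one aux_log2.2)
  have b3 := neg_le_of_abs_le (aux_lip hL h0 le_rfl aux_log4.1 (by norm_num)
    aux_log4.2 zero_le_two aux_log4.2)
  simp only [Phik2, hexp, neg_zero, zero_div, Real.exp_zero, aux_exp_log2, aux_exp_log4,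
    Real.exp_log (show (0:ℝ) < 2 by norm_num), Real.exp_log (show (0:ℝ) < 4 by norm_num)]
    at b1 b2 b3 ⊢
  have hs0 := Real.exp_pos (-x / (k + 1 : ℝ))
  have hs1 := aux_exp_le hx hc.le
  have ht0 := Real.exp_pos (-y)
  have ht1 : Real.exp (-y) ≤ 1 := by rw [Real.exp_le_one_iff]; linarith
  have hty : Real.exp y * Real.exp (-y) = 1 := by rw [← Real.exp_add]; simp
  have hy0 := Real.exp_pos y
  set s := Real.exp (-x / (k + 1 : ℝ))
  set t := Real.exp (-y)
  set w := Real.exp y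
  have g1 := aux_G1 (hp k) (h1 k) hs0.le hs1 he.le he1
  have g4 := aux_G4 (hp k) (h1 k) hs0.le hs1 ht0.le ht1
  have hg := hγ k
  set C := γ k
  have c1 : C * (1 - pgf2 (p k) (s, 1)) ≤ L * (2 * x) := by
    have : e * (C * (1 - pgf2 (p k) (s, 1))) ≤ e * (L * (2 * x)) := by
      have := mul_le_mul_of_nonneg_left g1 hg.le
      linarith
    exact le_of_mul_le_mul_left this he
  have c2 : pgf2 (p k) (s, 1) - 4 * (4 * pgf2 (p k) (1, 1/4) - 4 * pgf2 (p k) (1, 1/2) + 1)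
      ≤ w * pgf2 (p k) (s, t) := by
    have := mul_le_mul_of_nonneg_left g4 hy0.le
    rwa [← mul_assoc, hty, one_mul] at this
  have c3 := mul_le_mul_of_nonneg_left c2 hg.le
  have : w * (C * (t - pgf2 (p k) (s, t))) = C - C * (w * pgf2 (p k) (s, t)) := by
    linear_combination C * hty
  rw [this]
  linarith

lemma aux_logstep {c g w W : ℝ} (hc : 1 ≤ c) (hg : 0 < g) (hw : |w| ≤ W) (hW : W ≤ g / 2) :
    |-c * Real.log (1 - w / (c * g)) - w / g| ≤ 2 * W ^ 2 / g / g := by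
  have hc0 : 0 < c := by linarith
  have hW0 : 0 ≤ W := (abs_nonneg w).trans hw
  have hy : |w / (c * g)| ≤ W / (c * g) := by
    rw [abs_div, abs_of_pos (mul_pos hc0 hg)]; gcongr
  have hy1 : W / (c * g) ≤ 1 / 2 := by
    rw [div_le_iff₀ (by positivity)]; nlinarith
  have := Real.abs_log_sub_add_sum_range_le (x := w / (c * g)) (by linarith) 1
  simp only [Finset.sum_range_one, zero_add, pow_one, Nat.cast_zero, div_one] at this
  set y := w / (c * g) with hydef
  have h2 : |y + Real.log (1 - y)| ≤ 2 * (W / (c * g)) ^ 2 := by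
    refine this.trans ?_
    rw [div_le_iff₀ (by linarith)]
    have : |y| ^ 2 ≤ (W / (c * g)) ^ 2 := by gcongr
    norm_num at this ⊢
    nlinarith [sq_nonneg (W / (c * g))]
  have h3 : -c * Real.log (1 - y) - w / g = -(c * (y + Real.log (1 - y))) := by
    have : w / g = c * y := by rw [hydef]; field_simp
    rw [this]; ring
  rw [h3, abs_neg, abs_mul, abs_of_pos hc0]
  calc c * |y + Real.log (1 - y)| ≤ c * (2 * (W / (c * g)) ^ 2) := by gcongr
    _ = 2 * W ^ 2 / g / g / c := by field_simp
    _ ≤ 2 * W ^ 2 / g / g := div_le_self (by positivity) hc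

lemma aux_unif {f : ℕ → ℝ × ℝ → ℝ} {F : ℝ × ℝ → ℝ} {K : Set (ℝ × ℝ)} (hK : IsCompact K)
    {L : NNReal} (hL : ∀ k, LipschitzOnWith L (f k) K)
    (h : ∀ x ∈ K, Tendsto (fun k => f k x) atTop (nhds (F x))) :
    LipschitzOnWith L F K ∧ ∀ δ > 0, ∀ᶠ k in atTop, ∀ x ∈ K, |f k x - F x| ≤ δ := by
  have hF : LipschitzOnWith L F K := by
    apply LipschitzOnWith.of_dist_le_mul
    intro x hx y hy
    exact le_of_tendsto ((h x hx).dist (h y hy))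
      (Eventually.of_forall fun k => (hL k).dist_le_mul x hx y hy)
  refine ⟨hF, fun δ hδ => ?_⟩
  have hr : 0 < δ / (3 * (L + 1)) := by positivity
  obtain ⟨t, htK, htf, hcov⟩ := hK.finite_cover_balls hr
  have hev : ∀ᶠ k in atTop, ∀ x ∈ t, |f k x - F x| < δ / 3 := by
    rw [eventually_all_finite htf]
    intro x hx
    have := (Metric.tendsto_nhds.1 (h x (htK hx))) (δ / 3) (by positivity)
    simpa [Real.dist_eq] using this
  filter_upwards [hev] with k hk x hx
  obtain ⟨z, hz, hxz⟩ := mem_iUnion₂.1 (hcov hx)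
  have hd : dist x z < δ / (3 * (L + 1)) := hxz
  have hLd : L * dist x z ≤ δ / 3 := by
    calc (L:ℝ) * dist x z ≤ (L + 1) * (δ / (3 * (L + 1))) := by
          gcongr; linarith
      _ = δ / 3 := by field_simp
  have e1 := (hL k).dist_le_mul x hx z (htK hz)
  have e2 := hF.dist_le_mul x hx z (htK hz)
  have e3 := hk z hz
  rw [Real.dist_eq] at e1 e2
  rw [abs_le] at *
  rw [abs_lt] at e3
  constructor <;> linarith [e1.1, e1.2, e2.1, e2.2, e3.1, e3.2]

lemma aux_euler {E : Type*} [NormedAddCommGroup E] [NormedSpace ℝ E] {F : E → E} {K : NNReal}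
    {M a h δ : ℝ} (hF : LipschitzWith K F) (hM : ∀ x, ‖F x‖ ≤ M) (hh : 0 < h) (hδ : 0 ≤ δ)
    {X : ℝ → E} (hX : ∀ t ∈ Icc 0 a, HasDerivAt X (F (X t)) t) {v : ℕ → E} (h0 : v 0 = X 0)
    (hv : ∀ n : ℕ, (n + 1) * h ≤ a → ‖v (n + 1) - v n - h • F (v n)‖ ≤ h * δ) 
    {t : ℝ} (ht : t ∈ Icc 0 a) {n : ℕ} (hn : n * h ≤ t) (hn' : t ≤ n * h + h) :
    ‖v n - X t‖ ≤ Real.exp (K * a) * a * (δ + K * M * h) + M * h := by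
  have hM0 : 0 ≤ M := (norm_nonneg _).trans (hM 0)
  have hlip : ∀ s ∈ Icc 0 a, ∀ u ∈ Icc s a, ‖X u - X s‖ ≤ M * (u - s) := by
    intro s hs u hu
    exact norm_image_sub_le_of_norm_deriv_le_segment' (a := s) (b := a) (f := X)
      (fun x hx => (hX x ⟨hs.1.trans hx.1, hx.2⟩).hasDerivWithinAt) (fun x _ => hM _) u hu
  have hstep : ∀ s, 0 ≤ s → s + h ≤ a → ‖X (s + h) - X s - h • F (X s)‖ ≤ h * (K * M * h) := by
    intro s hs hsa
    have := norm_image_sub_le_of_norm_deriv_le_segment' (a := s) (b := s + h) 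
      (f := fun u => X u - (u - s) • F (X s)) (f' := fun u => F (X u) - (1:ℝ) • F (X s))
      (C := K * M * h)
      (fun x hx => ((hX x ⟨hs.trans hx.1, hx.2.trans hsa⟩).sub
        (((hasDerivAt_id x).sub_const s).smul_const _)).hasDerivWithinAt) 
      (fun x hx => by
        rw [one_smul, ← dist_eq_norm]
        refine (hF.dist_le_mul _ _).trans ?_
        rw [dist_eq_norm, mul_assoc]
        refine mul_le_mul_of_nonneg_left ?_ K.2
        refine (hlip s ⟨hs, by linarith⟩ x ⟨hx.1, by linarith [hx.2]⟩).trans ?_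
        exact mul_le_mul_of_nonneg_left (by linarith [hx.2]) hM0) (s + h) ⟨by linarith, le_rfl⟩
    simp only [add_sub_cancel_left, sub_self, zero_smul, sub_zero] at this
    calc _ = ‖X (s + h) - h • F (X s) - X s‖ := by congr 1; abel
      _ ≤ _ := this
      _ = _ := by ring
  set D := δ + K * M * h with hD
  have hD0 : 0 ≤ D := by positivity
  have hK0 : (0:ℝ) ≤ K := K.2
  have main : ∀ n : ℕ, n * h ≤ a → ‖v n - X (n * h)‖ ≤ (1 + K * h) ^ n * (n * h) * D := by
    intro n
    induction n with
    | zero => intro _; simp [h0]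
    | succ n ih =>
      intro hna
      push_cast at hna ⊢
      have hnn : (0:ℝ) ≤ n := Nat.cast_nonneg n
      have ih' := ih (by nlinarith)
      have s1 := hv n hna
      have s2 := hstep (n * h) (by positivity) (by linarith)
      have e1 : (n + 1 : ℝ) * h = n * h + h := by ring
      rw [e1]
      have s3 : ‖h • (F (v n) - F (X (n * h)))‖ ≤ h * (K * ‖v n - X (n * h)‖) := by
        rw [norm_smul, Real.norm_of_nonneg hh.le, ← dist_eq_norm, ← dist_eq_norm]
        exact mul_le_mul_of_nonneg_left (hF.dist_le_mul _ _) hh.le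
      have e2 : v (n + 1) - X (n * h + h) = (v (n + 1) - v n - h • F (v n))
          - (X (n * h + h) - X (n * h) - h • F (X (n * h))) + (v n - X (n * h))
          + h • (F (v n) - F (X (n * h))) := by
        rw [smul_sub]; abel
      rw [e2]
      have e3 := (norm_add_le ((v (n + 1) - v n - h • F (v n))
          - (X (n * h + h) - X (n * h) - h • F (X (n * h))) + (v n - X (n * h)))
          (h • (F (v n) - F (X (n * h)))))
      have e4 := norm_add_le ((v (n + 1) - v n - h • F (v n))
          - (X (n * h + h) - X (n * h) - h • F (X (n * h)))) (v n - X (n * h))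
      have e5 := norm_sub_le (v (n + 1) - v n - h • F (v n))
          (X (n * h + h) - X (n * h) - h • F (X (n * h)))
      have hp1 : 1 ≤ (1 + K * h) ^ (n + 1) := one_le_pow₀ (by nlinarith)
      have e6 : (1 + K * h) * ‖v n - X (n * h)‖ ≤ (1 + K * h) ^ (n + 1) * (n * h) * D := by
        calc _ ≤ (1 + K * h) * ((1 + K * h) ^ n * (n * h) * D) := by gcongr
          _ = _ := by ring
      have e7 : h * D ≤ (1 + K * h) ^ (n + 1) * h * D := by
        have := mul_le_mul_of_nonneg_right hp1 (mul_nonneg hh.le hD0)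
        linarith
      have e8 : h * D = h * δ + h * (K * M * h) := by rw [hD]; ring
      linarith
  have hm := main n (hn.trans ht.2)
  have hl := hlip (n * h) ⟨by positivity, hn.trans ht.2⟩ t ⟨hn, ht.2⟩
  have hpow : (1 + K * h) ^ n ≤ Real.exp (K * a) := by
    calc (1 + K * h) ^ n ≤ (Real.exp (K * h)) ^ n := by
          gcongr; linarith [Real.add_one_le_exp (K * h)]
      _ = Real.exp (K * (n * h)) := by rw [← Real.exp_nat_mul]; ring_nf
      _ ≤ _ := by
        apply Real.exp_le_exp.2
        exact mul_le_mul_of_nonneg_left (hn.trans ht.2) hK0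
  calc ‖v n - X t‖ = ‖(v n - X (n * h)) - (X t - X (n * h))‖ := by congr 1; abel
    _ ≤ ‖v n - X (n * h)‖ + ‖X t - X (n * h)‖ := norm_sub_le _ _
    _ ≤ (1 + K * h) ^ n * (n * h) * D + M * (t - n * h) := add_le_add hm hl
    _ ≤ _ := by
      have : n * h ≤ a := hn.trans ht.2
      gcongr
      linarith

lemma aux_ode {E : Type*} [NormedAddCommGroup E] [NormedSpace ℝ E] [CompleteSpace E]
    {F : E → E} {K : NNReal} {M a : ℝ} (hF : LipschitzWith K F) (hM : ∀ x, ‖F x‖ ≤ M)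
    (ha : 0 ≤ a) (x : E) :
    ∃ X : ℝ → E, X 0 = x ∧ ∀ t ∈ Icc 0 a, HasDerivAt X (F (X t)) t := by
  have hM0 : 0 ≤ M := (norm_nonneg _).trans (hM 0)
  have h0 : (0:ℝ) ∈ Icc (-1) (a + 1) := ⟨by norm_num, by linarith⟩
  have hPL : IsPicardLindelof (fun _ => F) (tmin := -1) (tmax := a + 1) ⟨0, h0⟩ x
      ⟨M * (a + 1), by positivity⟩ 0 ⟨M, hM0⟩ K := by
    apply IsPicardLindelof.of_time_independent
    · intro y _; exact hM y
    · exact hF.lipschitzOnWith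
    · have : max (a + 1 - 0) (0 - (-1:ℝ)) = a + 1 := by
        rw [max_eq_left] <;> linarith
      simp only [NNReal.coe_zero, this]
      show M * (a + 1) ≤ M * (a + 1) - 0
      linarith
  obtain ⟨X, hX0, hX⟩ := hPL.exists_eq_forall_mem_Icc_hasDerivWithinAt₀
  refine ⟨X, hX0, fun t ht => ?_⟩
  exact (hX t ⟨by linarith [ht.1], by linarith [ht.2]⟩).hasDerivAt
    (Icc_mem_nhds (by linarith [ht.1]) (by linarith [ht.2]))

lemma aux_abstract {γ : ℕ → ℝ} (hγ : ∀ k, 0 < γ k) (hA : Tendsto γ atTop atTop)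
    {T : ℕ → ℝ × ℝ → ℝ × ℝ} {Φ : ℝ × ℝ → ℝ × ℝ}
    (hT0 : ∀ k x, 0 ≤ x → 0 ≤ T k x)
    (hcons : ∀ R : ℝ, 0 ≤ R → ∀ δ > 0, ∀ᶠ k in atTop, ∀ x ∈ Icc ((0:ℝ),(0:ℝ)) (R,R),
      ‖T k x - x - (γ k)⁻¹ • Φ x‖ ≤ (γ k)⁻¹ * δ)
    (hlip : ∀ R : ℝ, 0 ≤ R → ∃ L : NNReal, LipschitzOnWith L Φ (Icc ((0:ℝ),(0:ℝ)) (R,R)))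
    {C : ℝ} (hC : 0 ≤ C)
    (hgrow : ∀ x : ℝ × ℝ, 0 ≤ x → (Φ x).1 + (Φ x).2 ≤ C * (1 + x.1 + x.2))
    {a : ℝ} (ha : 0 ≤ a) :
    ∃ X : ℝ → ℝ × ℝ → ℝ × ℝ,
      TendstoUniformlyOn (fun k (q : ℝ × (ℝ × ℝ)) => (T k)^[⌊γ k * q.1⌋₊] q.2)
        (fun q => X q.1 q.2) atTop (Icc (0:ℝ) a ×ˢ Icc ((0:ℝ),(0:ℝ)) (a,a)) ∧
      ∀ t ∈ Icc 0 a, ∀ l ∈ Icc ((0:ℝ),(0:ℝ)) (a,a),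
        (X t l).1 = l.1 + ∫ s in (0:ℝ)..t, (Φ (X s l)).1 ∧
        (X t l).2 = l.2 + ∫ s in (0:ℝ)..t, (Φ (X s l)).2 := by
  set R := Real.exp ((C + 2) * a) * (1 + 2 * a) with hR
  have hR0 : 0 ≤ R := by positivity
  obtain ⟨L, hL⟩ := hlip R hR0
  set B := Icc ((0:ℝ),(0:ℝ)) (R,R) with hB
  -- a priori bound
  have hap : ∀ᶠ k in atTop, ∀ l ∈ Icc ((0:ℝ),(0:ℝ)) (a,a), ∀ n : ℕ, n * (γ k)⁻¹ ≤ a →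
      (T k)^[n] l ∈ B := by
    filter_upwards [hcons R hR0 1 one_pos] with k hk l hl n hn
    have hh : 0 < (γ k)⁻¹ := inv_pos.2 (hγ k)
    set h := (γ k)⁻¹
    have hpow : ∀ n : ℕ, n * h ≤ a → (1 + (C + 2) * h) ^ n ≤ Real.exp ((C + 2) * a) := by
      intro n hn
      calc (1 + (C + 2) * h) ^ n ≤ (Real.exp ((C + 2) * h)) ^ n := by
            gcongr; linarith [Real.add_one_le_exp ((C + 2) * h)]
        _ = Real.exp ((C + 2) * (n * h)) := by rw [← Real.exp_nat_mul]; ring_nf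
        _ ≤ _ := by
          apply Real.exp_le_exp.2
          exact mul_le_mul_of_nonneg_left hn (by positivity)
    have hin : ∀ n : ℕ, n * h ≤ a → ∀ x : ℝ × ℝ, 0 ≤ x →
        1 + x.1 + x.2 ≤ (1 + (C + 2) * h) ^ n * (1 + 2 * a) → x ∈ B := by
      intro n hn x hx hx2
      have h3 : 1 + x.1 + x.2 ≤ R := by
        refine hx2.trans ?_
        rw [hR]; gcongr; exact hpow n hn
      have h1 : 0 ≤ x.1 := hx.1
      have h2 : 0 ≤ x.2 := hx.2
      exact ⟨hx, ⟨by show x.1 ≤ R; linarith, by show x.2 ≤ R; linarith⟩⟩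
    have key : ∀ n : ℕ, n * h ≤ a → 0 ≤ (T k)^[n] l ∧
        1 + ((T k)^[n] l).1 + ((T k)^[n] l).2 ≤ (1 + (C + 2) * h) ^ n * (1 + 2 * a) := by
      intro n
      induction n with
      | zero =>
        intro _
        have h1 : l.1 ≤ a := hl.2.1
        have h2 : l.2 ≤ a := hl.2.2
        refine ⟨hl.1, ?_⟩
        simp only [Function.iterate_zero, id_eq, pow_zero]
        linarith
      | succ n ih =>
        intro hn
        push_cast at hn
        have hn' : n * h ≤ a := by nlinarith
        obtain ⟨i1, i2⟩ := ih hn'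
        have hmem := hin n hn' _ i1 i2
        rw [Function.iterate_succ_apply']
        set x := (T k)^[n] l
        refine ⟨hT0 k x i1, ?_⟩
        have hc := hk x hmem
        have hc1 := le_of_abs_le ((norm_fst_le _).trans hc)
        have hc2 := le_of_abs_le ((norm_snd_le _).trans hc)
        simp only [Prod.fst_sub, Prod.snd_sub, Prod.smul_fst, Prod.smul_snd, smul_eq_mul] at hc1 hc2
        have hg := mul_le_mul_of_nonneg_left (hgrow x i1) hh.le
        have x1 : 0 ≤ x.1 := i1.1
        have x2 : 0 ≤ x.2 := i1.2
        calc 1 + (T k x).1 + (T k x).2 ≤ (1 + (C + 2) * h) * (1 + x.1 + x.2) := by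
              nlinarith [mul_nonneg hh.le x1, mul_nonneg hh.le x2]
          _ ≤ (1 + (C + 2) * h) * ((1 + (C + 2) * h) ^ n * (1 + 2 * a)) := by gcongr
          _ = _ := by ring
    obtain ⟨k1, k2⟩ := key n hn
    exact hin n hn _ k1 k2
  -- clipped field
  set P : ℝ × ℝ → ℝ × ℝ := fun x => (max 0 (min R x.1), max 0 (min R x.2)) with hP
  have hPlip : LipschitzWith 1 P := by
    have := ((LipschitzWith.prod_fst (α := ℝ) (β := ℝ)).const_min R |>.const_max 0).prodMk
      ((LipschitzWith.prod_snd (α := ℝ) (β := ℝ)).const_min R |>.const_max 0)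
    simpa using this
  have hPB : ∀ x, P x ∈ B := fun x => ⟨⟨le_max_left _ _, le_max_left _ _⟩,
    ⟨max_le hR0 (min_le_left _ _), max_le hR0 (min_le_left _ _)⟩⟩
  have hPid : ∀ x ∈ B, P x = x := by
    intro x hx
    have h1 : 0 ≤ x.1 := hx.1.1
    have h2 : 0 ≤ x.2 := hx.1.2
    have h3 : x.1 ≤ R := hx.2.1
    have h4 : x.2 ≤ R := hx.2.2
    simp [hP, h1, h2, h3, h4]
  set F : ℝ × ℝ → ℝ × ℝ := fun x => Φ (P x) with hFdef
  have hF : LipschitzWith L F := by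
    rw [← lipschitzOnWith_univ]
    have := hL.comp (hPlip.lipschitzOnWith (s := univ)) (fun x _ => hPB x)
    rw [mul_one] at this
    exact this
  have hBc : IsCompact B := isCompact_Icc
  obtain ⟨M, hM⟩ := hBc.exists_bound_of_continuousOn hL.continuousOn
  have hFM : ∀ x, ‖F x‖ ≤ M := fun x => hM _ (hPB x)
  choose X hX0 hX using fun l => aux_ode hF hFM ha l
  have hlim : Tendsto (fun k => (γ k)⁻¹) atTop (nhds 0) := hA.inv_tendsto_atTop
  have hfl : ∀ k, ∀ t : ℝ, 0 ≤ t → ⌊γ k * t⌋₊ * (γ k)⁻¹ ≤ t ∧ 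
      t ≤ ⌊γ k * t⌋₊ * (γ k)⁻¹ + (γ k)⁻¹ := by
    intro k t ht
    have hg := hγ k
    have h1 := Nat.floor_le (mul_nonneg hg.le ht)
    have h2 := (Nat.lt_floor_add_one (γ k * t)).le
    constructor
    · rw [← div_eq_mul_inv, div_le_iff₀ hg]; linarith
    · have : (⌊γ k * t⌋₊ : ℝ) * (γ k)⁻¹ + (γ k)⁻¹ = (⌊γ k * t⌋₊ + 1) / γ k := by field_simp
      rw [this, le_div_iff₀ hg]; linarith
  have hunif : TendstoUniformlyOn (fun k (q : ℝ × (ℝ × ℝ)) => (T k)^[⌊γ k * q.1⌋₊] q.2)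
        (fun q => X q.2 q.1) atTop (Icc (0:ℝ) a ×ˢ Icc ((0:ℝ),(0:ℝ)) (a,a)) := by
    rw [Metric.tendstoUniformlyOn_iff]
    intro ε hε
    have hEa : 0 ≤ Real.exp (L * a) * a := by positivity
    set A := Real.exp (L * a) * a with hAdef
    have hδ : 0 < ε / (A + 1) := by positivity
    set δ := ε / (A + 1) with hδdef
    have hAδ : A * δ < ε := by
      have : (A + 1) * δ = ε := by rw [hδdef]; field_simp
      linarith
    have hl2 : Tendsto (fun k => A * (δ + L * M * (γ k)⁻¹) + M * (γ k)⁻¹) atTop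
        (nhds (A * (δ + L * M * 0) + M * 0)) :=
      ((hlim.const_mul _).const_add _ |>.const_mul _).add (hlim.const_mul _)
    have hev := hl2.eventually_lt_const (u := ε) (by simpa using hAδ)
    filter_upwards [hev, hap, hcons R hR0 δ hδ] with k h1 h2 h3 q hq
    rw [dist_comm, dist_eq_norm]
    refine lt_of_le_of_lt ?_ h1
    obtain ⟨f1, f2⟩ := hfl k q.1 hq.1.1
    have hh : 0 < (γ k)⁻¹ := inv_pos.2 (hγ k)
    refine aux_euler (v := fun n => (T k)^[n] q.2) hF hFM hh hδ.le (hX q.2)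
      (by simp [hX0]) ?_ hq.1 f1 f2
    intro n hn
    have hm := h2 q.2 hq.2 n (by nlinarith)
    have := h3 _ hm
    simp only [Function.iterate_succ_apply', hFdef, hPid _ hm]
    exact this
  refine ⟨fun t l => X l t, hunif, ?_⟩
  have hXB : ∀ t ∈ Icc 0 a, ∀ l ∈ Icc ((0:ℝ),(0:ℝ)) (a,a), X l t ∈ B := by
    intro t ht l hl
    have h1 := hunif.tendsto_at (x := (t, l)) ⟨ht, hl⟩
    refine (isClosed_Icc).mem_of_tendsto h1 ?_
    filter_upwards [hap] with k hk
    exact hk l hl _ ((hfl k t ht.1).1.trans ht.2)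
  intro t ht l hl
  have hsub : uIcc 0 t ⊆ Icc 0 a := by
    rw [uIcc_of_le ht.1]; exact Icc_subset_Icc_right ht.2
  have hcont : ContinuousOn (fun s => F (X l s)) (uIcc 0 t) :=
    hF.continuous.comp_continuousOn
      (fun s hs => (hX l s (hsub hs)).continuousAt.continuousWithinAt)
  have hcongr : ∀ s ∈ uIcc 0 t, Φ (X l s) = F (X l s) := by
    intro s hs
    simp only [hFdef, hPid _ (hXB s (hsub hs) l hl)]
  constructor
  · have e1 : ∫ s in (0:ℝ)..t, (Φ (X l s)).1 = ∫ s in (0:ℝ)..t, (F (X l s)).1 :=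
      intervalIntegral.integral_congr (fun s hs => by simp only [hcongr s hs])
    have e2 := intervalIntegral.integral_eq_sub_of_hasDerivAt (a := 0) (b := t)
      (f := fun s => (X l s).1) (f' := fun s => (F (X l s)).1)
      (fun s hs => (hX l s (hsub hs)).fst)
      (ContinuousOn.intervalIntegrable (continuous_fst.comp_continuousOn hcont))
    rw [e1, e2, hX0]; ring
  · have e1 : ∫ s in (0:ℝ)..t, (Φ (X l s)).2 = ∫ s in (0:ℝ)..t, (F (X l s)).2 :=
      intervalIntegral.integral_congr (fun s hs => by simp only [hcongr s hs])
    have e2 := intervalIntegral.integral_eq_sub_of_hasDerivAt (a := 0) (b := t)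
      (f := fun s => (X l s).2) (f' := fun s => (F (X l s)).2)
      (fun s hs => (hX l s (hsub hs)).snd)
      (ContinuousOn.intervalIntegrable (continuous_snd.comp_continuousOn hcont))
    rw [e1, e2, hX0]; ring

lemma aux_comp {c g G x w W δ : ℝ} (hc : 1 ≤ c) (hg : 0 < g) (hG0 : 0 < G)
    (hG : G = Real.exp (-x / c) * (1 - w / (c * g))) (hw : |w| ≤ W) (hW : W ≤ g / 2)
    (hδ : 2 * W ^ 2 / g ≤ δ) : |-c * Real.log G - x - w / g| ≤ δ / g := by
  have hpos : 0 < 1 - w / (c * g) := by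
    rw [hG] at hG0
    exact (pos_iff_pos_of_mul_pos hG0).1 (Real.exp_pos _)
  have h := aux_logstep hc hg hw hW
  have e : -c * Real.log G - x - w / g = -c * Real.log (1 - w / (c * g)) - w / g := by
    rw [hG, Real.log_mul (Real.exp_pos _).ne' hpos.ne', Real.log_exp]
    have : c ≠ 0 := by linarith
    field_simp
    ring
  rw [e]
  refine h.trans ?_
  gcongr

/-- one-step map in logarithmic coordinates -/
def auxT (g1 g2 : ℕ → ℝ × ℝ → ℝ) (k : ℕ) (x : ℝ × ℝ) : ℝ × ℝ :=
  (-(k + 1 : ℝ) * Real.log (g1 k (Real.exp (-x.1 / (k + 1 : ℝ)), Real.exp (-x.2))),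
   -Real.log (g2 k (Real.exp (-x.1 / (k + 1 : ℝ)), Real.exp (-x.2))))

lemma aux_iter {p1 p2 : ℕ → ℕ × ℕ → ℝ}
    (hp1 : ∀ k i, 0 ≤ p1 k i) (h1 : ∀ k, HasSum (p1 k) 1)
    (hp2 : ∀ k i, 0 ≤ p2 k i) (h2 : ∀ k, HasSum (p2 k) 1) (k : ℕ) {l : ℝ × ℝ} (hl : 0 ≤ l)
    (n : ℕ) :
    (Real.exp (-((auxT (fun k => pgf2 (p1 k)) (fun k => pgf2 (p2 k)) k)^[n] l).1 / (k + 1 : ℝ)),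
      Real.exp (-((auxT (fun k => pgf2 (p1 k)) (fun k => pgf2 (p2 k)) k)^[n] l).2)) =
    pairIter (pgf2 (p1 k)) (pgf2 (p2 k)) n
      (Real.exp (-l.1 / (k + 1 : ℝ)), Real.exp (-l.2)) ∧
    0 ≤ (auxT (fun k => pgf2 (p1 k)) (fun k => pgf2 (p2 k)) k)^[n] l := by
  induction n with
  | zero => exact ⟨rfl, hl⟩
  | succ n ih =>
    obtain ⟨ih1, ih2⟩ := ih
    rw [Function.iterate_succ_apply']
    simp only [pairIter, ← ih1]
    set x := (auxT (fun k => pgf2 (p1 k)) (fun k => pgf2 (p2 k)) k)^[n] l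
    have hx1 : 0 ≤ x.1 := ih2.1
    have hx2 : 0 ≤ x.2 := ih2.2
    have hc : (0:ℝ) < k + 1 := by positivity
    have hs0 := Real.exp_pos (-x.1 / (k + 1 : ℝ))
    have hs1 := aux_exp_le hx1 hc.le
    have ht0 := Real.exp_pos (-x.2)
    have ht1 : Real.exp (-x.2) ≤ 1 := by rw [Real.exp_le_one_iff]; linarith
    have a1 := aux_pos (hp1 k) (h1 k) hs0 hs1 ht0 ht1
    have a2 := aux_pos (hp2 k) (h2 k) hs0 hs1 ht0 ht1
    have b1 := aux_le_one (hp1 k) (h1 k) hs0.le hs1 ht0.le ht1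
    have b2 := aux_le_one (hp2 k) (h2 k) hs0.le hs1 ht0.le ht1
    have c1 := Real.log_nonpos a1.le b1
    have c2 := Real.log_nonpos a2.le b2
    refine ⟨?_, ?_, ?_⟩
    · simp only [auxT]
      rw [Prod.mk.injEq]
      constructor
      · rw [neg_mul, neg_neg, mul_div_cancel_left₀ _ hc.ne', Real.exp_log a1]
      · rw [neg_neg, Real.exp_log a2]
    · simp only [auxT, Prod.fst_zero]
      nlinarith
    · simp only [auxT, Prod.snd_zero]
      linarith

/-- Under conditions (A), (C), (D), with `Φ₁` the pointwise limit of
`Φ_{k,1}` and `Φ₂` the pointwise limit of `e^{λ₂}Φ_{k,2}`, the functions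
`V_k(t,λ)` converge, uniformly on `[0,a]³` for every `a ≥ 0`, to a limit `V(t,λ)`
which satisfies the cumulant integral equations. -/
theorem Vk_uniform_convergence
    (γ : ℕ → ℝ) (p1 p2 : ℕ → ℕ × ℕ → ℝ) (Φ1 Φ2 : ℝ × ℝ → ℝ)
    (hp1_nonneg : ∀ k i, 0 ≤ p1 k i) (hp1_sum : ∀ k, HasSum (p1 k) 1)
    (hp2_nonneg : ∀ k i, 0 ≤ p2 k i) (hp2_sum : ∀ k, HasSum (p2 k) 1)
    (hγ_pos : ∀ k, 0 < γ k)
    -- Condition (A)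
    (hA : Tendsto γ atTop atTop)
    -- Condition (C)
    (hC_lip : ∀ R : ℝ, 0 ≤ R → ∃ L : NNReal, ∀ k,
      LipschitzOnWith L (Phik1 γ (fun k => pgf2 (p1 k)) k) (Icc ((0:ℝ),(0:ℝ)) (R,R)))
    (hΦ1_cont : ContinuousOn Φ1 {l : ℝ × ℝ | 0 ≤ l.1 ∧ 0 ≤ l.2})
    (hC_conv : ∀ l : ℝ × ℝ, 0 ≤ l.1 → 0 ≤ l.2 →
      Tendsto (fun k => Phik1 γ (fun k => pgf2 (p1 k)) k l) atTop (nhds (Φ1 l)))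
    -- Condition (D)
    (hD_lip : ∀ R : ℝ, 0 ≤ R → ∃ L : NNReal, ∀ k,
      LipschitzOnWith L (fun l : ℝ × ℝ => Real.exp l.2 * Phik2 γ (fun k => pgf2 (p2 k)) k l)
        (Icc ((0:ℝ),(0:ℝ)) (R,R)))
    (hΦ2_cont : ContinuousOn Φ2 {l : ℝ × ℝ | 0 ≤ l.1 ∧ 0 ≤ l.2})
    (hD_conv : ∀ l : ℝ × ℝ, 0 ≤ l.1 → 0 ≤ l.2 →
      Tendsto (fun k => Real.exp l.2 * Phik2 γ (fun k => pgf2 (p2 k)) k l) atTop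
        (nhds (Φ2 l))) :
    ∃ V : ℝ → ℝ × ℝ → ℝ × ℝ,
      (∀ a : ℝ, 0 ≤ a →
        TendstoUniformlyOn
          (fun k (q : ℝ × (ℝ × ℝ)) =>
            Vk γ (fun k => pgf2 (p1 k)) (fun k => pgf2 (p2 k)) k q.1 q.2)
          (fun q => V q.1 q.2) atTop
          (Icc (0:ℝ) a ×ˢ Icc ((0:ℝ),(0:ℝ)) (a,a))) ∧
      (∀ t : ℝ, 0 ≤ t → ∀ l : ℝ × ℝ, 0 ≤ l.1 → 0 ≤ l.2 →
        (V t l).1 = l.1 + ∫ s in (0:ℝ)..t, Φ1 (V s l) ∧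
        (V t l).2 = l.2 + ∫ s in (0:ℝ)..t, Φ2 (V s l)) := by
  set T := auxT (fun k => pgf2 (p1 k)) (fun k => pgf2 (p2 k)) with hT
  set Φ : ℝ × ℝ → ℝ × ℝ := fun x => (Φ1 x, Φ2 x) with hΦ
  have hVT : ∀ k t l, 0 ≤ l →
      Vk γ (fun k => pgf2 (p1 k)) (fun k => pgf2 (p2 k)) k t l = (T k)^[⌊γ k * t⌋₊] l := by
    intro k t l hl
    have h := (aux_iter hp1_nonneg hp1_sum hp2_nonneg hp2_sum k hl ⌊γ k * t⌋₊).1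
    have hc : (k + 1 : ℝ) ≠ 0 := by positivity
    simp only [Vk]
    rw [← h]
    simp only [Real.log_exp]
    ext
    · simp only; field_simp; rfl
    · simp only [neg_neg]; rfl
  have hT0 : ∀ k x, 0 ≤ x → 0 ≤ T k x := fun k x hx =>
    (aux_iter hp1_nonneg hp1_sum hp2_nonneg hp2_sum k hx 1).2
  have hlim : Tendsto (fun k => (γ k)⁻¹) atTop (nhds 0) := hA.inv_tendsto_atTop
  have hz1 : ∀ k, Phik1 γ (fun k => pgf2 (p1 k)) k (0, 0) = 0 := by
    intro k; simp [Phik1, aux_one (hp1_sum k)]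
  have hz2 : ∀ k, (fun l : ℝ × ℝ => Real.exp l.2 * Phik2 γ (fun k => pgf2 (p2 k)) k l) (0, 0)
      = 0 := by
    intro k; simp [Phik2, aux_one (hp2_sum k)]
  have hlip : ∀ R : ℝ, 0 ≤ R → ∃ L : NNReal, LipschitzOnWith L Φ (Icc ((0:ℝ),(0:ℝ)) (R,R)) := by
    intro R hR
    obtain ⟨L1, hL1⟩ := hC_lip R hR
    obtain ⟨L2, hL2⟩ := hD_lip R hR
    have u1 := (aux_unif isCompact_Icc hL1 (fun x hx => hC_conv x hx.1.1 hx.1.2)).1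
    have u2 := (aux_unif isCompact_Icc hL2 (fun x hx => hD_conv x hx.1.1 hx.1.2)).1
    exact ⟨_, u1.prodMk u2⟩
  have hcons : ∀ R : ℝ, 0 ≤ R → ∀ δ > 0, ∀ᶠ k in atTop, ∀ x ∈ Icc ((0:ℝ),(0:ℝ)) (R,R),
      ‖T k x - x - (γ k)⁻¹ • Φ x‖ ≤ (γ k)⁻¹ * δ := by
    intro R hR δ hδ
    obtain ⟨L1, hL1⟩ := hC_lip R hR
    obtain ⟨L2, hL2⟩ := hD_lip R hR
    have u1 := (aux_unif isCompact_Icc hL1 (fun x hx => hC_conv x hx.1.1 hx.1.2)).2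
      (δ / 3) (by positivity)
    have u2 := (aux_unif isCompact_Icc hL2 (fun x hx => hD_conv x hx.1.1 hx.1.2)).2
      (δ / 3) (by positivity)
    set W1 := Real.exp R * (L1 * R) with hW1
    set W2 := (L2 * R : ℝ) with hW2
    have v1 : ∀ W : ℝ, ∀ᶠ k in atTop, 2 * W ^ 2 / γ k ≤ δ / 3 := by
      intro W
      have : Tendsto (fun k => 2 * W ^ 2 / γ k) atTop (nhds 0) := by
        simpa [div_eq_mul_inv] using hlim.const_mul (2 * W ^ 2)
      exact this.eventually_le_const (by positivity)
    have v2 : ∀ W : ℝ, ∀ᶠ k in atTop, W ≤ γ k / 2 := by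
      intro W
      filter_upwards [hA.eventually_ge_atTop (2 * W)] with k hk
      linarith
    have v3 : ∀ᶠ k : ℕ in atTop, (Real.exp (R / (k + 1 : ℝ)) - 1) * (L1 * R) ≤ δ / 3 := by
      have hk1 : Tendsto (fun k : ℕ => R / (k + 1 : ℝ)) atTop (nhds 0) := by
        have := (tendsto_one_div_add_atTop_nhds_zero_nat (𝕜 := ℝ)).const_mul R
        simpa [div_eq_mul_inv] using this
      have := (((Real.continuous_exp.tendsto 0).comp hk1).sub_const 1).mul_const (L1 * R : ℝ)
      simp only [Real.exp_zero, sub_self, zero_mul] at this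
      exact this.eventually_le_const (by positivity)
    filter_upwards [u1, u2, v1 W1, v1 W2, v2 W1, v2 W2, v3] with k q1 q2 r1 r2 s1 s2 s3 x hx
    have hx1 : 0 ≤ x.1 := hx.1.1
    have hx2 : 0 ≤ x.2 := hx.1.2
    have hx1R : x.1 ≤ R := hx.2.1
    have hx2R : x.2 ≤ R := hx.2.2
    have m1 := aux_lip (hL1 k) (hz1 k) hx1 hx2 hx1R hx2R hx1R hx2R
    have m2 := aux_lip (hL2 k) (hz2 k) hx1 hx2 hx1R hx2R hx1R hx2R
    have q1 := q1 x hx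
    have q2 := q2 x hx
    have hg := hγ_pos k
    have hc1 : (1:ℝ) ≤ k + 1 := by have : (0:ℝ) ≤ k := Nat.cast_nonneg k; linarith
    have hc : (0:ℝ) < k + 1 := by linarith
    have hs0 := Real.exp_pos (-x.1 / (k + 1 : ℝ))
    have hs1 := aux_exp_le hx1 hc.le
    have ht0 := Real.exp_pos (-x.2)
    have ht1 : Real.exp (-x.2) ≤ 1 := by rw [Real.exp_le_one_iff]; linarith
    have a1 := aux_pos (hp1_nonneg k) (hp1_sum k) hs0 hs1 ht0 ht1
    have a2 := aux_pos (hp2_nonneg k) (hp2_sum k) hs0 hs1 ht0 ht1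
    simp only [Prod.mk.eta] at m1 m2
    have hxc : x.1 / (k + 1 : ℝ) ≤ R / (k + 1 : ℝ) := by gcongr
    have hRc : R / (k + 1 : ℝ) ≤ R := div_le_self hR hc1
    have hxc0 : 0 ≤ x.1 / (k + 1 : ℝ) := by positivity
    have hee : Real.exp (-x.1 / (k + 1 : ℝ)) * Real.exp (x.1 / (k + 1 : ℝ)) = 1 := by
      rw [← Real.exp_add, neg_div]; simp
    have hee2 : Real.exp (-x.2) * Real.exp x.2 = 1 := by rw [← Real.exp_add]; simp
    have h1le : 1 ≤ Real.exp (x.1 / (k + 1 : ℝ)) := Real.one_le_exp hxc0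
    have hLR : 0 ≤ (L1 * R : ℝ) := by positivity
    have w1 : |Real.exp (x.1 / (k + 1 : ℝ)) * Phik1 γ (fun k => pgf2 (p1 k)) k x| ≤ W1 := by
      rw [abs_mul, abs_of_pos (Real.exp_pos _)]
      have : Real.exp (x.1 / (k + 1 : ℝ)) ≤ Real.exp R := Real.exp_le_exp.2 (hxc.trans hRc)
      exact mul_le_mul this m1 (abs_nonneg _) (Real.exp_pos _).le
    have f1 := aux_comp (x := x.1) hc1 hg a1 (w := Real.exp (x.1 / (k + 1 : ℝ)) *
      Phik1 γ (fun k => pgf2 (p1 k)) k x) (by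
        have : Real.exp (-x.1 / (k + 1 : ℝ)) * (1 - Real.exp (x.1 / (k + 1 : ℝ)) *
            Phik1 γ (fun k => pgf2 (p1 k)) k x / ((k + 1) * γ k)) =
            Real.exp (-x.1 / (k + 1 : ℝ)) - Phik1 γ (fun k => pgf2 (p1 k)) k x /
              ((k + 1) * γ k) := by
          linear_combination (- Phik1 γ (fun k => pgf2 (p1 k)) k x / ((k + 1) * γ k)) * hee
        rw [this]
        simp only [Phik1]
        rw [mul_div_cancel_left₀ _ (mul_pos hc hg).ne']
        ring) w1 s1 r1
    have f2 := aux_comp (c := 1) (x := x.2) le_rfl hg a2 (w := Real.exp x.2 *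
      Phik2 γ (fun k => pgf2 (p2 k)) k x) (by
        have : Real.exp (-x.2 / 1) * (1 - Real.exp x.2 *
            Phik2 γ (fun k => pgf2 (p2 k)) k x / (1 * γ k)) =
            Real.exp (-x.2) - Phik2 γ (fun k => pgf2 (p2 k)) k x / γ k := by
          rw [div_one, one_mul]
          linear_combination (- Phik2 γ (fun k => pgf2 (p2 k)) k x / γ k) * hee2
        rw [this]
        simp only [Phik2]
        rw [mul_div_cancel_left₀ _ hg.ne']
        ring) m2 s2 r2
    have d1 : |Real.exp (x.1 / (k + 1 : ℝ)) * Phik1 γ (fun k => pgf2 (p1 k)) k x - Φ1 x|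
        ≤ 2 * (δ / 3) := by
      have : |(Real.exp (x.1 / (k + 1 : ℝ)) - 1) * Phik1 γ (fun k => pgf2 (p1 k)) k x|
          ≤ δ / 3 := by
        rw [abs_mul, abs_of_nonneg (by linarith)]
        refine le_trans ?_ s3
        have : Real.exp (x.1 / (k + 1 : ℝ)) ≤ Real.exp (R / (k + 1 : ℝ)) := Real.exp_le_exp.2 hxc
        exact mul_le_mul (by linarith) m1 (abs_nonneg _) (by linarith)
      have h3 := abs_add_le ((Real.exp (x.1 / (k + 1 : ℝ)) - 1) *
        Phik1 γ (fun k => pgf2 (p1 k)) k x) (Phik1 γ (fun k => pgf2 (p1 k)) k x - Φ1 x)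
      have h4 : Real.exp (x.1 / (k + 1 : ℝ)) * Phik1 γ (fun k => pgf2 (p1 k)) k x - Φ1 x =
        (Real.exp (x.1 / (k + 1 : ℝ)) - 1) *
        Phik1 γ (fun k => pgf2 (p1 k)) k x + (Phik1 γ (fun k => pgf2 (p1 k)) k x - Φ1 x) := by ring
      rw [h4]; linarith
    have comb : ∀ A w F : ℝ, |A - w / γ k| ≤ δ / 3 / γ k → |w - F| ≤ 2 * (δ / 3) →
        |A - (γ k)⁻¹ * F| ≤ (γ k)⁻¹ * δ := by
      intro A w F e1 e2
      have h3 := abs_add_le (A - w / γ k) ((γ k)⁻¹ * (w - F))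
      have h4 : A - w / γ k + (γ k)⁻¹ * (w - F) = A - (γ k)⁻¹ * F := by
        rw [div_eq_mul_inv]; ring
      rw [h4, abs_mul, abs_of_pos (inv_pos.2 hg)] at h3
      have h5 := mul_le_mul_of_nonneg_left e2 (inv_pos.2 hg).le
      rw [div_eq_mul_inv (δ / 3) (γ k)] at e1
      linarith
    rw [Prod.norm_def]
    refine max_le ?_ ?_
    · exact comb _ _ _ f1 d1
    · rw [neg_one_mul] at f2
      exact comb _ _ _ f2 (by linarith)
  obtain ⟨L1, hL1⟩ := hC_lip 2 (by norm_num)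
  obtain ⟨L2, hL2⟩ := hD_lip 2 (by norm_num)
  have hgrow : ∀ x : ℝ × ℝ, 0 ≤ x →
      (Φ x).1 + (Φ x).2 ≤ (16 * L1 + 16 * L2 : ℝ) * (1 + x.1 + x.2) := by
    intro x hx
    have x1 : 0 ≤ x.1 := hx.1
    have x2 : 0 ≤ x.2 := hx.2
    have g1 : Φ1 x ≤ L1 * (2 + 2 * x.1) := le_of_tendsto (hC_conv x x1 x2)
      (Eventually.of_forall fun k => aux_growth1 hp1_nonneg hp1_sum hγ_pos (hL1 k) x1 x2)
    have g2 : Φ2 x ≤ L2 * (16 + 2 * x.1) := le_of_tendsto (hD_conv x x1 x2)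
      (Eventually.of_forall fun k => aux_growth2 hp2_nonneg hp2_sum hγ_pos (hL2 k) x1 x2)
    have l1 : (0:ℝ) ≤ L1 := L1.2
    have l2 : (0:ℝ) ≤ L2 := L2.2
    show Φ1 x + Φ2 x ≤ _
    nlinarith [mul_nonneg l1 x1, mul_nonneg l1 x2, mul_nonneg l2 x1, mul_nonneg l2 x2]
  have main := fun (a : ℝ) (ha : 0 ≤ a) => aux_abstract hγ_pos hA hT0 hcons hlip
    (C := (16 * L1 + 16 * L2 : ℝ)) (by positivity) hgrow ha
  set V : ℝ → ℝ × ℝ → ℝ × ℝ := fun t l => limUnder atTop (fun k => (T k)^[⌊γ k * t⌋₊] l) with hV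
  refine ⟨V, ?_, ?_⟩
  · intro a ha
    obtain ⟨X, hX, -⟩ := main a ha
    refine (hX.congr ?_).congr_right ?_
    · refine Eventually.of_forall fun k q hq => ?_
      exact (hVT k q.1 q.2 hq.2.1).symm
    · intro q hq
      exact (hX.tendsto_at hq).limUnder_eq.symm
  · intro t ht l hl1 hl2
    have ha : 0 ≤ max t (max l.1 l.2) := ht.trans (le_max_left _ _)
    obtain ⟨X, hX, hXe⟩ := main _ ha
    set a := max t (max l.1 l.2) with hadef
    have hta : t ≤ a := le_max_left _ _
    have hl : l ∈ Icc ((0:ℝ),(0:ℝ)) (a,a) :=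
      ⟨⟨hl1, hl2⟩, ⟨(le_max_left _ _).trans (le_max_right _ _),
        (le_max_right _ _).trans (le_max_right _ _)⟩⟩
    have hVX : ∀ s ∈ Icc 0 a, V s l = X s l := fun s hs =>
      (hX.tendsto_at (x := (s, l)) ⟨hs, hl⟩).limUnder_eq
    have hsub : uIcc 0 t ⊆ Icc 0 a := by
      rw [uIcc_of_le ht]; exact Icc_subset_Icc_right hta
    obtain ⟨e1, e2⟩ := hXe t ⟨ht, hta⟩ l hl
    rw [hVX t ⟨ht, hta⟩]
    have i1 : ∫ s in (0:ℝ)..t, Φ1 (V s l) = ∫ s in (0:ℝ)..t, (Φ (X s l)).1 :=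
      intervalIntegral.integral_congr (fun s hs => by simp only [hVX s (hsub hs), hΦ])
    have i2 : ∫ s in (0:ℝ)..t, Φ2 (V s l) = ∫ s in (0:ℝ)..t, (Φ (X s l)).2 :=
      intervalIntegral.integral_congr (fun s hs => by simp only [hVX s (hsub hs), hΦ])
    rw [i1, i2]
    exact ⟨e1, e2⟩
end
end

section
/- Let (Φ₁,Φ₂) be a branching mechanism. Then for every λ ∈ [0,∞)², the cumulant equations (3.8) have a unique continuous [0,∞)²-valued solution t ↦ V(t,λ) on [0,∞); moreover the solutions satisfy the semigroup (flow) property V(r+t,λ) = V(r, V(t,λ)) for all r, t ≥ 0. -/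
open MeasureTheory Filter Set

noncomputable section

/-- The state space `𝕄 = [0,∞) × ℕ`, as a subset of `ℝ²`. -/
def Mset : Set (ℝ × ℝ) := {z | 0 ≤ z.1 ∧ ∃ n : ℕ, z.2 = (n : ℝ)}

/-- The space `𝕄₋₁ = [0,∞) × (ℕ ∪ {-1})`, as a subset of `ℝ²`. -/
def Mm1set : Set (ℝ × ℝ) := {z | 0 ≤ z.1 ∧ ∃ n : ℤ, (-1 : ℤ) ≤ n ∧ z.2 = (n : ℝ)}

/-- The data of a branching mechanism `(Φ₁, Φ₂)` of a mixed state branching process. -/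
structure BranchingMechanism where
  a11 : ℝ
  a21 : ℝ
  alpha : ℝ
  a21_nonneg : 0 ≤ a21
  alpha_nonneg : 0 ≤ alpha
  n1 : Measure (ℝ × ℝ)
  n2 : Measure (ℝ × ℝ)
  n1_sigmaFinite : SigmaFinite n1
  n2_sigmaFinite : SigmaFinite n2
  /-- `n₁` is supported on `𝕄` -/
  n1_supp : n1 Msetᶜ = 0
  /-- `n₂` is supported on `𝕄₋₁` -/
  n2_supp : n2 Mm1setᶜ = 0
  /-- `n₁` does not charge the origin -/
  n1_zero : n1 {0} = 0
  /-- `n₂` does not charge the origin -/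
  n2_zero : n2 {0} = 0
  /-- `n₂([0,∞) × {-1}) < ∞` -/
  n2_neg1 : n2 {z : ℝ × ℝ | z.2 = -1} ≠ ⊤
  /-- `∫ (z₁ ∧ z₁² + z₂) n₁(dz) < ∞` -/
  n1_moment : ∫⁻ z, ENNReal.ofReal (min z.1 (z.1 ^ 2) + z.2) ∂n1 ≠ ⊤
  /-- `∫ (z₁ + |z₂|) n₂(dz) < ∞` -/
  n2_moment : ∫⁻ z, ENNReal.ofReal (z.1 + |z.2|) ∂n2 ≠ ⊤

/-- `Φ₁(λ) = -a₁₁λ₁ - αλ₁² - ∫ (e^{-⟨λ,z⟩} - 1 + λ₁z₁) n₁(dz)`. -/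
def mPhi1 (B : BranchingMechanism) (l : ℝ × ℝ) : ℝ :=
  -B.a11 * l.1 - B.alpha * l.1 ^ 2 -
    ∫ z, (Real.exp (-(l.1 * z.1 + l.2 * z.2)) - 1 + l.1 * z.1) ∂B.n1

/-- `Φ₂(λ) = a₂₁λ₁ + ∫ (1 - e^{-⟨λ,z⟩}) n₂(dz)`. -/
def mPhi2 (B : BranchingMechanism) (l : ℝ × ℝ) : ℝ :=
  B.a21 * l.1 + ∫ z, (1 - Real.exp (-(l.1 * z.1 + l.2 * z.2))) ∂B.n2


/-- `V : t ↦ V(t,λ)` is a continuous `[0,∞)²`-valued solution of the cumulant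
equations (3.8) with initial value `λ = l`. -/
def SolvesCumulant (B : BranchingMechanism) (l : ℝ × ℝ) (V : ℝ → ℝ × ℝ) : Prop :=
  ContinuousOn V (Ici 0) ∧
  (∀ t : ℝ, 0 ≤ t → 0 ≤ (V t).1 ∧ 0 ≤ (V t).2) ∧
  (∀ t : ℝ, 0 ≤ t →
    (V t).1 = l.1 + ∫ s in (0:ℝ)..t, mPhi1 B (V s) ∧
    (V t).2 = l.2 + ∫ s in (0:ℝ)..t, mPhi2 B (V s))


def Quad (R : ℝ) : Set (ℝ × ℝ) := {l | 0 ≤ l.1 ∧ 0 ≤ l.2 ∧ l.1 ≤ R ∧ l.2 ≤ R}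

structure GoodField (F : ℝ × ℝ → ℝ × ℝ) : Prop where
  lip : ∀ R : ℝ, 0 ≤ R → ∃ K : NNReal, LipschitzOnWith K F (Quad R)
  q1 : ∀ y : ℝ, 0 ≤ y → 0 ≤ (F (0, y)).1
  q2 : ∀ x : ℝ, 0 ≤ x → 0 ≤ (F (x, 0)).2
  growth : ∃ C : ℝ, 0 ≤ C ∧ ∀ x y : ℝ, 0 ≤ x → 0 ≤ y →
    (F (x, y)).1 ≤ C * (x + y) ∧ (F (x, y)).2 ≤ C * (x + y)

def DSol (F : ℝ × ℝ → ℝ × ℝ) (T : ℝ) (l : ℝ × ℝ) (V : ℝ → ℝ × ℝ) : Prop :=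
  V 0 = l ∧ (∀ t ∈ Icc 0 T, 0 ≤ (V t).1 ∧ 0 ≤ (V t).2) ∧
    ∀ t ∈ Icc 0 T, HasDerivWithinAt V (F (V t)) (Icc 0 T) t

theorem DSol.mono {F : ℝ × ℝ → ℝ × ℝ} {T S : ℝ} {l : ℝ × ℝ} {V : ℝ → ℝ × ℝ}
    (h : DSol F T l V) (hS : S ≤ T) : DSol F S l V := by
  obtain ⟨h0, h1, h2⟩ := h
  have hsub : Icc 0 S ⊆ Icc 0 T := Icc_subset_Icc le_rfl hS
  exact ⟨h0, fun t ht => h1 t (hsub ht), fun t ht => (h2 t (hsub ht)).mono hsub⟩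

theorem right_of_Icc {E : Type*} [NormedAddCommGroup E] [NormedSpace ℝ E] {V : ℝ → E} {v : E}
    {T t : ℝ} (ht : t ∈ Ico 0 T) (h : HasDerivWithinAt V v (Icc 0 T) t) :
    HasDerivWithinAt V v (Ici t) t := by
  refine h.mono_of_mem_nhdsWithin ?_
  have : Icc t T ∈ nhdsWithin t (Ici t) := Icc_mem_nhdsGE ht.2
  exact mem_of_superset this (Icc_subset_Icc ht.1 le_rfl)

theorem bdd_of_cont {T : ℝ} {V : ℝ → ℝ × ℝ} (h : ContinuousOn V (Icc 0 T)) :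
    ∃ R : ℝ, 0 ≤ R ∧ ∀ t ∈ Icc 0 T, (V t).1 ≤ R ∧ (V t).2 ≤ R := by
  obtain ⟨C, hC⟩ := isCompact_Icc.exists_bound_of_continuousOn h
  refine ⟨max C 0, le_max_right _ _, fun t ht => ?_⟩
  have h1 := hC t ht
  have h2 := norm_fst_le (V t)
  have h3 := norm_snd_le (V t)
  have h4 := Real.le_norm_self (V t).1
  have h5 := Real.le_norm_self (V t).2
  have h6 := le_max_left C 0
  constructor <;> linarith

theorem DSol.unique {F : ℝ × ℝ → ℝ × ℝ} (hF : GoodField F) {T : ℝ} {l : ℝ × ℝ}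
    {V W : ℝ → ℝ × ℝ} (hV : DSol F T l V) (hW : DSol F T l W) : EqOn V W (Icc 0 T) := by
  have cV : ContinuousOn V (Icc 0 T) := fun t ht => (hV.2.2 t ht).continuousWithinAt
  have cW : ContinuousOn W (Icc 0 T) := fun t ht => (hW.2.2 t ht).continuousWithinAt
  obtain ⟨R1, hR1, b1⟩ := bdd_of_cont cV
  obtain ⟨R2, hR2, b2⟩ := bdd_of_cont cW
  obtain ⟨K, hK⟩ := hF.lip (max R1 R2) (le_trans hR1 (le_max_left _ _))
  have hIco : ∀ {t}, t ∈ Ico 0 T → t ∈ Icc 0 T := fun h => Ico_subset_Icc_self h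
  refine ODE_solution_unique_of_mem_Icc_right (v := fun _ => F) (s := fun _ => Quad (max R1 R2))
    (K := K) (fun _ _ => hK) cV (fun t ht => right_of_Icc ht (hV.2.2 t (hIco ht))) ?_
    cW (fun t ht => right_of_Icc ht (hW.2.2 t (hIco ht))) ?_ (hV.1.trans hW.1.symm)
  · intro t ht
    have := hV.2.1 t (hIco ht)
    have h2 := b1 t (hIco ht)
    exact ⟨this.1, this.2, h2.1.trans (le_max_left _ _), h2.2.trans (le_max_left _ _)⟩
  · intro t ht
    have := hW.2.1 t (hIco ht)
    have h2 := b2 t (hIco ht)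
    exact ⟨this.1, this.2, h2.1.trans (le_max_right _ _), h2.2.trans (le_max_right _ _)⟩

theorem nonneg_of_field {T : ℝ} {f f' : ℝ → ℝ} (h0 : 0 ≤ f 0)
    (hc : ContinuousOn f (Icc 0 T))
    (hd : ∀ t ∈ Ico 0 T, HasDerivWithinAt f (f' t) (Ici t) t)
    (hq : ∀ t ∈ Ico 0 T, f t ≤ 0 → 0 ≤ f' t) : ∀ t ∈ Icc 0 T, 0 ≤ f t := by
  intro t ht
  have key : ∀ ε > 0, - f t ≤ ε * (t + 1) := by
    intro ε hε
    have := image_le_of_deriv_right_lt_deriv_boundary (f := fun t => - f t)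
      (f' := fun t => - f' t) (a := 0) (b := T) (B := fun t => ε * (t + 1)) (B' := fun _ => ε)
      hc.neg (fun x hx => (hd x hx).neg) (by simp; linarith)
      (fun x => by simpa using ((hasDerivAt_id x).add_const 1).const_mul ε)
      (fun x hx hE => by
        have h1 : 0 ≤ ε * (x + 1) := mul_nonneg hε.le (by linarith [hx.1])
        have h2 := hq x hx (by linarith)
        linarith)
    exact this ht
  by_contra hneg
  push Not at hneg
  have hp : 0 < t + 1 := by linarith [ht.1]
  have := key (-f t / (2 * (t + 1))) (by apply div_pos <;> linarith)
  have e : -f t / (2 * (t + 1)) * (t + 1) = - f t / 2 := by field_simp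
  linarith

def clampR (R : ℝ) (l : ℝ × ℝ) : ℝ × ℝ := (max 0 (min l.1 R), max 0 (min l.2 R))

theorem clampR_mem {R : ℝ} (hR : 0 ≤ R) (l : ℝ × ℝ) : clampR R l ∈ Quad R := by
  refine ⟨le_max_left _ _, le_max_left _ _, ?_, ?_⟩ <;> simp [clampR, hR]

theorem clampR_lip (R : ℝ) : LipschitzWith 1 (clampR R) := by
  have h : LipschitzWith 1 (fun x : ℝ => max 0 (min x R)) :=
    (LipschitzWith.id.min_const R).const_max 0
  have h1 := h.comp (LipschitzWith.prod_fst (α := ℝ) (β := ℝ))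
  have h2 := h.comp (LipschitzWith.prod_snd (α := ℝ) (β := ℝ))
  have h3 := h1.prodMk h2
  simp only [mul_one, max_self] at h3
  exact h3

theorem exists_DSol {F : ℝ × ℝ → ℝ × ℝ} (hF : GoodField F) {T : ℝ} (hT : 0 ≤ T) {l : ℝ × ℝ}
    (hl1 : 0 ≤ l.1) (hl2 : 0 ≤ l.2) : ∃ V, DSol F T l V := by
  obtain ⟨C, hC0, hC⟩ := hF.growth
  set R : ℝ := (l.1 + l.2) * Real.exp (2 * C * T) with hRdef
  have hR : 0 ≤ R := by positivity
  obtain ⟨K, hK⟩ := hF.lip R hR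
  set G : ℝ × ℝ → ℝ × ℝ := fun x => F (clampR R x) with hG
  have hGl : LipschitzWith K G := by
    have := hK.comp (g := F) (f := clampR R) (s := univ) ((clampR_lip R).lipschitzOnWith)
      (fun x _ => clampR_mem hR x)
    rw [mul_one, lipschitzOnWith_univ] at this
    exact this
  -- bound
  obtain ⟨L, hL⟩ : ∃ L : NNReal, ∀ x, ‖G x‖ ≤ L := by
    refine ⟨⟨‖F (0, 0)‖ + K * R, by positivity⟩, fun x => ?_⟩
    have hm := clampR_mem hR x
    have h0 : ((0 : ℝ), (0 : ℝ)) ∈ Quad R := ⟨le_rfl, le_rfl, hR, hR⟩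
    have h1 := hK.norm_sub_le hm h0
    have h2 : ‖clampR R x - (0, 0)‖ ≤ R := by
      rw [Prod.norm_def]
      simp only [Prod.fst_sub, Prod.snd_sub, sub_zero, Real.norm_eq_abs]
      rw [abs_of_nonneg hm.1, abs_of_nonneg hm.2.1]
      exact max_le hm.2.2.1 hm.2.2.2
    have h3 := norm_le_norm_add_norm_sub' (G x) (F (0, 0))
    have h4 : (K : ℝ) * ‖clampR R x - (0, 0)‖ ≤ K * R := by gcongr
    show ‖G x‖ ≤ ‖F (0, 0)‖ + K * R
    simp only [hG] at h3 ⊢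
    linarith
  have hP : IsPicardLindelof (fun _ => G) (tmin := 0) (tmax := T) ⟨0, le_rfl, hT⟩ l
      (L * ⟨T, hT⟩) 0 L K := by
    refine ⟨fun t _ => hGl.lipschitzOnWith, fun x _ => continuousOn_const, fun t _ x _ => hL x, ?_⟩
    simp [hT]
    exact le_rfl
  obtain ⟨V, hV0, hVd⟩ := hP.exists_eq_forall_mem_Icc_hasDerivWithinAt₀
  simp only at hV0
  have cV : ContinuousOn V (Icc 0 T) := fun t ht => (hVd t ht).continuousWithinAt
  have hI : ∀ {t}, t ∈ Ico 0 T → t ∈ Icc 0 T := fun h => Ico_subset_Icc_self h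
  have d1 : ∀ t ∈ Ico 0 T, HasDerivWithinAt (fun t => (V t).1) (G (V t)).1 (Ici t) t :=
    fun t ht => (right_of_Icc ht (hVd t (hI ht))).fst
  have d2 : ∀ t ∈ Ico 0 T, HasDerivWithinAt (fun t => (V t).2) (G (V t)).2 (Ici t) t :=
    fun t ht => (right_of_Icc ht (hVd t (hI ht))).snd
  have n1 : ∀ t ∈ Icc 0 T, 0 ≤ (V t).1 := by
    refine nonneg_of_field (by rw [hV0]; exact hl1) cV.fst d1 (fun t _ h => ?_)
    have : clampR R (V t) = (0, (clampR R (V t)).2) := by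
      ext
      · simp only [clampR]; exact max_eq_left ((min_le_left _ _).trans h)
      · rfl
    simp only [hG]
    rw [this]
    exact hF.q1 _ (clampR_mem hR _).2.1
  have n2 : ∀ t ∈ Icc 0 T, 0 ≤ (V t).2 := by
    refine nonneg_of_field (by rw [hV0]; exact hl2) cV.snd d2 (fun t _ h => ?_)
    have : clampR R (V t) = ((clampR R (V t)).1, 0) := by
      ext
      · rfl
      · simp only [clampR]; exact max_eq_left ((min_le_left _ _).trans h)
    simp only [hG]
    rw [this]
    exact hF.q2 _ (clampR_mem hR _).1
  have up : ∀ t ∈ Icc 0 T, (V t).1 + (V t).2 ≤ R := by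
    have := le_gronwallBound_of_liminf_deriv_right_le (f := fun t => (V t).1 + (V t).2)
      (f' := fun t => (G (V t)).1 + (G (V t)).2) (δ := l.1 + l.2) (K := 2 * C) (ε := 0)
      (a := 0) (b := T) (cV.fst.add cV.snd)
      (fun x hx r hr => by
        have := ((d1 x hx).add (d2 x hx)).liminf_right_slope_le hr
        simpa [slope_def_field, div_eq_inv_mul] using this)
      (by simp [hV0])
      (fun x hx => by
        have a1 := n1 x (hI hx)
        have a2 := n2 x (hI hx)
        have m := clampR_mem hR (V x)
        have h := hC _ _ m.1 m.2.1
        have e1 : (clampR R (V x)).1 ≤ (V x).1 := max_le a1 (min_le_left _ _)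
        have e2 : (clampR R (V x)).2 ≤ (V x).2 := max_le a2 (min_le_left _ _)
        have e3 : C * ((clampR R (V x)).1 + (clampR R (V x)).2) ≤ C * ((V x).1 + (V x).2) := by
          gcongr
        have h1 : (G (V x)).1 ≤ _ := h.1
        have h2 : (G (V x)).2 ≤ _ := h.2
        linarith)
    intro t ht
    have h := this t ht
    rw [gronwallBound_ε0] at h
    refine h.trans ?_
    rw [hRdef]
    have : t - 0 ≤ T := by linarith [ht.2]
    gcongr
  refine ⟨V, hV0, fun t ht => ⟨n1 t ht, n2 t ht⟩, fun t ht => ?_⟩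
  have h := hVd t ht
  have e : clampR R (V t) = V t := by
    have a1 := n1 t ht
    have a2 := n2 t ht
    have a3 := up t ht
    ext
    · simp only [clampR]; rw [min_eq_left (by linarith), max_eq_right a1]
    · simp only [clampR]; rw [min_eq_left (by linarith), max_eq_right a2]
  simpa only [hG, e] using h

theorem exists_global {F : ℝ × ℝ → ℝ × ℝ} (hF : GoodField F) {l : ℝ × ℝ}
    (hl1 : 0 ≤ l.1) (hl2 : 0 ≤ l.2) : ∃ V, ∀ T, 0 ≤ T → DSol F T l V := by
  have hex : ∀ T : ℝ, ∃ V, 0 ≤ T → DSol F T l V := fun T => by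
    by_cases hT : 0 ≤ T
    · obtain ⟨V, hV⟩ := exists_DSol hF hT hl1 hl2
      exact ⟨V, fun _ => hV⟩
    · exact ⟨fun _ => 0, fun h => absurd h hT⟩
  choose S hS using hex
  refine ⟨fun t => S t t, fun T hT => ?_⟩
  have e : EqOn (fun t => S t t) (S T) (Icc 0 T) := fun t ht =>
    (hS t ht.1).unique hF ((hS T hT).mono ht.2) ⟨ht.1, le_rfl⟩
  obtain ⟨h0, h1, h2⟩ := hS T hT
  refine ⟨(e ⟨le_rfl, hT⟩).trans h0, fun t ht => ?_, fun t ht => ?_⟩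
  · have := e ht
    simp only at this ⊢
    rw [this]; exact h1 t ht
  · have h := (h2 t ht).congr e (e ht)
    have := e ht
    simp only at this ⊢
    rw [this]; exact h

theorem exp_lip_aux {R p q : ℝ} (hp : -R ≤ p) (hq : -R ≤ q) :
    |Real.exp (-p) - Real.exp (-q)| ≤ Real.exp R * |p - q| := by
  wlog h : p ≤ q generalizing p q
  · have := this hq hp (le_of_not_ge h)
    rwa [abs_sub_comm, abs_sub_comm p q]
  have h1 : Real.exp (-q) = Real.exp (-p) * Real.exp (-(q - p)) := by
    rw [← Real.exp_add]; congr 1; ring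
  have h2 := Real.add_one_le_exp (-(q - p))
  have h3 : Real.exp (-p) ≤ Real.exp R := Real.exp_le_exp.2 (by linarith)
  have h4 : Real.exp (-q) ≤ Real.exp (-p) := Real.exp_le_exp.2 (by linarith)
  rw [abs_of_nonneg (by linarith), abs_of_nonpos (by linarith : p - q ≤ 0), h1]
  have h5 := Real.exp_pos (-p)
  nlinarith

theorem exp_comp_aux {M p q : ℝ} (hp : 0 ≤ p) (hq : 0 ≤ q) (hpM : p ≤ M) (hqM : q ≤ M) :
    |Real.exp (-p) - Real.exp (-q) + (p - q)| ≤ |p - q| * min 1 M := by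
  wlog h : p ≤ q generalizing p q
  · have := this hq hp hqM hpM (le_of_not_ge h)
    rw [abs_sub_comm p q, ← abs_neg]
    convert this using 2
    ring
  have h4 : Real.exp (-q) ≤ Real.exp (-p) := Real.exp_le_exp.2 (by linarith)
  have hd : |p - q| = q - p := by rw [abs_of_nonpos (by linarith)]; ring
  have e1 := exp_lip_aux (R := 0) (p := p) (q := q) (by linarith) (by linarith)
  rw [Real.exp_zero, one_mul, hd] at e1
  have e1' := (abs_le.1 e1).2
  have h1 : Real.exp (-p) = Real.exp (-q) * Real.exp (q - p) := by
    rw [← Real.exp_add]; congr 1; ring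
  have h2 := Real.add_one_le_exp (q - p)
  have h3 := Real.add_one_le_exp (-q)
  have h5 := Real.exp_pos (-q)
  have h6 : (1 - M) * (q - p) ≤ Real.exp (-p) - Real.exp (-q) := by
    have a : Real.exp (-q) * (q - p) ≤ Real.exp (-p) - Real.exp (-q) := by
      rw [h1]; nlinarith
    have b : (1 - M) * (q - p) ≤ Real.exp (-q) * (q - p) := by
      apply mul_le_mul_of_nonneg_right _ (by linarith); linarith
    linarith
  rw [hd, abs_of_nonpos (by linarith)]
  rcases min_choice 1 M with hm | hm <;> rw [hm] <;> linarith

theorem inner_diff {l m z : ℝ × ℝ} :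
    |(l.1 * z.1 + l.2 * z.2) - (m.1 * z.1 + m.2 * z.2)| ≤ ‖l - m‖ * (|z.1| + |z.2|) := by
  have h1 : |l.1 - m.1| ≤ ‖l - m‖ := norm_fst_le (l - m)
  have h2 : |l.2 - m.2| ≤ ‖l - m‖ := norm_snd_le (l - m)
  have e : (l.1 * z.1 + l.2 * z.2) - (m.1 * z.1 + m.2 * z.2)
    = (l.1 - m.1) * z.1 + (l.2 - m.2) * z.2 := by ring
  rw [e]
  refine (abs_add_le _ _).trans ?_
  rw [abs_mul, abs_mul, mul_add]
  gcongr

theorem bound1 {R : ℝ} {l m z : ℝ × ℝ} (hR : 0 ≤ R) (hl : l ∈ Quad R) (hm : m ∈ Quad R)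
    (hz1 : 0 ≤ z.1) (hz2 : 0 ≤ z.2) :
    |(Real.exp (-(l.1 * z.1 + l.2 * z.2)) - 1 + l.1 * z.1) -
      (Real.exp (-(m.1 * z.1 + m.2 * z.2)) - 1 + m.1 * z.1)| ≤
      (R + 3) * ‖l - m‖ * (min z.1 (z.1 ^ 2) + z.2) := by
  obtain ⟨l1, l2, l3, l4⟩ := hl
  obtain ⟨m1, m2, m3, m4⟩ := hm
  have hpq := inner_diff (l := l) (m := m) (z := z)
  rw [abs_of_nonneg hz1, abs_of_nonneg hz2] at hpq
  have hp0 : 0 ≤ l.1 * z.1 + l.2 * z.2 := by positivity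
  have hq0 : 0 ≤ m.1 * z.1 + m.2 * z.2 := by positivity
  have hpM : l.1 * z.1 + l.2 * z.2 ≤ R * (z.1 + z.2) := by rw [mul_add]; gcongr
  have hqM : m.1 * z.1 + m.2 * z.2 ≤ R * (z.1 + z.2) := by rw [mul_add]; gcongr
  have key := exp_comp_aux hp0 hq0 hpM hqM
  have h2 : |l.2 - m.2| ≤ ‖l - m‖ := norm_snd_le (l - m)
  have e : (Real.exp (-(l.1 * z.1 + l.2 * z.2)) - 1 + l.1 * z.1) -
      (Real.exp (-(m.1 * z.1 + m.2 * z.2)) - 1 + m.1 * z.1) =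
      (Real.exp (-(l.1 * z.1 + l.2 * z.2)) - Real.exp (-(m.1 * z.1 + m.2 * z.2))
        + ((l.1 * z.1 + l.2 * z.2) - (m.1 * z.1 + m.2 * z.2))) - (l.2 - m.2) * z.2 := by ring
  rw [e]
  refine (abs_sub _ _).trans ?_
  rw [abs_mul, abs_of_nonneg hz2]
  set D := ‖l - m‖ with hD
  have hD0 : 0 ≤ D := norm_nonneg _
  set M := min 1 (R * (z.1 + z.2)) with hM
  have hM0 : 0 ≤ M := le_min zero_le_one (by positivity)
  have hM1 : M ≤ 1 := min_le_left _ _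
  have hM2 : M ≤ R * (z.1 + z.2) := min_le_right _ _
  have hw : z.1 * M ≤ (R + 1) * (min z.1 (z.1 ^ 2) + z.2) := by
    rcases le_total 1 z.1 with h | h
    · rw [min_eq_left (by nlinarith)]
      have : 0 ≤ R * (z.1 + z.2) := by positivity
      nlinarith
    · rw [min_eq_right (by nlinarith)]
      have a : z.1 * M ≤ z.1 * (R * (z.1 + z.2)) := by gcongr
      have b : R * z.2 * z.1 ≤ R * z.2 * 1 := by gcongr
      nlinarith [sq_nonneg z.1]
  have hmin : 0 ≤ min z.1 (z.1 ^ 2) := le_min hz1 (sq_nonneg _)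
  calc _ ≤ D * (z.1 + z.2) * M + D * z.2 := by
        refine add_le_add (key.trans ?_) (by gcongr)
        gcongr
    _ = D * (z.1 * M + z.2 * M + z.2) := by ring
    _ ≤ D * ((R + 1) * (min z.1 (z.1 ^ 2) + z.2) + z.2 * 1 + z.2) := by gcongr
    _ ≤ D * ((R + 3) * (min z.1 (z.1 ^ 2) + z.2)) := by
        gcongr
        nlinarith
    _ = _ := by ring

theorem bound2 {R : ℝ} {l m z : ℝ × ℝ} (hR : 0 ≤ R) (hl : l ∈ Quad R) (hm : m ∈ Quad R)
    (hz1 : 0 ≤ z.1) (hz2 : -1 ≤ z.2) :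
    |(1 - Real.exp (-(l.1 * z.1 + l.2 * z.2))) - (1 - Real.exp (-(m.1 * z.1 + m.2 * z.2)))| ≤
      Real.exp R * ‖l - m‖ * (z.1 + |z.2|) := by
  obtain ⟨l1, l2, l3, l4⟩ := hl
  obtain ⟨m1, m2, m3, m4⟩ := hm
  have hpq := inner_diff (l := l) (m := m) (z := z)
  rw [abs_of_nonneg hz1] at hpq
  have hp : -R ≤ l.1 * z.1 + l.2 * z.2 := by
    have : 0 ≤ l.1 * z.1 := by positivity
    nlinarith
  have hq : -R ≤ m.1 * z.1 + m.2 * z.2 := by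
    have : 0 ≤ m.1 * z.1 := by positivity
    nlinarith
  have key := exp_lip_aux hp hq
  rw [show (1 - Real.exp (-(l.1 * z.1 + l.2 * z.2))) - (1 - Real.exp (-(m.1 * z.1 + m.2 * z.2)))
    = -(Real.exp (-(l.1 * z.1 + l.2 * z.2)) - Real.exp (-(m.1 * z.1 + m.2 * z.2))) by ring,
    abs_neg]
  refine key.trans ?_
  rw [mul_assoc]
  gcongr

theorem lip_integral {μ : Measure (ℝ × ℝ)} {f : ℝ × ℝ → ℝ × ℝ → ℝ} {w : ℝ × ℝ → ℝ}
    (hw : Integrable w μ) (hf : ∀ l, Continuous (f l)) (h0 : ∀ z, f 0 z = 0) {R K : ℝ}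
    (hR : 0 ≤ R)
    (h : ∀ l ∈ Quad R, ∀ m ∈ Quad R, ∀ᵐ z ∂μ, |f l z - f m z| ≤ K * ‖l - m‖ * w z) :
    (∀ l ∈ Quad R, Integrable (f l) μ) ∧ ∀ l ∈ Quad R, ∀ m ∈ Quad R,
      |(∫ z, f l z ∂μ) - ∫ z, f m z ∂μ| ≤ K * (∫ z, w z ∂μ) * ‖l - m‖ := by
  have hi : ∀ l ∈ Quad R, Integrable (f l) μ := by
    intro l hl
    refine (hw.const_mul (K * ‖l‖)).mono' (hf l).aestronglyMeasurable ?_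
    filter_upwards [h l hl 0 ⟨le_rfl, le_rfl, hR, hR⟩] with z hz
    simpa [h0] using hz
  refine ⟨hi, fun l hl m hm => ?_⟩
  rw [← integral_sub (hi l hl) (hi m hm)]
  have h1 := norm_integral_le_of_norm_le (f := fun z => f l z - f m z)
    (hw.const_mul (K * ‖l - m‖)) (h l hl m hm)
  rw [Real.norm_eq_abs] at h1
  rw [integral_const_mul] at h1
  linarith

theorem ae1 (B : BranchingMechanism) : ∀ᵐ z ∂B.n1, 0 ≤ z.1 ∧ 0 ≤ z.2 := by
  have : ∀ᵐ z ∂B.n1, z ∈ Mset := B.n1_supp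
  filter_upwards [this] with z hz
  obtain ⟨h, n, hn⟩ := hz
  exact ⟨h, by rw [hn]; positivity⟩

theorem ae2 (B : BranchingMechanism) : ∀ᵐ z ∂B.n2, 0 ≤ z.1 ∧ -1 ≤ z.2 := by
  have : ∀ᵐ z ∂B.n2, z ∈ Mm1set := B.n2_supp
  filter_upwards [this] with z hz
  obtain ⟨h, n, hn, hn'⟩ := hz
  exact ⟨h, by rw [hn']; exact_mod_cast hn⟩

theorem int1 (B : BranchingMechanism) :
    Integrable (fun z : ℝ × ℝ => min z.1 (z.1 ^ 2) + z.2) B.n1 := by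
  refine (lintegral_ofReal_ne_top_iff_integrable ?_ ?_).1 B.n1_moment
  · exact (by fun_prop : Continuous (fun z : ℝ × ℝ => min z.1 (z.1 ^ 2) + z.2)).aestronglyMeasurable
  · filter_upwards [ae1 B] with z hz
    exact add_nonneg (le_min hz.1 (sq_nonneg _)) hz.2

theorem int2 (B : BranchingMechanism) :
    Integrable (fun z : ℝ × ℝ => z.1 + |z.2|) B.n2 := by
  refine (lintegral_ofReal_ne_top_iff_integrable ?_ ?_).1 B.n2_moment
  · exact (by fun_prop : Continuous (fun z : ℝ × ℝ => z.1 + |z.2|)).aestronglyMeasurable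
  · filter_upwards [ae2 B] with z hz
    exact add_nonneg hz.1 (abs_nonneg _)

theorem lip1 (B : BranchingMechanism) {R : ℝ} (hR : 0 ≤ R) :
    (∀ l ∈ Quad R, Integrable (fun z : ℝ × ℝ => Real.exp (-(l.1 * z.1 + l.2 * z.2)) - 1 + l.1 * z.1) B.n1) ∧
      ∀ l ∈ Quad R, ∀ m ∈ Quad R,
      |(∫ z, (Real.exp (-(l.1 * z.1 + l.2 * z.2)) - 1 + l.1 * z.1) ∂B.n1) -
        ∫ z, (Real.exp (-(m.1 * z.1 + m.2 * z.2)) - 1 + m.1 * z.1) ∂B.n1| ≤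
        (R + 3) * (∫ z : ℝ × ℝ, (min z.1 (z.1 ^ 2) + z.2) ∂B.n1) * ‖l - m‖ :=
  lip_integral (int1 B)
    (f := fun l z => Real.exp (-(l.1 * z.1 + l.2 * z.2)) - 1 + l.1 * z.1)
    (fun l => by fun_prop) (fun z => by simp) (K := R + 3) hR
    (fun l hl m hm => by
      filter_upwards [ae1 B] with z hz
      exact bound1 hR hl hm hz.1 hz.2)

theorem lip2 (B : BranchingMechanism) {R : ℝ} (hR : 0 ≤ R) :
    (∀ l ∈ Quad R, Integrable (fun z : ℝ × ℝ => 1 - Real.exp (-(l.1 * z.1 + l.2 * z.2))) B.n2) ∧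
      ∀ l ∈ Quad R, ∀ m ∈ Quad R,
      |(∫ z, (1 - Real.exp (-(l.1 * z.1 + l.2 * z.2))) ∂B.n2) -
        ∫ z, (1 - Real.exp (-(m.1 * z.1 + m.2 * z.2))) ∂B.n2| ≤
        Real.exp R * (∫ z : ℝ × ℝ, (z.1 + |z.2|) ∂B.n2) * ‖l - m‖ :=
  lip_integral (int2 B)
    (f := fun l z => 1 - Real.exp (-(l.1 * z.1 + l.2 * z.2)))
    (fun l => by fun_prop) (fun z => by simp) (K := Real.exp R) hR
    (fun l hl m hm => by
      filter_upwards [ae2 B] with z hz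
      exact bound2 hR hl hm hz.1 hz.2)

def mF (B : BranchingMechanism) (l : ℝ × ℝ) : ℝ × ℝ := (mPhi1 B l, mPhi2 B l)

theorem mF_good (B : BranchingMechanism) : GoodField (mF B) where
  lip := by
    intro R hR
    set I1 := ∫ z : ℝ × ℝ, (min z.1 (z.1 ^ 2) + z.2) ∂B.n1 with hI1
    set I2 := ∫ z : ℝ × ℝ, (z.1 + |z.2|) ∂B.n2 with hI2
    have hI1' : 0 ≤ I1 := integral_nonneg_of_ae (by
      filter_upwards [ae1 B] with z hz
      exact add_nonneg (le_min hz.1 (sq_nonneg _)) hz.2)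
    have hI2' : 0 ≤ I2 := integral_nonneg_of_ae (by
      filter_upwards [ae2 B] with z hz
      exact add_nonneg hz.1 (abs_nonneg _))
    have ha := B.alpha_nonneg
    have hb := B.a21_nonneg
    refine ⟨⟨(|B.a11| + B.alpha * (2 * R) + (R + 3) * I1) + (B.a21 + Real.exp R * I2),
      by positivity⟩, LipschitzOnWith.of_dist_le_mul fun l hl m hm => ?_⟩
    rw [dist_eq_norm, dist_eq_norm]
    change _ ≤ ((|B.a11| + B.alpha * (2 * R) + (R + 3) * I1) + (B.a21 + Real.exp R * I2)) * ‖l - m‖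
    have h1 := (lip1 B hR).2 l hl m hm
    have h2 := (lip2 B hR).2 l hl m hm
    have d1 : |l.1 - m.1| ≤ ‖l - m‖ := norm_fst_le (l - m)
    set D := ‖l - m‖
    have hD : 0 ≤ D := norm_nonneg _
    have c1 : |mPhi1 B l - mPhi1 B m| ≤ (|B.a11| + B.alpha * (2 * R) + (R + 3) * I1) * D := by
      have e : mPhi1 B l - mPhi1 B m = -B.a11 * (l.1 - m.1)
        + -(B.alpha * (l.1 + m.1)) * (l.1 - m.1)
        + -((∫ z, (Real.exp (-(l.1 * z.1 + l.2 * z.2)) - 1 + l.1 * z.1) ∂B.n1) -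
          ∫ z, (Real.exp (-(m.1 * z.1 + m.2 * z.2)) - 1 + m.1 * z.1) ∂B.n1) := by
        simp only [mPhi1]; ring
      rw [e]
      refine (abs_add_three _ _ _).trans ?_
      rw [abs_neg, abs_mul, abs_mul, abs_neg, abs_neg]
      have a0 : |B.alpha * (l.1 + m.1)| ≤ B.alpha * (2 * R) := by
        rw [abs_of_nonneg (mul_nonneg ha (add_nonneg hl.1 hm.1))]
        gcongr
        linarith [hl.2.2.1, hm.2.2.1]
      have a1 : |B.a11| * |l.1 - m.1| ≤ |B.a11| * D := by gcongr
      have a2 : |B.alpha * (l.1 + m.1)| * |l.1 - m.1| ≤ B.alpha * (2 * R) * D := by gcongr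
      linarith
    have c2 : |mPhi2 B l - mPhi2 B m| ≤ (B.a21 + Real.exp R * I2) * D := by
      have e : mPhi2 B l - mPhi2 B m = B.a21 * (l.1 - m.1)
        + ((∫ z, (1 - Real.exp (-(l.1 * z.1 + l.2 * z.2))) ∂B.n2) -
          ∫ z, (1 - Real.exp (-(m.1 * z.1 + m.2 * z.2))) ∂B.n2) := by
        simp only [mPhi2]; ring
      rw [e]
      refine (abs_add_le _ _).trans ?_
      rw [abs_mul, abs_of_nonneg hb]
      have a1 : B.a21 * |l.1 - m.1| ≤ B.a21 * D := by gcongr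
      linarith
    have p1 : 0 ≤ (|B.a11| + B.alpha * (2 * R) + (R + 3) * I1) * D := by positivity
    have p2 : 0 ≤ (B.a21 + Real.exp R * I2) * D := by positivity
    rw [Prod.norm_def]
    refine max_le ?_ ?_
    · show |mPhi1 B l - mPhi1 B m| ≤ _
      linarith
    · show |mPhi2 B l - mPhi2 B m| ≤ _
      linarith
  q1 := by
    intro y hy
    show 0 ≤ mPhi1 B (0, y)
    have : ∫ z, (Real.exp (-((0, y).1 * z.1 + (0, y).2 * z.2)) - 1 + ((0 : ℝ), y).1 * z.1) ∂B.n1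
        ≤ 0 := by
      refine integral_nonpos_of_ae ?_
      filter_upwards [ae1 B] with z hz
      have := mul_nonneg hy hz.2
      simp
      linarith
    unfold mPhi1
    simp only at this ⊢
    linarith
  q2 := by
    intro x hx
    show 0 ≤ mPhi2 B (x, 0)
    have : 0 ≤ ∫ z, (1 - Real.exp (-((x, (0 : ℝ)).1 * z.1 + (x, (0 : ℝ)).2 * z.2))) ∂B.n2 := by
      refine integral_nonneg_of_ae ?_
      filter_upwards [ae2 B] with z hz
      have := mul_nonneg hx hz.1
      simp
      linarith
    have h2 := mul_nonneg B.a21_nonneg hx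
    unfold mPhi2
    simp only at this ⊢
    linarith
  growth := by
    set I1 := ∫ z : ℝ × ℝ, (min z.1 (z.1 ^ 2) + z.2) ∂B.n1 with hI1
    set I2 := ∫ z : ℝ × ℝ, (z.1 + |z.2|) ∂B.n2 with hI2
    have hI1' : 0 ≤ I1 := integral_nonneg_of_ae (by
      filter_upwards [ae1 B] with z hz
      exact add_nonneg (le_min hz.1 (sq_nonneg _)) hz.2)
    have hI2' : 0 ≤ I2 := integral_nonneg_of_ae (by
      filter_upwards [ae2 B] with z hz
      exact add_nonneg hz.1 (abs_nonneg _))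
    have hb := B.a21_nonneg
    refine ⟨|B.a11| + I1 + B.a21 + I2, by positivity, fun x y hx hy => ?_⟩
    have hq : (x, y) ∈ Quad (x + y) := ⟨hx, hy, by simp [hy], by simp [hx]⟩
    have i1 := (lip1 B (add_nonneg hx hy)).1 _ hq
    have i2 := (lip2 B (add_nonneg hx hy)).1 _ hq
    simp only at i1 i2
    constructor
    · show mPhi1 B (x, y) ≤ _
      have h : - ∫ z, (Real.exp (-(x * z.1 + y * z.2)) - 1 + x * z.1) ∂B.n1 ≤ y * I1 := by
        rw [← integral_neg, hI1, ← integral_const_mul]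
        refine integral_mono_ae i1.neg ((int1 B).const_mul y) ?_
        filter_upwards [ae1 B] with z hz
        have h1 := Real.add_one_le_exp (-(x * z.1 + y * z.2))
        have h2 : 0 ≤ y * min z.1 (z.1 ^ 2) := mul_nonneg hy (le_min hz.1 (sq_nonneg _))
        linarith
      have a1 : -B.a11 * x ≤ |B.a11| * x := by
        gcongr; exact neg_le_abs _
      have a2 : 0 ≤ B.alpha * x ^ 2 := mul_nonneg B.alpha_nonneg (sq_nonneg _)
      have p : 0 ≤ |B.a11| * y + I1 * x + (B.a21 + I2) * (x + y) := by positivity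
      unfold mPhi1
      simp only
      linarith
    · show mPhi2 B (x, y) ≤ _
      have h : ∫ z, (1 - Real.exp (-(x * z.1 + y * z.2))) ∂B.n2 ≤ (x + y) * I2 := by
        rw [hI2, ← integral_const_mul]
        refine integral_mono_ae i2 ((int2 B).const_mul (x + y)) ?_
        filter_upwards [ae2 B] with z hz
        have h1 := Real.add_one_le_exp (-(x * z.1 + y * z.2))
        have h2 : y * z.2 ≤ y * |z.2| := by gcongr; exact le_abs_self _
        have h3 : 0 ≤ x * |z.2| + y * z.1 :=
          add_nonneg (mul_nonneg hx (abs_nonneg _)) (mul_nonneg hy hz.1)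
        linarith
      have p : 0 ≤ B.a21 * y + (|B.a11| + I1) * (x + y) := by positivity
      unfold mPhi2
      simp only
      linarith

theorem mF_cont (B : BranchingMechanism) {T : ℝ} {V : ℝ → ℝ × ℝ} (h : ContinuousOn V (Icc 0 T))
    (hn : ∀ t ∈ Icc 0 T, 0 ≤ (V t).1 ∧ 0 ≤ (V t).2) :
    ContinuousOn (fun s => mF B (V s)) (Icc 0 T) := by
  obtain ⟨R, hR, b⟩ := bdd_of_cont h
  obtain ⟨K, hK⟩ := (mF_good B).lip R hR
  exact hK.continuousOn.comp h fun t ht => ⟨(hn t ht).1, (hn t ht).2, (b t ht).1, (b t ht).2⟩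

theorem ftc_aux {T : ℝ} (hT : 0 ≤ T) {g v : ℝ → ℝ} {c : ℝ} (hc : ContinuousOn g (Icc 0 T))
    (h : ∀ t ∈ Icc 0 T, v t = c + ∫ s in (0:ℝ)..t, g s) :
    ∀ t ∈ Icc 0 T, HasDerivWithinAt v (g t) (Icc 0 T) t := by
  intro t ht
  set ge := IccExtend hT ((Icc 0 T).domRestrict g) with hge
  have cge : Continuous ge := hc.domRestrict.Icc_extend'
  have heq : ∀ s ∈ Icc 0 T, ge s = g s := fun s hs => IccExtend_of_mem hT _ hs
  have hd : HasDerivAt (fun u => c + ∫ s in (0:ℝ)..u, ge s) (ge t) t :=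
    (intervalIntegral.integral_hasDerivAt_right (cge.intervalIntegrable _ _)
      cge.stronglyMeasurable.stronglyMeasurableAtFilter cge.continuousAt).const_add c
  have hv : ∀ u ∈ Icc 0 T, v u = c + ∫ s in (0:ℝ)..u, ge s := by
    intro u hu
    rw [h u hu]
    congr 1
    refine intervalIntegral.integral_congr fun s hs => ?_
    rw [uIcc_of_le hu.1] at hs
    exact (heq s ⟨hs.1, hs.2.trans hu.2⟩).symm
  rw [← heq t ht]
  exact hd.hasDerivWithinAt.congr hv (hv t ht)

theorem SolvesCumulant.dsol {B : BranchingMechanism} {l : ℝ × ℝ} {V : ℝ → ℝ × ℝ}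
    (h : SolvesCumulant B l V) {T : ℝ} (hT : 0 ≤ T) : DSol (mF B) T l V := by
  obtain ⟨h1, h2, h3⟩ := h
  have hn : ∀ t ∈ Icc 0 T, 0 ≤ (V t).1 ∧ 0 ≤ (V t).2 := fun t ht => h2 t ht.1
  have hc := mF_cont B (h1.mono Icc_subset_Ici_self) hn
  refine ⟨?_, hn, fun t ht => ?_⟩
  · have := h3 0 le_rfl
    ext
    · simpa using this.1
    · simpa using this.2
  · have d1 := ftc_aux hT (g := fun s => mPhi1 B (V s)) (v := fun s => (V s).1) hc.fst
      (fun t ht => (h3 t ht.1).1) t ht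
    have d2 := ftc_aux hT (g := fun s => mPhi2 B (V s)) (v := fun s => (V s).2) hc.snd
      (fun t ht => (h3 t ht.1).2) t ht
    exact d1.prodMk d2

theorem solves_of_dsol {B : BranchingMechanism} {l : ℝ × ℝ} {V : ℝ → ℝ × ℝ}
    (h : ∀ T, 0 ≤ T → DSol (mF B) T l V) : SolvesCumulant B l V := by
  have hn : ∀ t : ℝ, 0 ≤ t → 0 ≤ (V t).1 ∧ 0 ≤ (V t).2 :=
    fun t ht => (h t ht).2.1 t ⟨ht, le_rfl⟩
  have hcT : ∀ T, 0 ≤ T → ContinuousOn V (Icc 0 T) := fun T hT t ht =>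
    ((h T hT).2.2 t ht).continuousWithinAt
  refine ⟨fun t ht => ?_, hn, fun t ht => ?_⟩
  · have ht' : (0:ℝ) ≤ t := ht
    refine (hcT (t + 1) (by linarith) t ⟨ht', by linarith⟩).mono_of_mem_nhdsWithin ?_
    have : Iio (t + 1) ∈ nhds t := Iio_mem_nhds (by linarith)
    filter_upwards [self_mem_nhdsWithin, mem_nhdsWithin_of_mem_nhds this] with s hs hs'
    exact ⟨hs, le_of_lt hs'⟩
  · obtain ⟨h0, _, h2⟩ := h t ht
    have hc := mF_cont B (hcT t ht) (fun s hs => hn s hs.1)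
    have d : ∀ x ∈ Ioo 0 t, HasDerivAt V (mF B (V x)) x := fun x hx =>
      (h2 x (Ioo_subset_Icc_self hx)).hasDerivAt (Icc_mem_nhds hx.1 hx.2)
    have e1 := intervalIntegral.integral_eq_sub_of_hasDerivAt_of_le ht (hcT t ht).fst
      (fun x hx => (d x hx).fst) (hc.fst.intervalIntegrable_of_Icc ht)
    have e2 := intervalIntegral.integral_eq_sub_of_hasDerivAt_of_le ht (hcT t ht).snd
      (fun x hx => (d x hx).snd) (hc.snd.intervalIntegrable_of_Icc ht)
    simp only [mF, h0] at e1 e2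
    constructor
    · rw [e1]; ring
    · rw [e2]; ring

theorem dsol_shift {F : ℝ × ℝ → ℝ × ℝ} {l : ℝ × ℝ} {V : ℝ → ℝ × ℝ}
    (h : ∀ T, 0 ≤ T → DSol F T l V) {t : ℝ} (ht : 0 ≤ t) {T : ℝ} (hT : 0 ≤ T) :
    DSol F T (V t) (fun r => V (r + t)) := by
  obtain ⟨h0, h1, h2⟩ := h (T + t) (by linarith)
  have hm : ∀ r ∈ Icc 0 T, r + t ∈ Icc 0 (T + t) := fun r hr =>
    ⟨by linarith [hr.1], by linarith [hr.2]⟩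
  refine ⟨by simp, fun r hr => h1 _ (hm r hr), fun r hr => ?_⟩
  have := (h2 _ (hm r hr)).scomp r ((hasDerivWithinAt_id r (Icc 0 T)).add_const t) (fun s hs => hm s hs)
  rw [one_smul] at this
  exact this

/-- For a branching mechanism `(Φ₁,Φ₂)`, for every `λ ∈ [0,∞)²` the
cumulant equations (3.8) have a unique continuous `[0,∞)²`-valued solution on
`[0,∞)`, and the solutions satisfy the semigroup property
`V(r+t,λ) = V(r, V(t,λ))`. -/
theorem cumulant_equation_unique_solution_and_flow (B : BranchingMechanism) :
    ∃ V : ℝ → (ℝ × ℝ) → ℝ × ℝ,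
      (∀ l : ℝ × ℝ, 0 ≤ l.1 → 0 ≤ l.2 →
        SolvesCumulant B l (fun t => V t l) ∧
        ∀ W : ℝ → ℝ × ℝ, SolvesCumulant B l W → ∀ t : ℝ, 0 ≤ t → W t = V t l) ∧
      (∀ l : ℝ × ℝ, 0 ≤ l.1 → 0 ≤ l.2 → ∀ r t : ℝ, 0 ≤ r → 0 ≤ t →
        V (r + t) l = V r (V t l)) := by
  have hex : ∀ l : ℝ × ℝ, ∃ V : ℝ → ℝ × ℝ, 0 ≤ l.1 → 0 ≤ l.2 →
      ∀ T, 0 ≤ T → DSol (mF B) T l V := fun l => by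
    by_cases hl : 0 ≤ l.1 ∧ 0 ≤ l.2
    · obtain ⟨V, hV⟩ := exists_global (mF_good B) hl.1 hl.2
      exact ⟨V, fun _ _ => hV⟩
    · exact ⟨fun _ => 0, fun h1 h2 => absurd ⟨h1, h2⟩ hl⟩
  choose S hS using hex
  refine ⟨fun t l => S l t, fun l h1 h2 => ⟨solves_of_dsol (hS l h1 h2), fun W hW t ht => ?_⟩,
    fun l h1 h2 r t hr ht => ?_⟩
  · exact (hW.dsol ht).unique (mF_good B) (hS l h1 h2 t ht) ⟨ht, le_rfl⟩
  · have hn := (hS l h1 h2 t ht).2.1 t ⟨ht, le_rfl⟩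
    exact (dsol_shift (hS l h1 h2) ht hr).unique (mF_good B) (hS _ hn.1 hn.2 r hr) ⟨hr, le_rfl⟩
end
end

section
/- Let (Φ₁,Φ₂) be a branching mechanism and V the unique solution of the cumulant equations (3.8). Then for every t ≥ 0 and x ∈ 𝕄 there exists a unique Borel probability measure P_t(x,·) on 𝕄 such that ∫_𝕄 e^{−⟨λ,y⟩} P_t(x,dy) = exp(−⟨x, V(t,λ)⟩) for all λ ∈ [0,∞)², and these measures form a Markov transition semigroup: ∫_𝕄 P_s(y, A) P_t(x, dy) = P_{t+s}(x, A) for all Borel sets A ⊆ 𝕄, all s, t ≥ 0 and x ∈ 𝕄. -/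
open MeasureTheory Filter Set

noncomputable section

open MeasureTheory Filter Set
set_option linter.unusedVariables false
noncomputable section

/-- the quadrant -/
def QQ : Set (ℝ × ℝ) := {l | 0 ≤ l.1 ∧ 0 ≤ l.2}

lemma exp_sub_le (a b R : ℝ) (ha : a ≤ R) (hb : b ≤ R) :
    |Real.exp a - Real.exp b| ≤ Real.exp R * |a - b| := by
  wlog h : b ≤ a generalizing a b
  · rw [abs_sub_comm, abs_sub_comm a b]; exact this b a hb ha (by linarith)
  rw [abs_of_nonneg (sub_nonneg.2 (Real.exp_le_exp.2 h)), abs_of_nonneg (by linarith)]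
  have h1 : Real.exp b = Real.exp a * Real.exp (b - a) := by rw [← Real.exp_add]; ring_nf
  have h2 := Real.add_one_le_exp (b - a)
  have h3 := Real.exp_le_exp.2 ha
  have h4 := Real.exp_pos a
  calc Real.exp a - Real.exp b = Real.exp a * (1 - Real.exp (b - a)) := by rw [h1]; ring
    _ ≤ Real.exp a * (a - b) := mul_le_mul_of_nonneg_left (by linarith) h4.le
    _ ≤ Real.exp R * (a - b) := mul_le_mul_of_nonneg_right h3 (by linarith)

lemma G1_aux (a b c z R : ℝ) (hb : 0 ≤ b) (hab : b ≤ a) (hc : 0 ≤ c) (hz : 0 ≤ z) 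
    (D : ℝ) (hD : z * (1 - Real.exp (-(a * z + c))) ≤ D) :
    |(Real.exp (-(a * z + c)) + a * z) - (Real.exp (-(b * z + c)) + b * z)| ≤ (a - b) * D := by
  have h1 : Real.exp (-(a * z + c)) = Real.exp (-(b * z + c)) * Real.exp (-((a - b) * z)) := by
    rw [← Real.exp_add]; ring_nf
  have h2 := Real.add_one_le_exp (-((a - b) * z))
  have h3 := Real.add_one_le_exp ((a - b) * z)
  have h5 : Real.exp (-(b * z + c)) = Real.exp (-(a * z + c)) * Real.exp ((a - b) * z) := by
    rw [← Real.exp_add]; ring_nf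
  have h4 : Real.exp (-(b * z + c)) ≤ 1 := Real.exp_le_one_iff.2 (by nlinarith [mul_nonneg hb hz])
  have p1 := Real.exp_pos (-(b * z + c))
  have p2 := Real.exp_pos (-(a * z + c))
  have hu : 0 ≤ (a - b) * z := mul_nonneg (by linarith) hz
  have hD' : (a - b) * (z * (1 - Real.exp (-(a * z + c)))) ≤ (a - b) * D :=
    mul_le_mul_of_nonneg_left hD (by linarith)
  rw [abs_of_nonneg]
  · have : Real.exp (-(a * z + c)) * ((a-b)*z + 1) ≤ Real.exp (-(b * z + c)) := by
      rw [h5]; gcongr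
    nlinarith
  · have : Real.exp (-(b * z + c)) * (-((a-b)*z) + 1) ≤ Real.exp (-(a * z + c)) := by
      rw [h1]; gcongr
    nlinarith

def G1 (l z : ℝ × ℝ) : ℝ := Real.exp (-(l.1 * z.1 + l.2 * z.2)) - 1 + l.1 * z.1
def G2 (l z : ℝ × ℝ) : ℝ := 1 - Real.exp (-(l.1 * z.1 + l.2 * z.2))

lemma G1_lip (R : ℝ) (hR : 1 ≤ R) (l m z : ℝ × ℝ) (hz : z ∈ Mset) (hl : l ∈ QQ) (hm : m ∈ QQ)
    (hl1 : l.1 ≤ R) (hm1 : m.1 ≤ R) (hm2 : m.2 ≤ R) :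
    |G1 l z - G1 m z| ≤ (|l.1 - m.1| + |l.2 - m.2|) * (R * (min z.1 (z.1^2) + z.2)) := by
  obtain ⟨hz1, n, hn⟩ := hz
  obtain ⟨hl01, hl02⟩ := hl
  obtain ⟨hm01, hm02⟩ := hm
  have hz2 : 0 ≤ z.2 := by rw [hn]; positivity
  have hmin : 0 ≤ min z.1 (z.1^2) := le_min hz1 (by positivity)
  -- bound for D
  have key : ∀ a : ℝ, 0 ≤ a → a ≤ R → z.1 * (1 - Real.exp (-(a * z.1 + m.2 * z.2))) ≤
      R * (min z.1 (z.1^2) + z.2) := by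
    intro a ha haR
    have e1 := Real.exp_pos (-(a * z.1 + m.2 * z.2))
    have e2 := Real.add_one_le_exp (-(a * z.1 + m.2 * z.2))
    have b1 : z.1 * (1 - Real.exp (-(a * z.1 + m.2 * z.2))) ≤ z.1 := by nlinarith
    rcases Nat.eq_zero_or_pos n with h0 | h0
    · have : z.2 = 0 := by rw [hn, h0]; simp
      rw [this] at b1 e2 ⊢
      have b2 : z.1 * (1 - Real.exp (-(a * z.1 + m.2 * 0))) ≤ R * z.1^2 := by
        have : z.1 * (1 - Real.exp (-(a * z.1 + m.2 * 0))) ≤ z.1 * (a * z.1) := by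
          gcongr; linarith
        nlinarith [mul_le_mul_of_nonneg_right haR (sq_nonneg z.1)]
      rcases min_choice z.1 (z.1^2) with h | h <;> rw [h]
      · nlinarith
      · linarith
    · have : 1 ≤ z.2 := by rw [hn]; exact_mod_cast h0
      have : z.1 ≤ min z.1 (z.1^2) + z.2 := by
        rcases min_choice z.1 (z.1^2) with h | h <;> rw [h]
        · linarith
        · nlinarith [sq_nonneg (z.1 - 1)]
      nlinarith
  have first : |G1 (l.1, m.2) z - G1 m z| ≤ |l.1 - m.1| * (R * (min z.1 (z.1^2) + z.2)) := by
    have hc : 0 ≤ m.2 * z.2 := mul_nonneg hm02 hz2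
    rcases le_total m.1 l.1 with h | h
    · have := G1_aux l.1 m.1 (m.2 * z.2) z.1 R hm01 h hc hz1 _ (key l.1 hl01 hl1)
      rw [abs_of_nonneg (sub_nonneg.2 h)]
      convert this using 2; simp only [G1]; ring
    · have := G1_aux m.1 l.1 (m.2 * z.2) z.1 R hl01 h hc hz1 _ (key m.1 hm01 hm1)
      rw [abs_sub_comm, abs_sub_comm l.1 m.1, abs_of_nonneg (sub_nonneg.2 h)]
      convert this using 2; simp only [G1]; ring
  have second : |G1 l z - G1 (l.1, m.2) z| ≤ |l.2 - m.2| * (R * (min z.1 (z.1^2) + z.2)) := by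
    have := exp_sub_le (-(l.1 * z.1 + l.2 * z.2)) (-(l.1 * z.1 + m.2 * z.2)) 0
      (by nlinarith [mul_nonneg hl01 hz1, mul_nonneg hl02 hz2])
      (by nlinarith [mul_nonneg hl01 hz1, mul_nonneg hm02 hz2])
    have e : -(l.1 * z.1 + l.2 * z.2) - -(l.1 * z.1 + m.2 * z.2) = -((l.2 - m.2) * z.2) := by ring
    rw [e, abs_neg, abs_mul, abs_of_nonneg hz2, Real.exp_zero, one_mul] at this
    have e' : G1 l z - G1 (l.1, m.2) z = Real.exp (-(l.1 * z.1 + l.2 * z.2)) - Real.exp (-(l.1 * z.1 + m.2 * z.2)) := by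
      simp only [G1]; ring
    rw [e']
    refine this.trans ?_
    gcongr
    nlinarith
  have : G1 l z - G1 m z = (G1 l z - G1 (l.1, m.2) z) + (G1 (l.1, m.2) z - G1 m z) := by ring
  rw [this]
  refine (abs_add_le _ _).trans ?_
  linarith

lemma G2_lip (R : ℝ) (hR : 0 ≤ R) (l m z : ℝ × ℝ) (hz : z ∈ Mm1set) (hl : l ∈ QQ) (hm : m ∈ QQ)
    (hl2 : l.2 ≤ R) (hm2 : m.2 ≤ R) :
    |G2 l z - G2 m z| ≤ (|l.1 - m.1| + |l.2 - m.2|) * (Real.exp R * (z.1 + |z.2|)) := by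
  obtain ⟨hz1, n, hn, hn'⟩ := hz
  have hz2 : -1 ≤ z.2 := by rw [hn']; exact_mod_cast hn
  have aux : ∀ k : ℝ × ℝ, k ∈ QQ → k.2 ≤ R → -(k.1 * z.1 + k.2 * z.2) ≤ R := by
    intro k hk hk2
    have := mul_nonneg hk.1 hz1
    have : k.2 * (z.2 + 1) ≥ 0 := mul_nonneg hk.2 (by linarith)
    linarith
  have := exp_sub_le _ _ R (aux m hm hm2) (aux l hl hl2)
  have e : G2 l z - G2 m z = Real.exp (-(m.1 * z.1 + m.2 * z.2)) - Real.exp (-(l.1 * z.1 + l.2 * z.2)) := by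
    simp only [G2]; ring
  rw [e]
  refine this.trans ?_
  have e2 : -(m.1 * z.1 + m.2 * z.2) - -(l.1 * z.1 + l.2 * z.2) = (l.1 - m.1) * z.1 + (l.2-m.2) * z.2 := by ring
  rw [e2]
  have h3 : |(l.1 - m.1) * z.1 + (l.2-m.2) * z.2| ≤ |l.1 - m.1| * z.1 + |l.2-m.2| * |z.2| := by
    refine (abs_add_le _ _).trans ?_
    rw [abs_mul, abs_mul, abs_of_nonneg hz1]
  have h4 : |l.1 - m.1| * z.1 + |l.2-m.2| * |z.2| ≤ (|l.1 - m.1| + |l.2 - m.2|) * (z.1 + |z.2|) := by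
    nlinarith [mul_nonneg (abs_nonneg (l.1-m.1)) (abs_nonneg z.2), mul_nonneg (abs_nonneg (l.2-m.2)) hz1]
  calc _ ≤ Real.exp R * ((|l.1 - m.1| + |l.2 - m.2|) * (z.1 + |z.2|)) := by gcongr; linarith
    _ = _ := by ring

variable (B : BranchingMechanism)

lemma n1_ae : ∀ᵐ z ∂B.n1, z ∈ Mset := by
  rw [ae_iff]; exact B.n1_supp
lemma n2_ae : ∀ᵐ z ∂B.n2, z ∈ Mm1set := by
  rw [ae_iff]; exact B.n2_supp

lemma int_n1 : Integrable (fun z : ℝ × ℝ => min z.1 (z.1^2) + z.2) B.n1 := by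
  refine ⟨by fun_prop, ?_⟩
  rw [hasFiniteIntegral_iff_ofReal]
  · exact B.n1_moment.lt_top
  · filter_upwards [n1_ae B] with z ⟨hz1, n, hn⟩
    have : 0 ≤ min z.1 (z.1^2) := le_min hz1 (by positivity)
    simp only [Pi.zero_apply]; rw [hn]; positivity

lemma int_n2 : Integrable (fun z : ℝ × ℝ => z.1 + |z.2|) B.n2 := by
  refine ⟨by fun_prop, ?_⟩
  rw [hasFiniteIntegral_iff_ofReal]
  · exact B.n2_moment.lt_top
  · filter_upwards [n2_ae B] with z ⟨hz1, _⟩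
    simp only [Pi.zero_apply]; positivity

lemma G1_zero (z : ℝ × ℝ) : G1 0 z = 0 := by simp [G1]
lemma G2_zero (z : ℝ × ℝ) : G2 0 z = 0 := by simp [G2]

lemma zero_QQ : (0 : ℝ × ℝ) ∈ QQ := ⟨le_rfl, le_rfl⟩

lemma G1_meas (l : ℝ × ℝ) : Measurable (G1 l) := by unfold G1; fun_prop
lemma G2_meas (l : ℝ × ℝ) : Measurable (G2 l) := by unfold G2; fun_prop

lemma G1_int (l : ℝ × ℝ) (hl : l ∈ QQ) : Integrable (G1 l) B.n1 := by
  set R := max 1 l.1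
  refine Integrable.mono' ((int_n1 B).const_mul ((|l.1| + |l.2|) * R)) (G1_meas l).aestronglyMeasurable ?_
  filter_upwards [n1_ae B] with z hz
  have := G1_lip R (le_max_left _ _) l 0 z hz hl zero_QQ (le_max_right _ _) (by simp [R]) (by simp [R])
  rw [G1_zero] at this
  simpa [mul_assoc] using this

lemma G2_int (l : ℝ × ℝ) (hl : l ∈ QQ) : Integrable (G2 l) B.n2 := by
  refine Integrable.mono' ((int_n2 B).const_mul ((|l.1| + |l.2|) * Real.exp l.2)) (G2_meas l).aestronglyMeasurable ?_
  filter_upwards [n2_ae B] with z hz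
  have := G2_lip l.2 hl.2 l 0 z hz hl zero_QQ le_rfl (by simpa using hl.2)
  rw [G2_zero] at this
  simpa [mul_assoc] using this

def Phi (l : ℝ × ℝ) : ℝ × ℝ := (mPhi1 B l, mPhi2 B l)

lemma Phi1_eq (l : ℝ × ℝ) : mPhi1 B l = -B.a11 * l.1 - B.alpha * l.1^2 - ∫ z, G1 l z ∂B.n1 := rfl
lemma Phi2_eq (l : ℝ × ℝ) : mPhi2 B l = B.a21 * l.1 + ∫ z, G2 l z ∂B.n2 := rfl

lemma Phi_zero : Phi B 0 = 0 := by
  simp [Phi, Phi1_eq, Phi2_eq, G1_zero, G2_zero]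

/-- box -/
def QR (R : ℝ) : Set (ℝ × ℝ) := {l | l ∈ QQ ∧ l.1 ≤ R ∧ l.2 ≤ R}

lemma Phi_lip (R : ℝ) (hR : 1 ≤ R) : ∃ K : ℝ, 0 ≤ K ∧ ∀ l ∈ QR R, ∀ m ∈ QR R,
    |mPhi1 B l - mPhi1 B m| ≤ K * (|l.1 - m.1| + |l.2 - m.2|) ∧
    |mPhi2 B l - mPhi2 B m| ≤ K * (|l.1 - m.1| + |l.2 - m.2|) := by
  set I1 := ∫ z : ℝ × ℝ, R * (min z.1 (z.1^2) + z.2) ∂B.n1 with hI1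
  set I2 := ∫ z : ℝ × ℝ, Real.exp R * (z.1 + |z.2|) ∂B.n2 with hI2
  have I1n : 0 ≤ I1 := by
    apply integral_nonneg_of_ae
    filter_upwards [n1_ae B] with z ⟨hz1, n, hn⟩
    have : 0 ≤ min z.1 (z.1^2) := le_min hz1 (by positivity)
    simp only [Pi.zero_apply]; rw [hn]; positivity
  have I2n : 0 ≤ I2 := by
    apply integral_nonneg_of_ae
    filter_upwards [n2_ae B] with z ⟨hz1, _⟩
    simp only [Pi.zero_apply]; positivity
  have a1 := B.a21_nonneg
  have a2 := B.alpha_nonneg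
  refine ⟨|B.a11| + B.alpha * (2 * R) + I1 + B.a21 + I2, by positivity, ?_⟩
  rintro l ⟨hl, hl1, hl2⟩ m ⟨hm, hm1, hm2⟩
  have J1 : |(∫ z, G1 l z ∂B.n1) - ∫ z, G1 m z ∂B.n1| ≤ (|l.1 - m.1| + |l.2 - m.2|) * I1 := by
    rw [← integral_sub (G1_int B l hl) (G1_int B m hm), hI1, ← integral_const_mul]
    rw [← Real.norm_eq_abs]
    refine norm_integral_le_of_norm_le (((int_n1 B).const_mul _).const_mul _) ?_
    filter_upwards [n1_ae B] with z hz
    exact G1_lip R hR l m z hz hl hm hl1 hm1 hm2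
  have J2 : |(∫ z, G2 l z ∂B.n2) - ∫ z, G2 m z ∂B.n2| ≤ (|l.1 - m.1| + |l.2 - m.2|) * I2 := by
    rw [← integral_sub (G2_int B l hl) (G2_int B m hm), hI2, ← integral_const_mul]
    rw [← Real.norm_eq_abs]
    refine norm_integral_le_of_norm_le (((int_n2 B).const_mul _).const_mul _) ?_
    filter_upwards [n2_ae B] with z hz
    exact G2_lip R (by linarith) l m z hz hl hm hl2 hm2
  set S := |l.1 - m.1| + |l.2 - m.2| with hS
  have hS0 : 0 ≤ S := by positivity
  have d1 : |l.1 - m.1| ≤ S := by have := abs_nonneg (l.2 - m.2); linarith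
  have sq : |l.1^2 - m.1^2| ≤ 2 * R * S := by
    have : l.1^2 - m.1^2 = (l.1+m.1)*(l.1-m.1) := by ring
    rw [this, abs_mul]
    have : |l.1 + m.1| ≤ 2 * R := by
      rw [abs_of_nonneg (add_nonneg hl.1 hm.1)]; linarith
    gcongr
  constructor
  · have e : mPhi1 B l - mPhi1 B m = -B.a11 * (l.1 - m.1) - B.alpha * (l.1^2 - m.1^2) - ((∫ z, G1 l z ∂B.n1) - ∫ z, G1 m z ∂B.n1) := by
      rw [Phi1_eq, Phi1_eq]; ring
    rw [e]
    calc _ ≤ |-B.a11 * (l.1 - m.1)| + |B.alpha * (l.1^2 - m.1^2)| + |(∫ z, G1 l z ∂B.n1) - ∫ z, G1 m z ∂B.n1| := by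
          refine (abs_sub _ _).trans ?_
          gcongr
          exact abs_sub _ _
      _ ≤ |B.a11| * S + B.alpha * (2 * R * S) + S * I1 := by
          rw [abs_mul, abs_mul, abs_neg, abs_of_nonneg a2]; gcongr
      _ ≤ _ := by nlinarith [mul_nonneg a1 hS0, mul_nonneg I2n hS0]
  · have e : mPhi2 B l - mPhi2 B m = B.a21 * (l.1 - m.1) + ((∫ z, G2 l z ∂B.n2) - ∫ z, G2 m z ∂B.n2) := by
      rw [Phi2_eq, Phi2_eq]; ring
    rw [e]
    calc _ ≤ |B.a21 * (l.1 - m.1)| + |(∫ z, G2 l z ∂B.n2) - ∫ z, G2 m z ∂B.n2| := abs_add_le _ _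
      _ ≤ B.a21 * S + S * I2 := by
          rw [abs_mul, abs_of_nonneg a1]; gcongr
      _ ≤ _ := by
        have : 0 ≤ |B.a11| * S := by positivity
        have : 0 ≤ B.alpha * (2 * R) * S := by positivity
        nlinarith [mul_nonneg I1n hS0]

lemma Phi_lower (R : ℝ) (hR : 1 ≤ R) : ∃ K : ℝ, ∀ l ∈ QR R,
    -K * l.1 ≤ mPhi1 B l ∧ -K * l.2 ≤ mPhi2 B l := by
  obtain ⟨K, hK, h⟩ := Phi_lip B R hR
  refine ⟨K, fun l hl => ?_⟩
  obtain ⟨hq, h1, h2⟩ := hl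
  have z1 : mPhi1 B 0 = 0 := congrArg Prod.fst (Phi_zero B)
  have z2 : mPhi2 B 0 = 0 := congrArg Prod.snd (Phi_zero B)
  have zR : (0 : ℝ × ℝ) ∈ QR R := ⟨zero_QQ, by simp; linarith, by simp; linarith⟩
  have q1 : (l.1, (0:ℝ)) ∈ QQ := ⟨hq.1, le_rfl⟩
  have q2 : ((0:ℝ), l.2) ∈ QQ := ⟨le_rfl, hq.2⟩
  constructor
  · have A := (h (l.1, 0) ⟨q1, h1, by simp; linarith⟩ 0 zR).1
    rw [z1] at A
    simp only [Prod.fst_zero, Prod.snd_zero, sub_zero, abs_zero, add_zero, abs_of_nonneg hq.1] at A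
    have M : mPhi1 B (l.1, 0) ≤ mPhi1 B l := by
      rw [Phi1_eq, Phi1_eq]
      have : ∫ z, G1 l z ∂B.n1 ≤ ∫ z, G1 (l.1, 0) z ∂B.n1 := by
        refine integral_mono_ae (G1_int B _ hq) (G1_int B _ q1) ?_
        filter_upwards [n1_ae B] with z ⟨hz1, n, hn⟩
        have : 0 ≤ l.2 * z.2 := mul_nonneg hq.2 (by rw [hn]; positivity)
        have e := Real.exp_le_exp.2 (show -(l.1 * z.1 + l.2 * z.2) ≤ -(l.1 * z.1 + 0 * z.2) by linarith)
        simp only [G1]; linarith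
      simp only; linarith
    have := neg_abs_le (mPhi1 B (l.1, 0)); linarith
  · have A := (h (0, l.2) ⟨q2, by simp; linarith, h2⟩ 0 zR).2
    rw [z2] at A
    simp only [Prod.fst_zero, Prod.snd_zero, sub_zero, abs_zero, zero_add, abs_of_nonneg hq.2] at A
    have M : mPhi2 B (0, l.2) ≤ mPhi2 B l := by
      rw [Phi2_eq, Phi2_eq]
      have : ∫ z, G2 (0, l.2) z ∂B.n2 ≤ ∫ z, G2 l z ∂B.n2 := by
        refine integral_mono_ae (G2_int B _ q2) (G2_int B _ hq) ?_
        filter_upwards [n2_ae B] with z ⟨hz1, _⟩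
        have : 0 ≤ l.1 * z.1 := mul_nonneg hq.1 hz1
        have e := Real.exp_le_exp.2 (show -(l.1 * z.1 + l.2 * z.2) ≤ -(0 * z.1 + l.2 * z.2) by linarith)
        simp only [G2]; linarith
      have := mul_nonneg B.a21_nonneg hq.1
      simp only [mul_zero]; linarith
    have := neg_abs_le (mPhi2 B (0, l.2)); linarith

lemma Phi_upper : ∃ C : ℝ, 0 ≤ C ∧ ∀ l ∈ QQ, mPhi1 B l + mPhi2 B l ≤ C * (l.1 + l.2) := by
  set I1 := ∫ z : ℝ × ℝ, (min z.1 (z.1^2) + z.2) ∂B.n1 with hI1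
  set I2 := ∫ z : ℝ × ℝ, (z.1 + |z.2|) ∂B.n2 with hI2
  have I1n : 0 ≤ I1 := by
    apply integral_nonneg_of_ae
    filter_upwards [n1_ae B] with z ⟨hz1, n, hn⟩
    have : 0 ≤ min z.1 (z.1^2) := le_min hz1 (by positivity)
    simp only [Pi.zero_apply]; rw [hn]; positivity
  have I2n : 0 ≤ I2 := by
    apply integral_nonneg_of_ae
    filter_upwards [n2_ae B] with z ⟨hz1, _⟩
    simp only [Pi.zero_apply]; positivity
  have a1 := B.a21_nonneg
  have a2 := B.alpha_nonneg
  refine ⟨|B.a11| + I1 + B.a21 + I2, by positivity, fun l hl => ?_⟩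
  have hl1 := hl.1
  have hl2 := hl.2
  have J1 : -(l.2 * I1) ≤ ∫ z, G1 l z ∂B.n1 := by
    rw [hI1, ← integral_const_mul, ← integral_neg]
    refine integral_mono_ae (((int_n1 B).const_mul _).neg) (G1_int B l hl) ?_
    filter_upwards [n1_ae B] with z ⟨hz1, n, hn⟩
    have hmin : 0 ≤ min z.1 (z.1^2) := le_min hz1 (by positivity)
    have hz2 : 0 ≤ z.2 := by rw [hn]; positivity
    have := Real.add_one_le_exp (-(l.1 * z.1 + l.2 * z.2))
    have := mul_nonneg hl2 hmin
    simp only [G1]; nlinarith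
  have J2 : ∫ z, G2 l z ∂B.n2 ≤ (l.1 + l.2) * I2 := by
    rw [hI2, ← integral_const_mul]
    refine integral_mono_ae (G2_int B l hl) (((int_n2 B).const_mul _)) ?_
    filter_upwards [n2_ae B] with z ⟨hz1, _⟩
    have := Real.add_one_le_exp (-(l.1 * z.1 + l.2 * z.2))
    have := mul_nonneg hl2 hz1
    have := mul_nonneg hl1 (abs_nonneg z.2)
    have := mul_le_mul_of_nonneg_left (le_abs_self z.2) hl2
    simp only [G2]; nlinarith
  rw [Phi1_eq, Phi2_eq]
  have : 0 ≤ B.alpha * l.1^2 := by positivity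
  have := mul_le_mul_of_nonneg_right (neg_le_abs B.a11) hl1
  have := mul_nonneg (abs_nonneg B.a11) hl2
  have := mul_nonneg a1 hl2
  have := mul_nonneg I1n hl1
  nlinarith
end

open MeasureTheory Filter Set
noncomputable section
variable (B : BranchingMechanism)

lemma Phi_lipOn (R : ℝ) (hR : 1 ≤ R) : ∃ K : NNReal, LipschitzOnWith K (Phi B) (QR R) := by
  obtain ⟨K, hK, h⟩ := Phi_lip B R hR
  refine ⟨⟨K * 2, by positivity⟩, LipschitzOnWith.of_dist_le_mul fun l hl m hm => ?_⟩
  obtain ⟨h1, h2⟩ := h l hl m hm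
  have d1 : |l.1 - m.1| ≤ dist l m := by
    rw [Prod.dist_eq, ← Real.dist_eq]; exact le_max_left _ _
  have d2 : |l.2 - m.2| ≤ dist l m := by
    rw [Prod.dist_eq, ← Real.dist_eq]; exact le_max_right _ _
  have : K * (|l.1 - m.1| + |l.2 - m.2|) ≤ K * 2 * dist l m := by
    rw [mul_assoc]; gcongr; linarith
  rw [Prod.dist_eq (x := Phi B l)]
  simp only [Phi, Real.dist_eq, NNReal.coe_mk]
  exact max_le (h1.trans this) (h2.trans this)

lemma Phi_cont : ContinuousOn (Phi B) QQ := by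
  intro l hl
  set R := max 1 (max (l.1 + 1) (l.2 + 1))
  have hR : 1 ≤ R := le_max_left _ _
  have h1 : l.1 + 1 ≤ R := (le_max_left _ _).trans (le_max_right _ _)
  have h2 : l.2 + 1 ≤ R := (le_max_right _ _).trans (le_max_right _ _)
  obtain ⟨K, hK⟩ := Phi_lipOn B R hR
  have := hK.continuousOn l ⟨hl, by linarith, by linarith⟩
  refine this.mono_of_mem_nhdsWithin ?_
  have o : IsOpen {m : ℝ × ℝ | m.1 < R ∧ m.2 < R} :=
    (isOpen_lt continuous_fst continuous_const).inter (isOpen_lt continuous_snd continuous_const)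
  filter_upwards [self_mem_nhdsWithin, mem_nhdsWithin_of_mem_nhds (o.mem_nhds (show l ∈ _ from ⟨by linarith, by linarith⟩))] with m hm hm'
  exact ⟨hm, hm'.1.le, hm'.2.le⟩

variable {B}

lemma sol_deriv {l : ℝ × ℝ} {W : ℝ → ℝ × ℝ} (h : SolvesCumulant B l W) :
    ∃ U : ℝ → ℝ × ℝ, (∀ t, 0 ≤ t → U t = W t) ∧ Continuous U ∧
      ∀ t, 0 ≤ t → HasDerivAt (fun s => (U s).1) (mPhi1 B (W t)) t ∧
         HasDerivAt (fun s => (U s).2) (mPhi2 B (W t)) t := by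
  obtain ⟨hc, hq, he⟩ := h
  have cW : Continuous (fun t => W (max t 0)) := by
    rw [← continuousOn_univ]
    exact hc.comp (by fun_prop) (fun t _ => le_max_right t 0)
  have cP : Continuous (fun t => Phi B (W (max t 0))) := by
    rw [← continuousOn_univ]
    exact (Phi_cont B).comp cW.continuousOn (fun t _ => hq _ (le_max_right t 0))
  have c1 : Continuous (fun t => mPhi1 B (W (max t 0))) := continuous_fst.comp cP
  have c2 : Continuous (fun t => mPhi2 B (W (max t 0))) := continuous_snd.comp cP
  have D1 : ∀ t, HasDerivAt (fun s => l.1 + ∫ r in (0:ℝ)..s, mPhi1 B (W (max r 0))) (mPhi1 B (W (max t 0))) t :=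
    fun t => (c1.integral_hasStrictDerivAt 0 t).hasDerivAt.const_add _
  have D2 : ∀ t, HasDerivAt (fun s => l.2 + ∫ r in (0:ℝ)..s, mPhi2 B (W (max r 0))) (mPhi2 B (W (max t 0))) t :=
    fun t => (c2.integral_hasStrictDerivAt 0 t).hasDerivAt.const_add _
  refine ⟨fun s => (l.1 + ∫ r in (0:ℝ)..s, mPhi1 B (W (max r 0)), l.2 + ∫ r in (0:ℝ)..s, mPhi2 B (W (max r 0))), ?_, ?_, ?_⟩
  · intro t ht
    obtain ⟨e1, e2⟩ := he t ht
    ext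
    · rw [e1]; simp only; congr 1
      apply intervalIntegral.integral_congr
      intro r hr
      rw [uIcc_of_le ht] at hr
      simp [max_eq_left hr.1]
    · rw [e2]; simp only; congr 1
      apply intervalIntegral.integral_congr
      intro r hr
      rw [uIcc_of_le ht] at hr
      simp [max_eq_left hr.1]
  · exact (continuous_iff_continuousAt.2 fun t => (D1 t).continuousAt).prodMk
      (continuous_iff_continuousAt.2 fun t => (D2 t).continuousAt)
  · intro t ht
    have := D1 t; have := D2 t
    rw [max_eq_left ht] at *
    exact ⟨D1 t |> fun h => by rwa [max_eq_left ht] at h, this⟩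

lemma gron {f f' : ℝ → ℝ} {C T : ℝ} (hf : ∀ t ∈ Icc 0 T, HasDerivAt f (f' t) t)
    (hle : ∀ t ∈ Icc 0 T, f' t ≤ C * f t) : ∀ t ∈ Icc 0 T, f t ≤ f 0 * Real.exp (C * t) := by
  have D : ∀ t ∈ Icc 0 T, HasDerivAt (fun s => f s * Real.exp (-(C * s)))
      (f' t * Real.exp (-(C * t)) + f t * (Real.exp (-(C * t)) * -(C * 1))) t := fun t ht =>
    (hf t ht).mul (((hasDerivAt_id t).const_mul C).neg.exp)
  have A : AntitoneOn (fun s => f s * Real.exp (-(C * s))) (Icc 0 T) := by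
    apply antitoneOn_of_deriv_nonpos (convex_Icc 0 T)
    · exact fun t ht => (D t ht).continuousAt.continuousWithinAt
    · exact fun t ht => (D t (interior_subset ht)).differentiableAt.differentiableWithinAt
    · intro t ht
      have ht := interior_subset ht
      rw [(D t ht).deriv]
      have := hle t ht
      have p := Real.exp_pos (-(C * t))
      nlinarith
  intro t ht
  have := A ⟨le_rfl, ht.1.trans ht.2⟩ ht ht.1
  simp only [mul_zero, neg_zero, Real.exp_zero, mul_one] at this
  calc f t = f t * Real.exp (-(C * t)) * Real.exp (C * t) := by
        rw [mul_assoc, ← Real.exp_add]; simp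
    _ ≤ _ := by gcongr

lemma sol_init {l : ℝ × ℝ} {W : ℝ → ℝ × ℝ} (h : SolvesCumulant B l W) : W 0 = l := by
  obtain ⟨e1, e2⟩ := h.2.2 0 le_rfl
  ext <;> simp_all

lemma sol_upper : ∃ C : ℝ, 0 ≤ C ∧ ∀ (l : ℝ × ℝ) (W : ℝ → ℝ × ℝ), SolvesCumulant B l W →
    ∀ t, 0 ≤ t → (W t).1 + (W t).2 ≤ (l.1 + l.2) * Real.exp (C * t) := by
  obtain ⟨C, hC, h⟩ := Phi_upper B
  refine ⟨C, hC, fun l W hW t ht => ?_⟩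
  obtain ⟨U, hU, -, hD⟩ := sol_deriv hW
  have := gron (f := fun s => (U s).1 + (U s).2) (C := C) (T := t) (f' := fun s => mPhi1 B (W s) + mPhi2 B (W s))
    (fun s hs => (hD s hs.1).1.add (hD s hs.1).2) (fun s hs => by
      simp only [hU s hs.1]; exact h _ (hW.2.1 s hs.1)) t ⟨ht, le_rfl⟩
  simpa only [hU t ht, hU 0 le_rfl, sol_init hW] using this

lemma sol_mem {C : ℝ} (hC : 0 ≤ C) {l : ℝ × ℝ} {W : ℝ → ℝ × ℝ} (hW : SolvesCumulant B l W)
    (h : ∀ t, 0 ≤ t → (W t).1 + (W t).2 ≤ (l.1 + l.2) * Real.exp (C * t))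
    (L T : ℝ) (hL : l.1 + l.2 ≤ L) : ∀ t ∈ Icc 0 T, W t ∈ QR (max 1 (L * Real.exp (C * T))) := by
  intro t ht
  have := h t ht.1
  have q := hW.2.1 t ht.1
  have q0 := hW.2.1 0 le_rfl
  rw [sol_init hW] at q0
  have : (W t).1 + (W t).2 ≤ L * Real.exp (C * T) := by
    refine this.trans ?_
    have : Real.exp (C * t) ≤ Real.exp (C * T) := Real.exp_le_exp.2 (by gcongr; exact ht.2)
    have : 0 ≤ L := by linarith
    gcongr
  have h3 := le_max_right 1 (L * Real.exp (C * T))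
  exact ⟨q, by linarith, by linarith⟩

/-- Lipschitz dependence on initial data. -/
lemma sol_lip (L T : ℝ) (hT : 0 ≤ T) : ∃ K : ℝ, ∀ (l m : ℝ × ℝ) (W X : ℝ → ℝ × ℝ),
    l.1 + l.2 ≤ L → m.1 + m.2 ≤ L → SolvesCumulant B l W → SolvesCumulant B m X →
    dist (W T) (X T) ≤ dist l m * K := by
  obtain ⟨C, hC, hu⟩ := sol_upper (B := B)
  set R := max 1 (L * Real.exp (C * T))
  obtain ⟨K, hK⟩ := Phi_lipOn B R (le_max_left _ _)
  refine ⟨Real.exp (K * (T - 0)), fun l m W X hl hm hW hX => ?_⟩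
  obtain ⟨U, hU, cU, hD⟩ := sol_deriv hW
  obtain ⟨Y, hY, cY, hE⟩ := sol_deriv hX
  have := dist_le_of_trajectories_ODE_of_mem (v := fun _ => Phi B) (s := fun _ => QR R) (K := K)
    (f := U) (g := Y) (a := 0) (b := T) (δ := dist l m) (fun t _ => hK) cU.continuousOn
    (fun t ht => ?_) (fun t ht => ?_) cY.continuousOn (fun t ht => ?_) (fun t ht => ?_) ?_ T ⟨hT, le_rfl⟩
  · rwa [hU T hT, hY T hT] at this
  · rw [hU t ht.1]; exact ((hD t ht.1).1.prodMk (hD t ht.1).2).hasDerivWithinAt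
  · rw [hU t ht.1]; exact sol_mem hC hW (hu l W hW) L T hl t ⟨ht.1, ht.2.le⟩
  · rw [hY t ht.1]; exact ((hE t ht.1).1.prodMk (hE t ht.1).2).hasDerivWithinAt
  · rw [hY t ht.1]; exact sol_mem hC hX (hu m X hX) L T hm t ⟨ht.1, ht.2.le⟩
  · rw [hU 0 le_rfl, hY 0 le_rfl, sol_init hW, sol_init hX]

lemma sol_unique {l : ℝ × ℝ} {W X : ℝ → ℝ × ℝ} (hW : SolvesCumulant B l W) (hX : SolvesCumulant B l X)
    (T : ℝ) (hT : 0 ≤ T) : W T = X T := by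
  obtain ⟨K, hK⟩ := sol_lip (B := B) (l.1 + l.2) T hT
  have := hK l l W X le_rfl le_rfl hW hX
  rw [dist_self, zero_mul] at this
  exact dist_le_zero.1 this

lemma sol_shift {l : ℝ × ℝ} {W : ℝ → ℝ × ℝ} (hW : SolvesCumulant B l W) (s : ℝ) (hs : 0 ≤ s) :
    SolvesCumulant B (W s) (fun t => W (t + s)) := by
  obtain ⟨U, hU, cU, hD⟩ := sol_deriv hW
  have cP : ContinuousOn (fun t => Phi B (W t)) (Ici 0) :=
    (Phi_cont B).comp hW.1 (fun t ht => hW.2.1 t ht)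
  refine ⟨hW.1.comp (by fun_prop) (fun t (ht : 0 ≤ t) => add_nonneg ht hs), fun t ht => hW.2.1 _ (by linarith), fun t ht => ?_⟩
  have i1 : ∀ r, 0 ≤ r → IntervalIntegrable (fun t => mPhi1 B (W t)) volume 0 r := fun r hr =>
    ((continuous_fst.comp_continuousOn cP).mono (by rw [uIcc_of_le hr]; exact fun x hx => hx.1)).intervalIntegrable
  have i2 : ∀ r, 0 ≤ r → IntervalIntegrable (fun t => mPhi2 B (W t)) volume 0 r := fun r hr =>
    ((continuous_snd.comp_continuousOn cP).mono (by rw [uIcc_of_le hr]; exact fun x hx => hx.1)).intervalIntegrable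
  obtain ⟨a1, a2⟩ := hW.2.2 s hs
  obtain ⟨b1, b2⟩ := hW.2.2 (t + s) (by linarith)
  constructor
  · rw [intervalIntegral.integral_comp_add_right (fun r => mPhi1 B (W r)) s, zero_add,
      ← intervalIntegral.integral_interval_sub_left (i1 (t+s) (by linarith)) (i1 s hs)]
    simp only; linarith
  · rw [intervalIntegral.integral_comp_add_right (fun r => mPhi2 B (W r)) s, zero_add,
      ← intervalIntegral.integral_interval_sub_left (i2 (t+s) (by linarith)) (i2 s hs)]
    simp only; linarith

lemma sol_zero {W : ℝ → ℝ × ℝ} (hW : SolvesCumulant B 0 W) (T : ℝ) (hT : 0 ≤ T) : W T = 0 := by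
  obtain ⟨C, hC, hu⟩ := sol_upper (B := B)
  have := hu _ _ hW T hT
  have q := hW.2.1 T hT
  simp at this
  ext
  · simp; linarith
  · simp; linarith

lemma sol_lower {l : ℝ × ℝ} {W : ℝ → ℝ × ℝ} (hW : SolvesCumulant B l W) (h1 : 0 < l.1) (h2 : 0 < l.2)
    (T : ℝ) : ∃ d > 0, ∀ t ∈ Icc 0 T, d ≤ (W t).1 ∧ d ≤ (W t).2 := by
  obtain ⟨C, hC, hu⟩ := sol_upper (B := B)
  obtain ⟨U, hU, -, hD⟩ := sol_deriv hW
  obtain ⟨K, hK⟩ := Phi_lower B _ (le_max_left 1 ((l.1 + l.2) * Real.exp (C * T)))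
  have hm := sol_mem hC hW (hu l W hW) (l.1+l.2) T le_rfl
  have e : ∀ t ∈ Icc 0 T, Real.exp (-|K| * T) ≤ Real.exp (-K * t) := by
    intro t ht
    apply Real.exp_le_exp.2
    have := le_abs_self K
    have := abs_nonneg K
    have := mul_le_mul_of_nonneg_left ht.2 (abs_nonneg K)
    have := mul_le_mul_of_nonneg_right (le_abs_self K) ht.1
    linarith
  refine ⟨min l.1 l.2 * Real.exp (-|K| * T), mul_pos (lt_min h1 h2) (Real.exp_pos _), fun t ht => ?_⟩
  have e := e t ht
  constructor
  · have := gron (f := fun s => -(U s).1) (C := -K) (T := T) (f' := fun s => -mPhi1 B (W s))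
      (fun s hs => (hD s hs.1).1.neg) (fun s hs => by
        have := (hK _ (hm s hs)).1
        simp only [hU s hs.1]; linarith) t ht
    simp only [hU t ht.1, hU 0 le_rfl, sol_init hW] at this
    calc _ ≤ l.1 * Real.exp (-K * t) := by gcongr; exact min_le_left _ _
      _ ≤ _ := by linarith
  · have := gron (f := fun s => -(U s).2) (C := -K) (T := T) (f' := fun s => -mPhi2 B (W s))
      (fun s hs => (hD s hs.1).2.neg) (fun s hs => by
        have := (hK _ (hm s hs)).2
        simp only [hU s hs.1]; linarith) t ht
    simp only [hU t ht.1, hU 0 le_rfl, sol_init hW] at this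
    calc _ ≤ l.2 * Real.exp (-K * t) := by gcongr; exact min_le_right _ _
      _ ≤ _ := by linarith
end

open MeasureTheory Filter Set
noncomputable section

def EE (S : Finset (ℝ × ℝ)) (c : ℝ × ℝ → ℝ) (p : ℝ × ℝ → ℝ × ℝ) (x2 : ℝ) (k : ℕ) (s : ℝ) : ℝ :=
  ∑ l ∈ S, c l * (-(p l).1)^k * Real.exp (-(s * (p l).1 + x2 * (p l).2))

lemma EE_deriv (S : Finset (ℝ × ℝ)) (c : ℝ × ℝ → ℝ) (p : ℝ × ℝ → ℝ × ℝ) (x2 : ℝ) (k : ℕ) (s : ℝ) :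
    HasDerivAt (EE S c p x2 k) (EE S c p x2 (k+1) s) s := by
  unfold EE
  apply HasDerivAt.fun_sum
  intro l _
  have := ((((hasDerivAt_id' s).mul_const (p l).1).add_const (x2 * (p l).2)).fun_neg.exp).const_mul (c l * (-(p l).1)^k)
  refine this.congr_deriv ?_
  ring

lemma EE_dd (S : Finset (ℝ × ℝ)) (c : ℝ × ℝ → ℝ) (p : ℝ × ℝ → ℝ × ℝ) (x2 : ℝ) :
    deriv (EE S c p x2 0) = EE S c p x2 1 ∧ deriv (deriv (EE S c p x2 0)) = EE S c p x2 2 := by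
  have h1 : deriv (EE S c p x2 0) = EE S c p x2 1 := funext fun s => (EE_deriv S c p x2 0 s).deriv
  refine ⟨h1, ?_⟩
  rw [h1]; exact funext fun s => (EE_deriv S c p x2 1 s).deriv

lemma EE_min_int (S : Finset (ℝ × ℝ)) (c : ℝ × ℝ → ℝ) (p : ℝ × ℝ → ℝ × ℝ) (x2 s : ℝ)
    (h : IsLocalMin (EE S c p x2 0) s) : EE S c p x2 1 s = 0 ∧ 0 ≤ EE S c p x2 2 s := by
  obtain ⟨d1, d2⟩ := EE_dd S c p x2
  have h1 : EE S c p x2 1 s = 0 := by rw [← d1]; exact h.deriv_eq_zero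
  refine ⟨h1, ?_⟩
  by_contra hneg
  push Not at hneg
  have hmax : IsLocalMax (EE S c p x2 0) s :=
    isLocalMax_of_deriv_deriv_neg (by rw [d2]; exact hneg) (by rw [d1]; exact h1)
      (EE_deriv S c p x2 0 s).continuousAt
  have heq : EE S c p x2 0 =ᶠ[nhds s] fun _ => EE S c p x2 0 s := by
    filter_upwards [h, hmax] with y hy1 hy2
    exact le_antisymm hy2 hy1
  have := heq.deriv.deriv.eq_of_nhds
  rw [d2] at this
  simp at this
  linarith

lemma deriv_nonneg_of_right_min {g : ℝ → ℝ} {g' s : ℝ} (hd : HasDerivAt g g' s)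
    (h : ∀ y, s ≤ y → g s ≤ g y) : 0 ≤ g' := by
  have := (hasDerivAt_iff_tendsto_slope.1 hd).mono_left (nhdsWithin_mono s (show Ioi s ⊆ _ from fun y (hy : s < y) => hy.ne'))
  refine ge_of_tendsto this ?_
  filter_upwards [self_mem_nhdsWithin] with y hy
  rw [slope_def_field]
  have := h y (le_of_lt hy)
  exact div_nonneg (by linarith) (by have : s < y := hy; linarith)

lemma deriv_nonpos_of_left_min {g : ℝ → ℝ} {g' s : ℝ} (hs : 0 < s) (hd : HasDerivAt g g' s)
    (h : ∀ y, 0 ≤ y → y ≤ s → g s ≤ g y) : g' ≤ 0 := by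
  have := (hasDerivAt_iff_tendsto_slope.1 hd).mono_left (nhdsWithin_mono s (show Iio s ⊆ _ from fun y (hy : y < s) => hy.ne))
  refine le_of_tendsto this ?_
  filter_upwards [self_mem_nhdsWithin, mem_nhdsWithin_of_mem_nhds (lt_mem_nhds hs)] with y hy hy0
  rw [slope_def_field]
  have hy' : y < s := hy
  have := h y (le_of_lt hy0) hy'.le
  exact div_nonpos_of_nonneg_of_nonpos (by linarith) (by linarith)

variable (B : BranchingMechanism)

lemma gen_pos (S : Finset (ℝ × ℝ)) (c : ℝ × ℝ → ℝ) (p : ℝ × ℝ → ℝ × ℝ) (hp : ∀ l ∈ S, p l ∈ QQ)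
    (x : ℝ × ℝ) (hx : x ∈ Mset)
    (hmin : ∀ y ∈ Mset, ∑ l ∈ S, c l * Real.exp (-(x.1 * (p l).1 + x.2 * (p l).2)) ≤
      ∑ l ∈ S, c l * Real.exp (-(y.1 * (p l).1 + y.2 * (p l).2))) :
    0 ≤ ∑ l ∈ S, c l * (Real.exp (-(x.1 * (p l).1 + x.2 * (p l).2)) *
      -(x.1 * mPhi1 B (p l) + x.2 * mPhi2 B (p l))) := by
  obtain ⟨hx1, n, hn⟩ := hx
  set d : ℝ × ℝ → ℝ := fun l => c l * Real.exp (-(x.1 * (p l).1 + x.2 * (p l).2)) with hd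
  have E0 : ∀ s, EE S c p x.2 0 s = ∑ l ∈ S, c l * Real.exp (-(s * (p l).1 + x.2 * (p l).2)) := by
    intro s; simp [EE]
  have E1 : EE S c p x.2 1 x.1 = -∑ l ∈ S, d l * (p l).1 := by
    rw [← Finset.sum_neg_distrib]; apply Finset.sum_congr rfl; intro l _; simp only [hd]; ring
  have E2 : EE S c p x.2 2 x.1 = ∑ l ∈ S, d l * (p l).1^2 := by
    apply Finset.sum_congr rfl; intro l _; simp only [hd]; ring
  have hm0 : ∀ y, 0 ≤ y → EE S c p x.2 0 x.1 ≤ EE S c p x.2 0 y := by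
    intro y hy; rw [E0, E0]; exact hmin (y, x.2) ⟨hy, n, hn⟩
  have f1 : 0 ≤ EE S c p x.2 1 x.1 :=
    deriv_nonneg_of_right_min (EE_deriv S c p x.2 0 x.1) (fun y hy => hm0 y (hx1.trans hy))
  have shift : ∀ z : ℝ × ℝ, (x.1 + z.1, x.2 + z.2) ∈ Mset →
      ∑ l ∈ S, d l ≤ ∑ l ∈ S, d l * Real.exp (-((p l).1 * z.1 + (p l).2 * z.2)) := by
    intro z hz
    refine (hmin _ hz).trans (le_of_eq ?_)
    apply Finset.sum_congr rfl; intro l _; simp only [hd]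
    rw [mul_assoc, ← Real.exp_add]; ring_nf
  have P1 : 0 < x.1 → 0 ≤ ∑ l ∈ S, d l * -mPhi1 B (p l) := by
    intro hpos
    have hloc : IsLocalMin (EE S c p x.2 0) x.1 := by
      filter_upwards [lt_mem_nhds hpos] with y hy using hm0 y hy.le
    obtain ⟨g1, g2⟩ := EE_min_int S c p x.2 x.1 hloc
    rw [E1, neg_eq_zero] at g1
    rw [E2] at g2
    have I : 0 ≤ ∑ l ∈ S, d l * ∫ z, G1 (p l) z ∂B.n1 := by
      simp_rw [← integral_const_mul]
      rw [← integral_finsetSum _ (fun l hl => (G1_int B (p l) (hp l hl)).const_mul _)]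
      apply integral_nonneg_of_ae
      filter_upwards [n1_ae B] with z ⟨hz1, k, hk⟩
      have := shift z ⟨by simp only; linarith, n + k, by simp only [hn, hk]; push_cast; ring⟩
      have e : ∑ l ∈ S, d l * G1 (p l) z = ∑ l ∈ S, d l * Real.exp (-((p l).1 * z.1 + (p l).2 * z.2))
          - ∑ l ∈ S, d l + (∑ l ∈ S, d l * (p l).1) * z.1 := by
        rw [Finset.sum_mul, ← Finset.sum_sub_distrib, ← Finset.sum_add_distrib]
        apply Finset.sum_congr rfl; intro l _; simp only [G1]; ring
      simp only [Pi.zero_apply]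
      rw [e, g1]; linarith
    have e : ∑ l ∈ S, d l * -mPhi1 B (p l) = B.a11 * (∑ l ∈ S, d l * (p l).1) +
        B.alpha * (∑ l ∈ S, d l * (p l).1^2) + ∑ l ∈ S, d l * ∫ z, G1 (p l) z ∂B.n1 := by
      rw [Finset.mul_sum, Finset.mul_sum, ← Finset.sum_add_distrib, ← Finset.sum_add_distrib]
      apply Finset.sum_congr rfl; intro l _; rw [Phi1_eq]; ring
    rw [e, g1]
    have := mul_nonneg B.alpha_nonneg g2
    linarith
  have P2 : 0 < n → 0 ≤ ∑ l ∈ S, d l * -mPhi2 B (p l) := by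
    intro hpos
    rw [E1] at f1
    have I : ∑ l ∈ S, d l * ∫ z, G2 (p l) z ∂B.n2 ≤ 0 := by
      simp_rw [← integral_const_mul]
      rw [← integral_finsetSum _ (fun l hl => (G2_int B (p l) (hp l hl)).const_mul _)]
      apply integral_nonpos_of_ae
      filter_upwards [n2_ae B] with z ⟨hz1, k, hk, hk'⟩
      have := shift z ⟨by simp only; linarith, (n + k).toNat, by
        have : (((n + k).toNat : ℤ) : ℝ) = ((n + k : ℤ) : ℝ) := by
          rw [Int.toNat_of_nonneg (by omega)]
        simp only [hn, hk']; push_cast at this; rw [← this]⟩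
      have e : ∑ l ∈ S, d l * G2 (p l) z = ∑ l ∈ S, d l - ∑ l ∈ S, d l * Real.exp (-((p l).1 * z.1 + (p l).2 * z.2)) := by
        rw [← Finset.sum_sub_distrib]
        apply Finset.sum_congr rfl; intro l _; simp only [G2]; ring
      simp only [Pi.zero_apply]
      rw [e]; linarith
    have e : ∑ l ∈ S, d l * -mPhi2 B (p l) = B.a21 * (-∑ l ∈ S, d l * (p l).1) 
        - ∑ l ∈ S, d l * ∫ z, G2 (p l) z ∂B.n2 := by
      rw [← Finset.sum_neg_distrib, Finset.mul_sum, ← Finset.sum_sub_distrib]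
      apply Finset.sum_congr rfl; intro l _; rw [Phi2_eq]; ring
    rw [e]
    have := mul_nonneg B.a21_nonneg f1
    linarith
  have e : ∑ l ∈ S, c l * (Real.exp (-(x.1 * (p l).1 + x.2 * (p l).2)) *
      -(x.1 * mPhi1 B (p l) + x.2 * mPhi2 B (p l))) =
      x.1 * (∑ l ∈ S, d l * -mPhi1 B (p l)) + n * ∑ l ∈ S, d l * -mPhi2 B (p l) := by
    rw [Finset.mul_sum, Finset.mul_sum, ← Finset.sum_add_distrib]
    apply Finset.sum_congr rfl; intro l _; simp only [hd, hn]; ring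
  rw [e]
  apply add_nonneg
  · rcases hx1.eq_or_lt with h | h
    · rw [← h]; simp
    · exact mul_nonneg hx1 (P1 h)
  · rcases Nat.eq_zero_or_pos n with h | h
    · rw [h]; simp
    · exact mul_nonneg (by positivity) (P2 h)

lemma Mset_closed : IsClosed Mset := by
  have : Mset = Ici 0 ×ˢ range (fun n : ℕ => (n : ℝ)) := by
    ext z; simp [Mset, eq_comm]
  rw [this]
  exact isClosed_Ici.prod Nat.isClosedEmbedding_coe_real.isClosed_range

lemma Mset_compact (R : ℝ) : IsCompact {y : ℝ × ℝ | y ∈ Mset ∧ y.1 + y.2 ≤ R} := by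
  have h : IsCompact (Icc (0:ℝ) R ×ˢ Icc (0:ℝ) R) := isCompact_Icc.prod isCompact_Icc
  refine h.of_isClosed_subset (Mset_closed.inter (isClosed_le (continuous_fst.add continuous_snd) continuous_const)) ?_
  rintro y ⟨⟨h1, n, hn⟩, h2⟩
  have : 0 ≤ y.2 := by rw [hn]; positivity
  have h2 : y.1 + y.2 ≤ R := h2
  exact ⟨⟨h1, by linarith⟩, this, by linarith⟩

/-- positivity property (strictly positive exponents) -/
lemma max_principle (V : ℝ → (ℝ × ℝ) → ℝ × ℝ) (S : Finset (ℝ × ℝ)) (c : ℝ × ℝ → ℝ)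
    (hV : ∀ l ∈ S, SolvesCumulant B l (fun t => V t l))
    (hS : ∀ l ∈ S, 0 < l.1 ∧ 0 < l.2)
    (h0 : ∀ y ∈ Mset, 0 ≤ ∑ l ∈ S, c l * Real.exp (-(y.1 * l.1 + y.2 * l.2)))
    (T : ℝ) (hT : 0 ≤ T) (x0 : ℝ × ℝ) (hx0 : x0 ∈ Mset) :
    0 ≤ ∑ l ∈ S, c l * Real.exp (-(x0.1 * (V T l).1 + x0.2 * (V T l).2)) := by
  by_contra hneg
  push Not at hneg
  -- lower bound
  have hlow : ∃ d > 0, ∀ l ∈ S, ∀ t ∈ Icc 0 T, d ≤ (V t l).1 ∧ d ≤ (V t l).2 := by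
    clear h0 hneg
    induction S using Finset.induction_on with
    | empty => exact ⟨1, one_pos, by simp⟩
    | insert a s ha ih =>
      obtain ⟨d, hd, h⟩ := ih (fun l hl => hV l (Finset.mem_insert_of_mem hl))
        (fun l hl => hS l (Finset.mem_insert_of_mem hl))
      obtain ⟨e, he, h'⟩ := sol_lower (hV a (Finset.mem_insert_self _ _))
        (hS a (Finset.mem_insert_self _ _)).1 (hS a (Finset.mem_insert_self _ _)).2 T
      refine ⟨min d e, lt_min hd he, fun l hl t ht => ?_⟩
      rcases Finset.mem_insert.1 hl with rfl | hl
      · exact ⟨(min_le_right _ _).trans (h' t ht).1, (min_le_right _ _).trans (h' t ht).2⟩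
      · exact ⟨(min_le_left _ _).trans (h l hl t ht).1, (min_le_left _ _).trans (h l hl t ht).2⟩
  obtain ⟨d, hd, hlow⟩ := hlow
  set u : ℝ → ℝ × ℝ → ℝ := fun t x => ∑ l ∈ S, c l * Real.exp (-(x.1 * (V t l).1 + x.2 * (V t l).2)) with hu
  set η := -u T x0 with hη
  have hη0 : 0 < η := by simp only [hη, hu]; linarith
  set ε := η / (2 * (T + 1)) with hε
  have hε0 : 0 < ε := by positivity
  have hεT : ε * T < η := by
    rw [hε, div_mul_eq_mul_div, div_lt_iff₀ (by positivity)]; nlinarith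
  set Cc := ∑ l ∈ S, |c l| with hCc
  have Cc0 : 0 ≤ Cc := Finset.sum_nonneg fun _ _ => abs_nonneg _
  have hdec : ∀ t ∈ Icc 0 T, ∀ x ∈ Mset, -(Cc * Real.exp (-(d * (x.1 + x.2)))) ≤ u t x := by
    intro t ht x ⟨hx1, n, hn⟩
    have hx2 : 0 ≤ x.2 := by rw [hn]; positivity
    refine neg_le_of_abs_le ?_
    refine (Finset.abs_sum_le_sum_abs _ _).trans ?_
    rw [hCc, Finset.sum_mul]
    refine Finset.sum_le_sum fun l hl => ?_
    rw [abs_mul, abs_of_pos (Real.exp_pos _)]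
    obtain ⟨q1, q2⟩ := hlow l hl t ht
    have := mul_le_mul_of_nonneg_left q1 hx1
    have := mul_le_mul_of_nonneg_left q2 hx2
    refine mul_le_mul_of_nonneg_left (Real.exp_le_exp.2 (by linarith)) (abs_nonneg _)
  obtain ⟨R, hRx, hR⟩ : ∃ R, x0.1 + x0.2 ≤ R ∧ Cc * Real.exp (-(d * R)) < η - ε * T := by
    have : Tendsto (fun R : ℝ => Cc * Real.exp (-(d * R))) atTop (nhds (Cc * 0)) := by
      refine Tendsto.const_mul _ ?_
      exact Real.tendsto_exp_neg_atTop_nhds_zero.comp (tendsto_id.const_mul_atTop hd)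
    rw [mul_zero] at this
    obtain ⟨R, h⟩ := ((eventually_ge_atTop (x0.1 + x0.2)).and
      (this.eventually_lt_const (show 0 < η - ε * T by linarith))).exists
    exact ⟨R, h.1, h.2⟩
  set KK : Set (ℝ × (ℝ × ℝ)) := Icc 0 T ×ˢ {y : ℝ × ℝ | y ∈ Mset ∧ y.1 + y.2 ≤ R} with hKK
  have cK : IsCompact KK := isCompact_Icc.prod (Mset_compact R)
  have cw : ContinuousOn (fun q : ℝ × (ℝ × ℝ) => u q.1 q.2 + ε * q.1) KK := by
    refine ContinuousOn.add ?_ (by fun_prop)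
    refine continuousOn_finsetSum _ fun l hl => ?_
    have hc : ContinuousOn (fun q : ℝ × (ℝ × ℝ) => V q.1 l) KK :=
      (hV l hl).1.comp (by fun_prop) (fun q hq => hq.1.1)
    have hc1 := continuous_fst.comp_continuousOn hc
    have hc2 := continuous_snd.comp_continuousOn hc
    simp only [Function.comp_def] at hc1 hc2
    fun_prop
  obtain ⟨⟨t, x⟩, ⟨ht, hxM, hxR⟩, hmin⟩ := cK.exists_isMinOn ⟨(T, x0), ⟨hT, le_rfl⟩, hx0, hRx⟩ cw
  simp only at ht hxM hxR
  have wle : u t x + ε * t ≤ u T x0 + ε * T := hmin (show (T, x0) ∈ KK from ⟨⟨hT, le_rfl⟩, hx0, hRx⟩)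
  have glob : ∀ s ∈ Icc 0 T, ∀ y ∈ Mset, u t x + ε * t ≤ u s y + ε * s := by
    intro s hs y hy
    by_cases hyR : y.1 + y.2 ≤ R
    · exact hmin (show (s, y) ∈ KK from ⟨hs, hy, hyR⟩)
    · push Not at hyR
      have a := hdec s hs y hy
      have b : Cc * Real.exp (-(d * (y.1 + y.2))) ≤ Cc * Real.exp (-(d * R)) := by
        refine mul_le_mul_of_nonneg_left (Real.exp_le_exp.2 ?_) Cc0
        nlinarith
      have := mul_nonneg hε0.le hs.1
      linarith
  have ht0 : 0 < t := by
    rcases ht.1.eq_or_lt with h | h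
    · exfalso
      have : 0 ≤ u 0 x := by
        have := h0 x hxM
        refine this.trans (le_of_eq (Finset.sum_congr rfl fun l hl => ?_))
        have : V 0 l = l := sol_init (hV l hl)
        rw [this]
      rw [← h] at wle
      simp only [mul_zero] at wle; linarith
    · exact h
  choose! U hU cU hD using fun l hl => sol_deriv (hV l hl)
  set u' := ∑ l ∈ S, c l * (Real.exp (-(x.1 * (V t l).1 + x.2 * (V t l).2)) *
      -(x.1 * mPhi1 B (V t l) + x.2 * mPhi2 B (V t l))) with hu'
  have D : HasDerivAt (fun s => (∑ l ∈ S, c l * Real.exp (-(x.1 * (U l s).1 + x.2 * (U l s).2))) + ε * s) (u' + ε * 1) t := by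
    refine HasDerivAt.add ?_ ((hasDerivAt_id t).const_mul ε)
    apply HasDerivAt.fun_sum
    intro l hl
    obtain ⟨e1, e2⟩ := hD l hl t ht.1
    have := (((e1.const_mul x.1).fun_add (e2.const_mul x.2)).fun_neg.exp).const_mul (c l)
    rw [hU l hl t ht.1] at this
    exact this
  have hUu : ∀ s, 0 ≤ s → (∑ l ∈ S, c l * Real.exp (-(x.1 * (U l s).1 + x.2 * (U l s).2))) = u s x := by
    intro s hs
    refine Finset.sum_congr rfl fun l hl => ?_
    rw [hU l hl s hs]
  have neg := deriv_nonpos_of_left_min ht0 D (fun y hy hyt => by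
    rw [hUu y hy, hUu t ht.1]
    exact glob y ⟨hy, hyt.trans ht.2⟩ x hxM)
  have pos : 0 ≤ u' := gen_pos B S c (fun l => V t l) (fun l hl => (hV l hl).2.1 t ht.1) x hxM (fun y hy => by
    have := glob t ht y hy
    simp only [hu] at this
    linarith)
  linarith

/-- positivity property of functionals -/
def PD (f : ℝ × ℝ → ℝ) : Prop := ∀ (S : Finset (ℝ × ℝ)) (c : ℝ × ℝ → ℝ), (∀ l ∈ S, l ∈ QQ) →
  (∀ y ∈ Mset, 0 ≤ ∑ l ∈ S, c l * Real.exp (-(l.1 * y.1 + l.2 * y.2))) → 0 ≤ ∑ l ∈ S, c l * f l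

lemma V_cont (V : ℝ → (ℝ × ℝ) → ℝ × ℝ)
    (hV : ∀ l : ℝ × ℝ, 0 ≤ l.1 → 0 ≤ l.2 → SolvesCumulant B l (fun t => V t l))
    (t : ℝ) (ht : 0 ≤ t) : ContinuousOn (V t) QQ := by
  intro l hl
  obtain ⟨K, hK⟩ := sol_lip (B := B) (l.1 + l.2 + 1) t ht
  have o : IsOpen {m : ℝ × ℝ | m.1 + m.2 < l.1 + l.2 + 1} := isOpen_lt (by fun_prop) continuous_const
  rw [ContinuousWithinAt, tendsto_iff_dist_tendsto_zero]
  have lim : Tendsto (fun m => dist m l * K) (nhdsWithin l QQ) (nhds 0) := by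
    have : Continuous (fun m => dist m l * K) := by fun_prop
    have := this.tendsto l
    simp only [dist_self, zero_mul] at this
    exact this.mono_left nhdsWithin_le_nhds
  refine squeeze_zero' (Eventually.of_forall fun _ => dist_nonneg) ?_ lim
  filter_upwards [self_mem_nhdsWithin, mem_nhdsWithin_of_mem_nhds (o.mem_nhds (show l ∈ _ by simp))] with m hm hm'
  exact hK m l _ _ (le_of_lt hm') (by linarith) (hV m hm.1 hm.2) (hV l hl.1 hl.2)

lemma V_PD (V : ℝ → (ℝ × ℝ) → ℝ × ℝ)
    (hV : ∀ l : ℝ × ℝ, 0 ≤ l.1 → 0 ≤ l.2 → SolvesCumulant B l (fun t => V t l))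
    (t : ℝ) (ht : 0 ≤ t) (x : ℝ × ℝ) (hx : x ∈ Mset) :
    PD (fun l => Real.exp (-(x.1 * (V t l).1 + x.2 * (V t l).2))) := by
  intro S c hS hpos
  have key : ∀ ε : ℝ, 0 < ε → 0 ≤ ∑ l ∈ S, c l * Real.exp (-(x.1 * (V t (l + (ε, ε))).1 + x.2 * (V t (l + (ε, ε))).2)) := by
    intro ε hε
    have inj : Function.Injective (fun l : ℝ × ℝ => l + (ε, ε)) := add_left_injective _
    have := max_principle B V (S.map ⟨_, inj⟩) (fun l => c (l - (ε, ε))) ?_ ?_ ?_ t ht x hx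
    · simpa using this
    · intro l hl
      obtain ⟨m, hm, rfl⟩ := Finset.mem_map.1 hl
      have := hS m hm
      exact hV _ (by simp; linarith [this.1]) (by simp; linarith [this.2])
    · intro l hl
      obtain ⟨m, hm, rfl⟩ := Finset.mem_map.1 hl
      have := hS m hm
      exact ⟨by simp; linarith [this.1], by simp; linarith [this.2]⟩
    · intro y hy
      rw [Finset.sum_map]
      have h1 := mul_nonneg (hpos y hy) (Real.exp_pos (-(ε * y.1 + ε * y.2))).le
      rw [Finset.sum_mul] at h1
      refine h1.trans (le_of_eq (Finset.sum_congr rfl fun l _ => ?_))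
      simp only [Function.Embedding.coeFn_mk, add_sub_cancel_right, Prod.fst_add, Prod.snd_add]
      rw [mul_assoc, ← Real.exp_add]; ring_nf
  have lim : Tendsto (fun ε : ℝ => ∑ l ∈ S, c l * Real.exp (-(x.1 * (V t (l + (ε, ε))).1 + x.2 * (V t (l + (ε, ε))).2)))
      (nhdsWithin 0 (Ioi 0)) (nhds (∑ l ∈ S, c l * Real.exp (-(x.1 * (V t l).1 + x.2 * (V t l).2)))) := by
    refine tendsto_finsetSum _ fun l hl => ?_
    have hv : Tendsto (fun ε : ℝ => V t (l + (ε, ε))) (nhdsWithin 0 (Ioi 0)) (nhds (V t l)) := by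
      refine (V_cont B V hV t ht l (hS l hl)).tendsto.comp (tendsto_nhdsWithin_iff.2 ⟨?_, ?_⟩)
      · have : Continuous (fun ε : ℝ => l + (ε, ε)) := by fun_prop
        have := this.tendsto 0
        simp only [Prod.mk_zero_zero, add_zero] at this
        exact this.mono_left nhdsWithin_le_nhds
      · filter_upwards [self_mem_nhdsWithin] with ε hε
        have hε : 0 < ε := hε
        have := hS l hl
        exact ⟨by simp; linarith [this.1], by simp; linarith [this.2]⟩
    have : Continuous (fun v : ℝ × ℝ => c l * Real.exp (-(x.1 * v.1 + x.2 * v.2))) := by fun_prop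
    exact (this.tendsto _).comp hv
  refine ge_of_tendsto lim ?_
  filter_upwards [self_mem_nhdsWithin] with ε hε using key ε hε
end

open MeasureTheory Filter Set
open scoped BoundedContinuousFunction CompactlySupported
noncomputable section

instance : LocallyCompactSpace Mset := Mset_closed.isClosedEmbedding_subtypeVal.locallyCompactSpace
instance : PolishSpace Mset := Mset_closed.polishSpace

lemma Mset_pair (l : ℝ × ℝ) (hl : l ∈ QQ) (y : ℝ × ℝ) (hy : y ∈ Mset) : 0 ≤ l.1 * y.1 + l.2 * y.2 := by
  obtain ⟨h1, n, hn⟩ := hy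
  have : 0 ≤ y.2 := by rw [hn]; positivity
  exact add_nonneg (mul_nonneg hl.1 h1) (mul_nonneg hl.2 this)

def ee (l : QQ) : Mset →ᵇ ℝ :=
  BoundedContinuousFunction.ofNormedAddCommGroup
    (fun y : Mset => Real.exp (-(l.1.1 * y.1.1 + l.1.2 * y.1.2))) (by fun_prop) 1 (fun y => by
      rw [Real.norm_eq_abs, abs_of_pos (Real.exp_pos _)]
      have := Mset_pair l.1 l.2 y.1 y.2
      exact Real.exp_le_one_iff.2 (by linarith))

lemma ee_apply (l : QQ) (y : Mset) : ee l y = Real.exp (-(l.1.1 * y.1.1 + l.1.2 * y.1.2)) := rfl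

lemma ee_le_one (l : QQ) (y : Mset) : ee l y ≤ 1 := by
  rw [ee_apply]
  have := Mset_pair l.1 l.2 y.1 y.2
  exact Real.exp_le_one_iff.2 (by linarith)

def q0 : QQ := ⟨0, zero_QQ⟩
lemma ee_zero (y : Mset) : ee q0 y = 1 := by simp [ee_apply, q0]

lemma exists_functional (f : ℝ × ℝ → ℝ) (hf : PD f) :
    ∃ G : (Mset →ᵇ ℝ) →ₗ[ℝ] ℝ, (∀ h : Mset →ᵇ ℝ, (∀ y, 0 ≤ h y) → 0 ≤ G h) ∧ ∀ l : QQ, G (ee l) = f l := by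
  classical
  let Lam : (QQ →₀ ℝ) →ₗ[ℝ] (Mset →ᵇ ℝ) := Finsupp.linearCombination ℝ ee
  let F : (QQ →₀ ℝ) →ₗ[ℝ] ℝ := Finsupp.linearCombination ℝ (fun l : QQ => f l)
  let s : PointedCone ℝ ((QQ →₀ ℝ) × (Mset →ᵇ ℝ)) :=
    { carrier := {q | ∀ y, 0 ≤ (Lam q.1) y + q.2 y}
      zero_mem' := by intro y; simp
      add_mem' := by
        intro a b ha hb y
        have := ha y; have := hb y
        simp only [Prod.fst_add, Prod.snd_add, map_add, BoundedContinuousFunction.add_apply]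
        linarith
      smul_mem' := by
        intro r a ha y
        have := mul_nonneg r.2 (ha y)
        have e : (Lam (r • a).1) y + (r • a).2 y = (r : ℝ) * ((Lam a.1) y + a.2 y) := by
          have : (r • a) = ((r : ℝ) • a) := rfl
          rw [this]
          simp only [Prod.smul_fst, Prod.smul_snd, map_smul, BoundedContinuousFunction.smul_apply, smul_eq_mul]
          ring
        rw [e]; exact this }
  have hs : ∀ q, q ∈ s ↔ ∀ y, 0 ≤ (Lam q.1) y + q.2 y := fun q => Iff.rfl
  let p : ((QQ →₀ ℝ) × (Mset →ᵇ ℝ)) →ₗ.[ℝ] ℝ :=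
    { domain := LinearMap.ker (LinearMap.snd ℝ (QQ →₀ ℝ) (Mset →ᵇ ℝ))
      toFun := (F ∘ₗ LinearMap.fst ℝ _ _) ∘ₗ Submodule.subtype _ }
  have posF : ∀ a : QQ →₀ ℝ, (∀ y, 0 ≤ Lam a y) → 0 ≤ F a := by
    intro a ha
    have := hf (a.support.map (Function.Embedding.subtype _)) (fun l => if h : l ∈ QQ then a ⟨l, h⟩ else 0) ?_ ?_
    · rw [Finset.sum_map] at this
      simp only [F, Finsupp.linearCombination_apply, Finsupp.sum, smul_eq_mul]
      refine this.trans (le_of_eq (Finset.sum_congr rfl fun l _ => ?_))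
      simp
    · intro l hl
      obtain ⟨m, -, rfl⟩ := Finset.mem_map.1 hl
      exact m.2
    · intro y hy
      rw [Finset.sum_map]
      refine (ha ⟨y, hy⟩).trans (le_of_eq ?_)
      simp only [Lam, Finsupp.linearCombination_apply, Finsupp.sum]
      rw [BoundedContinuousFunction.sum_apply]
      refine Finset.sum_congr rfl fun l _ => ?_
      simp [ee_apply]
  obtain ⟨g, hg1, hg2⟩ := riesz_extension s p (by
      rintro ⟨⟨a, h⟩, hx⟩ hxs
      have hx : h = 0 := hx
      subst hx
      refine posF a fun y => ?_
      simpa using hxs y) (by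
      rintro ⟨a, h⟩
      refine ⟨⟨(-a + Finsupp.single q0 ‖h‖, 0), by simp [p]⟩, ?_⟩
      rw [hs]
      intro y
      have e : Lam (-a + Finsupp.single q0 ‖h‖ + a) y = ‖h‖ := by
        have : -a + Finsupp.single q0 ‖h‖ + a = Finsupp.single q0 ‖h‖ := by abel
        rw [this]
        simp [Lam, ee_zero]
      simp only [Prod.mk_add_mk, zero_add]
      rw [e]
      have := neg_le_of_abs_le (h.norm_coe_le_norm y)
      linarith)
  refine ⟨g ∘ₗ LinearMap.inr ℝ _ _, fun h hh => ?_, fun l => ?_⟩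
  · apply hg2
    rw [hs]; intro y; simpa using hh y
  · have A : 0 ≤ g (Finsupp.single l 1, -ee l) := hg2 _ (by rw [hs]; intro y; simp [Lam])
    have A' : 0 ≤ g (-(Finsupp.single l 1, -ee l)) := hg2 _ (by rw [hs]; intro y; simp [Lam])
    rw [map_neg] at A'
    have e : (Finsupp.single l (1:ℝ), -ee l) = (Finsupp.single l 1, 0) - (0, ee l) := by simp
    have e2 : g (Finsupp.single l 1, 0) = f l := by
      have := hg1 ⟨(Finsupp.single l 1, 0), by simp [p]⟩
      rw [this]
      simp [p, F]
    rw [e, map_sub, e2] at A A'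
    simp only [LinearMap.comp_apply, LinearMap.inr_apply]
    linarith

def chi (n : ℕ) (y : Mset) : ℝ := max 0 (min 1 (n + 1 - (y.1.1 + y.1.2)))

lemma chi_cont (n : ℕ) : Continuous (chi n) := by unfold chi; fun_prop
lemma chi_nonneg (n : ℕ) (y) : 0 ≤ chi n y := le_max_left _ _
lemma chi_le (n : ℕ) (y) : chi n y ≤ 1 := max_le zero_le_one (min_le_left _ _)
lemma chi_mono (y) : Monotone (fun n => chi n y) := by
  intro m n h
  have : (m : ℝ) ≤ n := by exact_mod_cast h
  simp only [chi]
  exact max_le_max le_rfl (min_le_min le_rfl (by linarith))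
lemma chi_one (n : ℕ) (y : Mset) (h : y.1.1 + y.1.2 ≤ n) : chi n y = 1 := by
  unfold chi; rw [min_eq_left (by linarith)]; simp
lemma chi_supp (n : ℕ) : HasCompactSupport (chi n) := by
  have : IsCompact (Subtype.val ⁻¹' {y : ℝ × ℝ | y ∈ Mset ∧ y.1 + y.2 ≤ (n + 1 : ℝ)} : Set Mset) :=
    Mset_closed.isClosedEmbedding_subtypeVal.isCompact_preimage (Mset_compact _)
  refine HasCompactSupport.intro this fun y hy => ?_
  have hy : ¬ (y.1.1 + y.1.2 ≤ (n+1:ℝ)) := fun h => hy ⟨y.2, h⟩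
  push Not at hy
  unfold chi
  exact max_eq_left ((min_le_right _ _).trans (by linarith))

def ec (l : QQ) (n : ℕ) : C_c(Mset, ℝ) where
  toFun := fun y => ee l y * chi n y
  continuous_toFun := (ee l).continuous.mul (chi_cont n)
  hasCompactSupport' := (chi_supp n).mul_left

theorem exists_measure (f : ℝ × ℝ → ℝ) (hf : PD f) (hc : ContinuousOn f QQ) (h0 : f 0 = 1) :
    ∃ μ : Measure Mset, IsProbabilityMeasure μ ∧ ∀ l : QQ, ∫ y, ee l y ∂μ = f l := by
  obtain ⟨G, hG, hGe⟩ := exists_functional f hf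
  have Gmono : ∀ a b : Mset →ᵇ ℝ, (∀ y, a y ≤ b y) → G a ≤ G b := by
    intro a b h
    have := hG (b - a) (fun y => by simpa using h y)
    rw [map_sub] at this; linarith
  let toB : C_c(Mset, ℝ) → (Mset →ᵇ ℝ) := fun h => 
    ⟨h.toContinuousMap, by
      obtain ⟨C, hC⟩ := h.hasCompactSupport.exists_bound_of_continuous h.continuous
      exact ⟨2 * C, fun x y => by
        rw [dist_eq_norm]
        refine (norm_sub_le _ _).trans ?_
        have := hC x; have := hC y
        change ‖h x‖ + ‖h y‖ ≤ _
        linarith⟩⟩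
  have toB_apply : ∀ h y, toB h y = h y := fun _ _ => rfl
  let Lam : C_c(Mset, ℝ) →ₚ[ℝ] ℝ :=
    { toFun := fun h => G (toB h)
      map_add' := by
        intro a b; rw [← map_add]; rfl
      map_smul' := by
        intro r a; rw [RingHom.id_apply, ← map_smul]; rfl
      monotone' := by
        intro a b h
        exact Gmono _ _ (fun y => h y) }
  let μ := RealRMK.rieszMeasure Lam
  have hμ : ∀ h : C_c(Mset, ℝ), ∫ y, h y ∂μ = G (toB h) := fun h => RealRMK.integral_rieszMeasure Lam h
  have f_nonneg : ∀ l : QQ, 0 ≤ f l := fun l => by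
    rw [← hGe]; exact hG _ fun y => (Real.exp_pos _).le
  -- strictly positive case
  have strict : ∀ l : QQ, 0 < l.1.1 → 0 < l.1.2 → ∫⁻ y, ENNReal.ofReal (ee l y) ∂μ = ENNReal.ofReal (f l) := by
    intro l hl1 hl2
    set d := min l.1.1 l.1.2
    have hd : 0 < d := lt_min hl1 hl2
    have b : ∀ n : ℕ, f l - Real.exp (-(d * n)) ≤ ∫ y, ec l n y ∂μ ∧ ∫ y, ec l n y ∂μ ≤ f l := by
      intro n
      rw [hμ]
      constructor
      · have := Gmono (ee l - Real.exp (-(d * n)) • ee q0) (toB (ec l n)) (fun y => by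
          simp only [BoundedContinuousFunction.sub_apply, BoundedContinuousFunction.smul_apply, ee_zero, toB_apply, smul_eq_mul, mul_one]
          change _ ≤ ee l y * chi n y
          by_cases h : y.1.1 + y.1.2 ≤ n
          · rw [chi_one n y h, mul_one]; linarith [Real.exp_pos (-(d * n))]
          · push Not at h
            have : ee l y ≤ Real.exp (-(d * n)) := by
              rw [ee_apply]
              apply Real.exp_le_exp.2
              obtain ⟨h1, k, hk⟩ := y.2
              have h2 : 0 ≤ y.1.2 := by rw [hk]; positivity
              have := mul_le_mul_of_nonneg_right (min_le_left l.1.1 l.1.2) h1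
              have := mul_le_mul_of_nonneg_right (min_le_right l.1.1 l.1.2) h2
              have := mul_le_mul_of_nonneg_left h.le hd.le
              simp only [d] at *
              linarith
            have := mul_nonneg (Real.exp_pos (-(l.1.1 * y.1.1 + l.1.2 * y.1.2))).le (chi_nonneg n y)
            rw [← ee_apply] at this
            linarith)
        rw [map_sub, map_smul, hGe, hGe] at this
        simpa [q0, h0] using this
      · rw [← hGe]
        refine Gmono _ _ fun y => ?_
        change ee l y * chi n y ≤ ee l y
        exact mul_le_of_le_one_right (Real.exp_pos _).le (chi_le n y)
    have lim : Tendsto (fun n : ℕ => ∫ y, ec l n y ∂μ) atTop (nhds (f l)) := by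
      have : Tendsto (fun n : ℕ => f l - Real.exp (-(d * n))) atTop (nhds (f l - 0)) := by
        refine tendsto_const_nhds.sub ?_
        exact Real.tendsto_exp_neg_atTop_nhds_zero.comp (tendsto_natCast_atTop_atTop.const_mul_atTop hd)
      rw [sub_zero] at this
      exact tendsto_of_tendsto_of_tendsto_of_le_of_le this tendsto_const_nhds (fun n => (b n).1) (fun n => (b n).2)
    have ecn : ∀ n y, 0 ≤ ec l n y := fun n y => mul_nonneg (Real.exp_pos _).le (chi_nonneg n y)
    have lim1 : Tendsto (fun n : ℕ => ∫⁻ y, ENNReal.ofReal (ec l n y) ∂μ) atTop (nhds (ENNReal.ofReal (f l))) := by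
      have := (ENNReal.continuous_ofReal.tendsto (f l)).comp lim
      refine this.congr fun n => ?_
      simp only [Function.comp]
      rw [ofReal_integral_eq_lintegral_ofReal]
      · exact (ec l n).continuous.integrable_of_hasCompactSupport (ec l n).hasCompactSupport
      · exact Eventually.of_forall (ecn n)
    have lim2 : Tendsto (fun n : ℕ => ∫⁻ y, ENNReal.ofReal (ec l n y) ∂μ) atTop (nhds (∫⁻ y, ENNReal.ofReal (ee l y) ∂μ)) := by
      refine lintegral_tendsto_of_tendsto_of_monotone ?_ ?_ ?_
      · intro n; exact (ec l n).continuous.measurable.ennreal_ofReal.aemeasurable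
      · refine Eventually.of_forall fun y m n h => ENNReal.ofReal_le_ofReal ?_
        exact mul_le_mul_of_nonneg_left (chi_mono y h) (Real.exp_pos _).le
      · refine Eventually.of_forall fun y => ?_
        refine tendsto_const_nhds.congr' ?_
        filter_upwards [eventually_ge_atTop ⌈y.1.1 + y.1.2⌉₊] with n hn
        change _ = ENNReal.ofReal (ee l y * chi n y)
        rw [chi_one n y (Nat.ceil_le.1 hn), mul_one]
    exact tendsto_nhds_unique lim2 lim1
  let sh : QQ → ℕ → QQ := fun l n => ⟨l.1 + (1 / ((n : ℝ) + 1), 1 / ((n : ℝ) + 1)), by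
    have : 0 < 1 / ((n : ℝ) + 1) := by positivity
    exact ⟨add_nonneg l.2.1 this.le, add_nonneg l.2.2 this.le⟩⟩
  have shpos : ∀ l n, 0 < (sh l n).1.1 ∧ 0 < (sh l n).1.2 := fun l n => by
    have : 0 < 1 / ((n : ℝ) + 1) := by positivity
    exact ⟨add_pos_of_nonneg_of_pos l.2.1 this, add_pos_of_nonneg_of_pos l.2.2 this⟩
  have shlim : ∀ l : QQ, Tendsto (fun n => (sh l n).1) atTop (nhds l.1) := by
    intro l
    have t := tendsto_one_div_add_atTop_nhds_zero_nat (𝕜 := ℝ)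
    have := (tendsto_const_nhds (x := l.1)).add (t.prodMk_nhds t)
    simp only [Prod.mk_zero_zero, add_zero] at this
    exact this
  have flim : ∀ l : QQ, Tendsto (fun n => f (sh l n)) atTop (nhds (f l)) := fun l =>
    (hc l.1 l.2).tendsto.comp (tendsto_nhdsWithin_iff.2 ⟨shlim l, Eventually.of_forall fun n => (sh l n).2⟩)
  have eelim : ∀ (l : QQ) y, Tendsto (fun n => ee (sh l n) y) atTop (nhds (ee l y)) := by
    intro l y
    have : Continuous (fun m : ℝ × ℝ => Real.exp (-(m.1 * y.1.1 + m.2 * y.1.2))) := by fun_prop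
    exact (this.tendsto l.1).comp (shlim l)
  have mass : μ univ = 1 := by
    have l1 : Tendsto (fun n => ∫⁻ y, ENNReal.ofReal (ee (sh q0 n) y) ∂μ) atTop (nhds 1) := by
      have := (ENNReal.continuous_ofReal.tendsto _).comp (flim q0)
      simp only [q0, h0, ENNReal.ofReal_one] at this
      refine this.congr fun n => ?_
      exact (strict _ (shpos q0 n).1 (shpos q0 n).2).symm
    have l2 : Tendsto (fun n => ∫⁻ y, ENNReal.ofReal (ee (sh q0 n) y) ∂μ) atTop (nhds (∫⁻ y, 1 ∂μ)) := by
      refine lintegral_tendsto_of_tendsto_of_monotone ?_ ?_ ?_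
      · intro n; exact (ee _).continuous.measurable.ennreal_ofReal.aemeasurable
      · refine Eventually.of_forall fun y m n h => ENNReal.ofReal_le_ofReal ?_
        rw [ee_apply, ee_apply]
        have hh : 1 / ((n:ℝ) + 1) ≤ 1 / ((m:ℝ)+1) := by gcongr
        obtain ⟨h1, k, hk⟩ := y.2
        have h2 : 0 ≤ y.1.2 := by rw [hk]; positivity
        simp only [sh, q0, Prod.fst_add, Prod.snd_add]
        gcongr
      · refine Eventually.of_forall fun y => ?_
        have := (ENNReal.continuous_ofReal.tendsto _).comp (eelim q0 y)
        rw [ee_zero, ENNReal.ofReal_one] at this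
        exact this
    have := tendsto_nhds_unique l2 l1
    simpa using this
  have prob : IsProbabilityMeasure μ := ⟨mass⟩
  refine ⟨μ, prob, fun l => ?_⟩
  have nn : ∀ (l : QQ) y, 0 ≤ ee l y := fun _ _ => (Real.exp_pos _).le
  have eq : ∀ n, ∫ y, ee (sh l n) y ∂μ = f (sh l n) := by
    intro n
    rw [integral_eq_lintegral_of_nonneg_ae (f := fun y => ee (sh l n) y) (Eventually.of_forall (nn _))
      (ee _).continuous.aestronglyMeasurable, strict _ (shpos l n).1 (shpos l n).2, ENNReal.toReal_ofReal (f_nonneg _)]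
  have l2 : Tendsto (fun n => ∫ y, ee (sh l n) y ∂μ) atTop (nhds (∫ y, ee l y ∂μ)) := by
    refine tendsto_integral_of_dominated_convergence (fun _ => 1) ?_ (integrable_const _) ?_ ?_
    · intro n; exact (ee _).continuous.aestronglyMeasurable
    · intro n; refine Eventually.of_forall fun y => ?_
      rw [Real.norm_eq_abs, abs_of_nonneg (nn _ _)]; exact ee_le_one _ y
    · exact Eventually.of_forall (eelim l)
  simp_rw [eq] at l2
  exact tendsto_nhds_unique l2 (flim l)
end

open MeasureTheory Filter Set
open scoped BoundedContinuousFunction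
noncomputable section

abbrev KK := Icc (0:ℝ) 1 × Icc (0:ℝ) 1

def qq1 : QQ := ⟨(1, 0), by constructor <;> norm_num⟩
def qq2 : QQ := ⟨(0, 1), by constructor <;> norm_num⟩

lemma ee_nonneg (l : QQ) (y) : 0 ≤ ee l y := (Real.exp_pos _).le

def phi (y : Mset) : KK := (⟨ee qq1 y, ee_nonneg _ _, ee_le_one _ _⟩, ⟨ee qq2 y, ee_nonneg _ _, ee_le_one _ _⟩)

lemma phi_cont : Continuous phi := by
  refine Continuous.prodMk ?_ ?_
  · exact (ee qq1).continuous.subtype_mk _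
  · exact (ee qq2).continuous.subtype_mk _

lemma phi_inj : Function.Injective phi := by
  intro a b h
  have h1 : ee qq1 a = ee qq1 b := congrArg (fun k : KK => (k.1 : ℝ)) h
  have h2 : ee qq2 a = ee qq2 b := congrArg (fun k : KK => (k.2 : ℝ)) h
  rw [ee_apply, ee_apply, Real.exp_eq_exp] at h1 h2
  simp only [qq1, qq2, one_mul, zero_mul, add_zero, zero_add, neg_inj] at h1 h2
  exact Subtype.ext (Prod.ext h1 h2)

lemma phi_me : MeasurableEmbedding phi := phi_cont.measurableEmbedding phi_inj

def SS : Submonoid C(KK, ℝ) where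
  carrier := {h | ∃ l : QQ, ∀ y, h (phi y) = ee l y}
  one_mem' := ⟨q0, fun y => by rw [ee_zero]; rfl⟩
  mul_mem' := by
    rintro a b ⟨l, hl⟩ ⟨m, hm⟩
    refine ⟨⟨l.1 + m.1, add_nonneg l.2.1 m.2.1, add_nonneg l.2.2 m.2.2⟩, fun y => ?_⟩
    rw [ContinuousMap.mul_apply, hl, hm]
    simp only [ee_apply]
    rw [← Real.exp_add]
    congr 1
    simp only [Prod.fst_add, Prod.snd_add]
    ring

lemma CK_induction (p : Submodule ℝ C(KK, ℝ)) (hcl : IsClosed (p : Set C(KK, ℝ)))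
    (hp : ∀ h : C(KK, ℝ), (∃ l : QQ, ∀ y, h (phi y) = ee l y) → h ∈ p) (h : C(KK, ℝ)) : h ∈ p := by
  have key := ContinuousMap.subalgebra_topologicalClosure_eq_top_of_separatesPoints
    (Algebra.adjoin ℝ (SS : Set C(KK, ℝ))) (by
      intro a b hab
      by_cases h1 : a.1 = b.1
      · have h2 : a.2 ≠ b.2 := fun h2 => hab (Prod.ext h1 h2)
        let g : C(KK, ℝ) := ⟨fun k => (k.2 : ℝ), by fun_prop⟩
        refine ⟨g, ⟨g, Algebra.subset_adjoin ⟨qq2, fun y => rfl⟩, rfl⟩, ?_⟩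
        exact fun h => h2 (Subtype.ext h)
      · let g : C(KK, ℝ) := ⟨fun k => (k.1 : ℝ), by fun_prop⟩
        refine ⟨g, ⟨g, Algebra.subset_adjoin ⟨qq1, fun y => rfl⟩, rfl⟩, ?_⟩
        exact fun h => h1 (Subtype.ext h))
  have hm : h ∈ (Algebra.adjoin ℝ (SS : Set C(KK, ℝ))).topologicalClosure := by rw [key]; trivial
  have hsub : (Algebra.adjoin ℝ (SS : Set C(KK, ℝ)) : Set C(KK, ℝ)) ⊆ p := by
    intro g hg
    have hg : g ∈ Subalgebra.toSubmodule (Algebra.adjoin ℝ (SS : Set C(KK, ℝ))) := hg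
    rw [Algebra.adjoin_eq_span, Submonoid.closure_eq] at hg
    exact (Submodule.span_le.2 fun h hh => hp h hh) hg
  exact closure_minimal hsub hcl hm

lemma int_KK (μ : Measure KK) [IsFiniteMeasure μ] (h : C(KK, ℝ)) : Integrable h μ := 
  h.continuous.integrable_of_hasCompactSupport (HasCompactSupport.of_compactSpace _)

lemma int_cont (μ : Measure KK) [IsFiniteMeasure μ] : Continuous (fun h : C(KK, ℝ) => ∫ k, h k ∂μ) := by
  refine continuous_iff_continuousAt.2 fun h => ?_
  refine continuousAt_of_dominated (bound := fun _ => ‖h‖ + 1) ?_ ?_ (integrable_const _) ?_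
  · exact Eventually.of_forall fun g => g.continuous.aestronglyMeasurable
  · filter_upwards [Metric.ball_mem_nhds h one_pos] with g hg
    refine Eventually.of_forall fun k => (g.norm_coe_le_norm k).trans ?_
    have : ‖g - h‖ < 1 := by rwa [← dist_eq_norm]
    have := norm_le_norm_add_norm_sub' g h
    linarith
  · exact Eventually.of_forall fun k => (continuous_eval_const (F := C(KK, ℝ)) k).continuousAt

lemma meas_of_LT {α : Type*} [MeasurableSpace α] (ν : α → Measure Mset) [∀ a, IsProbabilityMeasure (ν a)]
    (h : ∀ l : QQ, Measurable (fun a => ∫ y, ee l y ∂(ν a))) : Measurable ν := by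
  let ρ : α → Measure KK := fun a => (ν a).map phi
  have hρ : ∀ a, IsProbabilityMeasure (ρ a) := fun a => Measure.isProbabilityMeasure_map phi_cont.aemeasurable
  let p : Submodule ℝ C(KK, ℝ) :=
    { carrier := {g | Measurable fun a => ∫ k, g k ∂(ρ a)}
      zero_mem' := by simp
      add_mem' := by
        intro a b ha hb
        have : (fun x => ∫ k, (a + b) k ∂(ρ x)) = fun x => ∫ k, a k ∂(ρ x) + ∫ k, b k ∂(ρ x) := by
          funext x
          exact integral_add (int_KK _ a) (int_KK _ b)
        change Measurable _
        rw [this]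
        exact Measurable.add ha hb
      smul_mem' := by
        intro c a ha
        have : (fun x => ∫ k, (c • a) k ∂(ρ x)) = fun x => c * ∫ k, a k ∂(ρ x) := by
          funext x
          exact integral_const_mul c _
        change Measurable _
        rw [this]
        exact Measurable.const_mul ha c }
  have hp : ∀ g : C(KK, ℝ), Measurable fun a => ∫ k, g k ∂(ρ a) := by
    intro g
    refine CK_induction p ?_ ?_ g
    · refine IsSeqClosed.isClosed ?_
      intro u g hu hg
      refine measurable_of_tendsto_metrizable hu (tendsto_pi_nhds.2 fun a => ?_)
      exact ((int_cont (ρ a)).tendsto g).comp hg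
    · rintro g ⟨l, hl⟩
      change Measurable _
      have : (fun x => ∫ k, g k ∂(ρ x)) = fun x => ∫ y, ee l y ∂(ν x) := by
        funext x
        rw [phi_me.integral_map]
        simp only [hl]
      rw [this]
      exact h l
  have hm : Measurable ρ := by
    refine Measurable.measure_of_isPiSystem_of_isProbabilityMeasure
      (BorelSpace.measurable_eq.trans borel_eq_generateFrom_isClosed) isPiSystem_isClosed ?_
    intro F hF
    have hF : IsClosed F := hF
    refine measurable_of_tendsto_metrizable (f := fun n a => ∫⁻ x, hF.apprSeq n x ∂(ρ a)) ?_
      (tendsto_pi_nhds.2 fun a => HasOuterApproxClosed.tendsto_lintegral_apprSeq hF (ρ a))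
    intro n
    let g : C(KK, ℝ) := ⟨fun k => (hF.apprSeq n k : ℝ), by fun_prop⟩
    have e : (fun a => ∫⁻ x, hF.apprSeq n x ∂(ρ a)) = fun a => ENNReal.ofReal (∫ k, g k ∂(ρ a)) := by
      funext a
      rw [ofReal_integral_eq_lintegral_ofReal (int_KK _ g) (Eventually.of_forall fun k => NNReal.coe_nonneg _)]
      refine lintegral_congr fun k => ?_
      exact (ENNReal.ofReal_coe_nnreal).symm
    rw [e]
    exact (hp g).ennreal_ofReal
  refine Measure.measurable_of_measurable_coe _ fun A hA => ?_
  have e : (fun a => ν a A) = fun a => ρ a (phi '' A) := by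
    funext a
    simp only [ρ]
    rw [phi_me.map_apply, phi_inj.preimage_image]
  rw [e]
  exact (Measure.measurable_coe (phi_me.measurableSet_image.2 hA)).comp hm

lemma eq_of_LT (μ ν : Measure Mset) [IsProbabilityMeasure μ] [IsProbabilityMeasure ν]
    (h : ∀ l : QQ, ∫ y, ee l y ∂μ = ∫ y, ee l y ∂ν) : μ = ν := by
  have i1 : IsProbabilityMeasure (μ.map phi) := Measure.isProbabilityMeasure_map phi_cont.aemeasurable
  have i2 : IsProbabilityMeasure (ν.map phi) := Measure.isProbabilityMeasure_map phi_cont.aemeasurable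
  let p : Submodule ℝ C(KK, ℝ) :=
    { carrier := {g | ∫ k, g k ∂(μ.map phi) = ∫ k, g k ∂(ν.map phi)}
      zero_mem' := by simp
      add_mem' := by
        intro a b ha hb
        refine (integral_add (int_KK _ a) (int_KK _ b)).trans ?_
        refine Eq.trans ?_ (integral_add (int_KK _ a) (int_KK _ b)).symm
        exact congrArg₂ (· + ·) ha hb
      smul_mem' := by
        intro c a ha
        refine (integral_const_mul c _).trans ?_
        refine Eq.trans ?_ (integral_const_mul c _).symm
        exact congrArg (c * ·) ha }
  have hp : ∀ g : C(KK, ℝ), ∫ k, g k ∂(μ.map phi) = ∫ k, g k ∂(ν.map phi) := by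
    intro g
    refine CK_induction p (isClosed_eq (int_cont _) (int_cont _)) ?_ g
    rintro g ⟨l, hl⟩
    change _ = _
    rw [phi_me.integral_map, phi_me.integral_map]
    simp only [hl]
    exact h l
  have e : μ.map phi = ν.map phi := 
    ext_of_forall_integral_eq_of_IsFiniteMeasure fun f => hp f.toContinuousMap
  ext A hA
  have := congrArg (fun m => m (phi '' A)) e
  simpa only [phi_me.map_apply, phi_inj.preimage_image] using this
end

open MeasureTheory Filter Set

lemma Mset_meas : MeasurableSet Mset := Mset_closed.measurableSet

/-- Given a branching mechanism and the solution `V` of the cumulant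
equations, for every `t ≥ 0` and `x ∈ 𝕄` there exists a unique Borel probability
measure `P_t(x,·)` on `𝕄` with Laplace transform
`∫ e^{-⟨λ,y⟩} P_t(x,dy) = exp(-⟨x, V(t,λ)⟩)`, and these measures form a Markov
transition semigroup (Chapman–Kolmogorov). -/
theorem transition_semigroup_exists (B : BranchingMechanism)
    (V : ℝ → (ℝ × ℝ) → ℝ × ℝ)
    (hV : ∀ l : ℝ × ℝ, 0 ≤ l.1 → 0 ≤ l.2 → SolvesCumulant B l (fun t => V t l)) :
    ∃ P : ℝ → (ℝ × ℝ) → Measure (ℝ × ℝ),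
      (∀ t : ℝ, 0 ≤ t → ∀ x ∈ Mset,
        IsProbabilityMeasure (P t x) ∧ P t x Msetᶜ = 0 ∧
        (∀ l : ℝ × ℝ, 0 ≤ l.1 → 0 ≤ l.2 →
          ∫ y, Real.exp (-(l.1 * y.1 + l.2 * y.2)) ∂(P t x)
            = Real.exp (-(x.1 * (V t l).1 + x.2 * (V t l).2))) ∧
        -- uniqueness
        (∀ μ : Measure (ℝ × ℝ), IsProbabilityMeasure μ → μ Msetᶜ = 0 →
          (∀ l : ℝ × ℝ, 0 ≤ l.1 → 0 ≤ l.2 →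
            ∫ y, Real.exp (-(l.1 * y.1 + l.2 * y.2)) ∂μ
              = Real.exp (-(x.1 * (V t l).1 + x.2 * (V t l).2))) →
          μ = P t x)) ∧
      -- Chapman–Kolmogorov: ∫ P_s(y, A) P_t(x, dy) = P_{t+s}(x, A)
      (∀ s t : ℝ, 0 ≤ s → 0 ≤ t → ∀ x ∈ Mset, ∀ A : Set (ℝ × ℝ), MeasurableSet A →
        ∫⁻ y, P s y A ∂(P t x) = P (t + s) x A) := by
  classical
  have ex : ∀ t : ℝ, 0 ≤ t → ∀ x : Mset, ∃ μ : Measure Mset, IsProbabilityMeasure μ ∧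
      ∀ l : QQ, ∫ y, ee l y ∂μ = Real.exp (-(x.1.1 * (V t l).1 + x.1.2 * (V t l).2)) := by
    intro t ht x
    have h0 : V t 0 = 0 := sol_zero (hV 0 le_rfl le_rfl) t ht
    exact exists_measure _ (V_PD B V hV t ht x.1 x.2) (by
      have := V_cont B V hV t ht
      fun_prop) (by rw [h0]; simp)
  choose! N Nprob NL using ex
  have me : MeasurableEmbedding (Subtype.val : Mset → ℝ × ℝ) := MeasurableEmbedding.subtype_coe Mset_meas
  let P : ℝ → (ℝ × ℝ) → Measure (ℝ × ℝ) := fun t x =>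
    if h : x ∈ Mset then (N t ⟨x, h⟩).map Subtype.val else 0
  have hP : ∀ t (x : Mset), P t x.1 = (N t x).map Subtype.val := fun t x => by
    simp only [P, x.2, dif_pos, Subtype.coe_eta]
  refine ⟨P, ?_, ?_⟩
  · intro t ht x hx
    have e := hP t ⟨x, hx⟩
    simp only at e
    rw [e]
    have pr := Nprob t ht ⟨x, hx⟩
    refine ⟨Measure.isProbabilityMeasure_map me.measurable.aemeasurable, ?_, ?_, ?_⟩
    · rw [me.map_apply]
      have : (Subtype.val ⁻¹' Msetᶜ : Set Mset) = ∅ := by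
        ext y; simp
      rw [this, measure_empty]
    · intro l h1 h2
      rw [me.integral_map]
      exact NL t ht ⟨x, hx⟩ ⟨l, h1, h2⟩
    · intro μ hμ hs hL
      have hae : ∀ᵐ y ∂μ, y ∈ Mset := hs
      have hr : μ.restrict Mset = μ := Measure.restrict_eq_self_of_ae_mem hae
      have hmc : (μ.comap (Subtype.val : Mset → ℝ × ℝ)).map Subtype.val = μ := by
        rw [map_comap_subtype_coe Mset_meas, hr]
      have pr' : IsProbabilityMeasure (μ.comap (Subtype.val : Mset → ℝ × ℝ)) := by
        constructor
        rw [me.comap_apply, image_univ, Subtype.range_coe]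
        exact (prob_compl_eq_zero_iff Mset_meas).1 hs
      rw [← hmc]
      congr 1
      refine eq_of_LT _ _ fun l => ?_
      rw [NL t ht, ← hL l.1 l.2.1 l.2.2]
      have := integral_subtype_comap (μ := μ) Mset_meas (fun y => Real.exp (-(l.1.1 * y.1 + l.1.2 * y.2)))
      rw [hr] at this
      exact this
  · intro s t hs ht x hx A hA
    have pt := Nprob t ht ⟨x, hx⟩
    have pts := Nprob (t + s) (add_nonneg ht hs) ⟨x, hx⟩
    have ps : ∀ y, IsProbabilityMeasure (N s y) := Nprob s hs
    have hm : Measurable (N s) := by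
      refine meas_of_LT _ fun l => ?_
      simp only [NL s hs]
      fun_prop
    have pb : IsProbabilityMeasure ((N t ⟨x, hx⟩).bind (N s)) := by
      constructor
      rw [Measure.bind_apply MeasurableSet.univ hm.aemeasurable]
      simp
    have key : (N t ⟨x, hx⟩).bind (N s) = N (t + s) ⟨x, hx⟩ := by
      refine eq_of_LT _ _ fun l => ?_
      have hVQ : V s l ∈ QQ := (hV l.1 l.2.1 l.2.2).2.1 s hs
      have hVV : V t (V s l) = V (t + s) l :=
        sol_unique (hV (V s l) hVQ.1 hVQ.2) (sol_shift (hV l.1 l.2.1 l.2.2) s hs) t ht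
      have li : ∀ (l : QQ) (μ : Measure Mset) [IsProbabilityMeasure μ],
          ∫⁻ y, ENNReal.ofReal (ee l y) ∂μ = ENNReal.ofReal (∫ y, ee l y ∂μ) := by
        intro l μ _
        exact (ofReal_integral_eq_lintegral_ofReal ((ee l).integrable μ)
          (Eventually.of_forall (ee_nonneg l))).symm
      have mm : Measurable fun y => ENNReal.ofReal (ee l y) := (ee l).continuous.measurable.ennreal_ofReal
      have hl := Measure.lintegral_bind (m := N t ⟨x, hx⟩) hm.aemeasurable mm.aemeasurable
      have e : ∀ y, ∫⁻ z, ENNReal.ofReal (ee l z) ∂(N s y) = ENNReal.ofReal (ee ⟨V s l, hVQ⟩ y) := by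
        intro y
        rw [li, NL s hs, ee_apply]
        simp only [mul_comm]
      simp only [e] at hl
      rw [li, li, ENNReal.ofReal_eq_ofReal_iff (integral_nonneg (ee_nonneg _)) (integral_nonneg (ee_nonneg _))] at hl
      rw [hl, NL t ht, NL (t+s) (add_nonneg ht hs), hVV]
    have e1 := hP t ⟨x, hx⟩
    have e2 := hP (t + s) ⟨x, hx⟩
    simp only at e1 e2
    rw [e1, e2, me.lintegral_map, me.map_apply, ← key,
      Measure.bind_apply (me.measurable hA) hm.aemeasurable]
    refine lintegral_congr fun y => ?_
    rw [hP, me.map_apply]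
end
end
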